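/- Let Γ = ℤ^4 ⋊ ℤ/4 where the generator of ℤ/4 acts on ℤ^4 by the matrix [[-1,0,0,0],[0,0,0,-1],[0,1,0,1],[0,0,-1,1]], and let G = ℤ/4, L = ℤ^4 with this action. Then H^4(Γ, ℤ) ≅ ℤ/4 ⊕ (ℤ/2)^3, while ⊕_{i+j=4} H^i(G, H^j(L, ℤ)) ≅ (ℤ/4)^2 ⊕ (ℤ/2)^2; in particular these two groups are not isomorphic. -/

import Mathlib

open Matrix

namespace Crystal

/-- The lattice `ℤ^n`, written multiplicatively so that it can be a factor of a semidirect
product of groups. -/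
abbrev Lat (n : ℕ) : Type := Multiplicative (Fin n → ℤ)

/-- The invertible integer matrix determined by `M` with `M ^ (m + 1) = 1`. -/
def matUnit {n : ℕ} (M : Matrix (Fin n) (Fin n) ℤ) (m : ℕ) (hm : M ^ (m + 1) = 1) :
    (Matrix (Fin n) (Fin n) ℤ)ˣ :=
  ⟨M, M ^ m, by rw [← pow_succ']; exact hm, by rw [← pow_succ]; exact hm⟩

/-- Linear automorphisms of `ℤ^n` as multiplicative automorphisms of the multiplicative
version of `ℤ^n`. -/
def linToAut (n : ℕ) : ((Fin n → ℤ) ≃ₗ[ℤ] (Fin n → ℤ)) →* MulAut (Lat n) :=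
  MonoidHom.mk' (fun e => AddEquiv.toMultiplicative e.toAddEquiv) (fun _ _ => rfl)

/-- An invertible integer matrix acts on the (multiplicative) lattice `ℤ^n` by (left)
matrix-vector multiplication. -/
def glToAut (n : ℕ) : (Matrix (Fin n) (Fin n) ℤ)ˣ →* MulAut (Lat n) :=
  (linToAut n).comp
    ((LinearMap.GeneralLinearGroup.generalLinearEquiv ℤ (Fin n → ℤ)).toMonoidHom.comp
      (Matrix.GeneralLinearGroup.toLin).toMonoidHom)

/-- The homomorphism from `ℤ/m` (written multiplicatively) to a group `G` sending the
generator `1` to a chosen element `α` satisfying `α ^ m = 1`. -/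
def zmodHom {G : Type*} [Group G] (m : ℕ) [NeZero m] (α : G) (hα : α ^ m = 1) :
    Multiplicative (ZMod m) →* G :=
  MonoidHom.mk' (fun g => α ^ (g.toAdd.val)) (by
    intro a b
    show α ^ (ZMod.val (a.toAdd + b.toAdd)) = α ^ (ZMod.val a.toAdd) * α ^ (ZMod.val b.toAdd)
    rw [ZMod.val_add, ← pow_eq_pow_mod _ hα, pow_add])

/-- The action of `ℤ/q` on the lattice `ℤ^n` in which the generator `1` of `ℤ/q` acts by left
multiplication by the integer matrix `M`; `M` is required to satisfy `M ^ q = 1`. -/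
def matAction {n : ℕ} (q : ℕ) [NeZero q] (M : Matrix (Fin n) (Fin n) ℤ)
    (hq : M ^ q = 1) : Multiplicative (ZMod q) →* MulAut (Lat n) :=
  zmodHom q (glToAut n (matUnit M (q - 1) (by
      rwa [Nat.sub_add_cancel (Nat.one_le_iff_ne_zero.2 (NeZero.ne q))])))
    (by
      rw [← map_pow]
      convert map_one (glToAut n)
      ext i j
      rw [Units.val_pow_eq_pow_val]
      simp [matUnit, hq])

/-- The crystallographic group `ℤ^n ⋊ ℤ/q` in which the generator `1` of `ℤ/q` acts on the
lattice `ℤ^n` by left multiplication by the integer matrix `M` (with `M ^ q = 1`). -/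
abbrev Crys {n : ℕ} (q : ℕ) [NeZero q] (M : Matrix (Fin n) (Fin n) ℤ) (hq : M ^ q = 1) : Type :=
  SemidirectProduct (Lat n) (Multiplicative (ZMod q)) (matAction q M hq)


open CategoryTheory groupCohomology

variable {k : Type} [CommRing k]

lemma comp_contractNth {G H : Type*} [Monoid G] [Monoid H] (f : G →* H) {n : ℕ}
    (j : Fin (n + 1)) (g : Fin (n + 1) → G) (i : Fin n) :
    f (Fin.contractNth j (· * ·) g i) = Fin.contractNth j (· * ·) (fun l => f (g l)) i := by
  rcases lt_trichotomy (i : ℕ) j with h | h | h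
  · rw [Fin.contractNth_apply_of_lt _ _ _ _ h, Fin.contractNth_apply_of_lt _ _ _ _ h]
  · rw [Fin.contractNth_apply_of_eq _ _ _ _ h, Fin.contractNth_apply_of_eq _ _ _ _ h,
      _root_.map_mul]
  · rw [Fin.contractNth_apply_of_gt _ _ _ _ h, Fin.contractNth_apply_of_gt _ _ _ _ h]

/-- The map of inhomogeneous cochain complexes induced (contravariantly in the group,
covariantly in the coefficients) by a group homomorphism `f : H →* G` together with a
compatible linear map `τ : A → B` of coefficients. -/
def cochainsMap {G H : Type} [Group G] [Group H] (A : Rep k G) (B : Rep k H)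
    (f : H →* G) (τ : A →ₗ[k] B)
    (hcomp : ∀ (h : H) (a : A), τ (A.ρ (f h) a) = B.ρ h (τ a)) :
    inhomogeneousCochains A ⟶ inhomogeneousCochains B where
  f n := ModuleCat.ofHom
    { toFun := fun F v => τ (F (fun i => f (v i)))
      map_add' := fun x y => by funext v; simp
      map_smul' := fun r x => by funext v; simp }
  comm' i j hij := by
    have hij' : i + 1 = j := hij
    subst hij'
    rw [inhomogeneousCochains.d_def, inhomogeneousCochains.d_def]
    ext F v
    show (inhomogeneousCochains.d B i).hom (fun w => τ (F (fun l => f (w l)))) v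
      = τ ((inhomogeneousCochains.d A i).hom F (fun l => f (v l)))
    simp only [inhomogeneousCochains.d_hom_apply, map_add, map_sum, _root_.map_smul]
    congr 1
    · exact (hcomp (v 0) _).symm
    · refine Finset.sum_congr rfl fun j' _ => ?_
      have hc : (fun l => f (j'.contractNth (· * ·) v l))
          = j'.contractNth (· * ·) (fun l => f (v l)) := by
        funext l
        exact comp_contractNth f j' v l
      rw [hc]

lemma cochainsMap_eq_id {G : Type} [Group G] (A : Rep k G) (f : G →* G) (τ : A →ₗ[k] A)
    (hcomp : ∀ (h : G) (a : A), τ (A.ρ (f h) a) = A.ρ h (τ a))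
    (hf : ∀ x, f x = x) (hτ : ∀ a, τ a = a) :
    cochainsMap A A f τ hcomp = 𝟙 _ := by
  apply HomologicalComplex.Hom.ext
  funext n
  ext F v
  show τ (F (fun i => f (v i))) = F v
  simp only [hf, hτ]

lemma cochainsMap_comp {G H K : Type} [Group G] [Group H] [Group K]
    (A : Rep k G) (B : Rep k H) (C : Rep k K)
    (f₁ : H →* G) (τ₁ : A →ₗ[k] B) (h₁ : ∀ (h : H) (a : A), τ₁ (A.ρ (f₁ h) a) = B.ρ h (τ₁ a))
    (f₂ : K →* H) (τ₂ : B →ₗ[k] C) (h₂ : ∀ (h : K) (a : B), τ₂ (B.ρ (f₂ h) a) = C.ρ h (τ₂ a))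
    (f₃ : K →* G) (τ₃ : A →ₗ[k] C) (h₃ : ∀ (h : K) (a : A), τ₃ (A.ρ (f₃ h) a) = C.ρ h (τ₃ a))
    (hf : ∀ x, f₁ (f₂ x) = f₃ x) (hτ : ∀ a, τ₂ (τ₁ a) = τ₃ a) :
    cochainsMap A B f₁ τ₁ h₁ ≫ cochainsMap B C f₂ τ₂ h₂ = cochainsMap A C f₃ τ₃ h₃ := by
  apply HomologicalComplex.Hom.ext
  funext n
  ext F v
  show τ₂ (τ₁ (F (fun i => f₁ (f₂ (v i))))) = τ₃ (F (fun i => f₃ (v i)))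
  simp only [hf]
  exact hτ _

/-- Given an action `φ` of a group `G` on a group `L` and a representation `ψ` of `G` on a
`k`-module `V`, this is `H^j(L, V)` (with `L` acting trivially on the coefficients `V`),
endowed with the `G`-action functorially induced by the action of `G` on `L` and on `V`:
`g` acts via the conjugation automorphism `φ g⁻¹` of `L` and via `ψ g` on `V`. -/
noncomputable def cohRep {G L V : Type} [Group G] [Group L] [AddCommGroup V] [Module k V]
    (φ : G →* MulAut L) (ψ : Representation k G V) (j : ℕ) : Rep k G :=
  Rep.of (X := groupCohomology (Rep.trivial k L V) j)
    { toFun := fun g => (HomologicalComplex.homologyMap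
        (cochainsMap (Rep.trivial k L V) (Rep.trivial k L V) (φ g⁻¹).toMonoidHom (ψ g)
          (fun _ _ => rfl)) j).hom
      map_one' := by
        have h := cochainsMap_eq_id (Rep.trivial k L V) (φ (1 : G)⁻¹).toMonoidHom (ψ 1)
          (fun _ _ => rfl) (fun x => by simp) (fun a => by simp)
        rw [h]
        exact congrArg ModuleCat.Hom.hom (HomologicalComplex.homologyMap_id _ j)
      map_mul' := fun g₁ g₂ => by
        have h := cochainsMap_comp (Rep.trivial k L V) (Rep.trivial k L V) (Rep.trivial k L V)
          (φ g₂⁻¹).toMonoidHom (ψ g₂) (fun _ _ => rfl)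
          (φ g₁⁻¹).toMonoidHom (ψ g₁) (fun _ _ => rfl)
          (φ (g₁ * g₂)⁻¹).toMonoidHom (ψ (g₁ * g₂)) (fun _ _ => rfl)
          (fun x => by simp [_root_.mul_inv_rev]) (fun a => by simp)
        rw [← h, HomologicalComplex.homologyMap_comp]
        rfl }


/-- `H^i(G, H^j(L, ℤ))`: the `i`-th cohomology of the cyclic group `ℤ/q` with coefficients in
the `j`-th cohomology of the lattice `ℤ^n` (with trivial `ℤ` coefficients), where the
`ℤ/q`-action on `H^j(ℤ^n, ℤ)` is the one functorially induced by the matrix action on the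
lattice. -/
noncomputable abbrev cohOfCoh {n : ℕ} (q : ℕ) [NeZero q] (M : Matrix (Fin n) (Fin n) ℤ)
    (hq : M ^ q = 1) (i j : ℕ) : ModuleCat ℤ :=
  groupCohomology
    (cohRep (matAction q M hq) (1 : Representation ℤ (Multiplicative (ZMod q)) ℤ) j) i

/-- `H^k(Γ, ℤ)` for `Γ = ℤ^n ⋊ ℤ/q`, with trivial coefficients `ℤ`. -/
noncomputable abbrev cohCrys {n : ℕ} (q : ℕ) [NeZero q] (M : Matrix (Fin n) (Fin n) ℤ)
    (hq : M ^ q = 1) (k : ℕ) : ModuleCat ℤ :=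
  groupCohomology (Rep.trivial ℤ (Crys q M hq) ℤ) k

end Crystal

/-- The holonomy matrix. -/
def holM : Matrix (Fin 4) (Fin 4) ℤ := !![-1, 0, 0, 0; 0, 0, 0, -1; 0, 1, 0, 1; 0, 0, -1, 1]

lemma holM_pow : holM ^ 4 = 1 := by decide

/-- `H^k(ℤ^4 ⋊ ℤ/4, ℤ)`, where the generator of `ℤ/4` acts on `ℤ^4` by left
multiplication by the matrix `holM`. -/
noncomputable abbrev H (k : ℕ) : ModuleCat ℤ := Crystal.cohCrys 4 holM holM_pow k

/-- `H^i(ℤ/4, H^j(ℤ^4, ℤ))`, with the functorially induced action on coefficients. -/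
noncomputable abbrev Hc (i j : ℕ) : ModuleCat ℤ := Crystal.cohOfCoh 4 holM holM_pow i j



namespace Cry
set_option linter.unusedSimpArgs false

/-- A `G`-module together with a model `D` of its group of invariant functionals to `ℤ`,
and the lifting property. -/
structure GM (G : Type) [Group G] where
  X : Type
  [grp : AddCommGroup X]
  act : G → X →+ X
  act_one : ∀ x, act 1 x = x
  act_mul : ∀ g h x, act (g * h) x = act g (act h x)
  D : Type
  [grpD : AddCommGroup D]
  ev : D →+ X →+ ℤ
  ev_inv : ∀ φ g x, ev φ (act g x) = ev φ x
  ev_inj : ∀ φ, (∀ x, ev φ x = 0) → φ = 0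
  ev_surj : ∀ f : X →+ ℤ, (∀ g x, f (act g x) = f x) → ∃ φ, ev φ = f
  lift : ∀ (A B : Rep.{0} ℤ G) (p : A →+ B), (∀ g a, p (A.ρ g a) = B.ρ g (p a)) →
    Function.Surjective p → ∀ f : X →+ B, (∀ g x, f (act g x) = B.ρ g (f x)) →
    ∃ h : X →+ A, (∀ g x, h (act g x) = A.ρ g (h x)) ∧ ∀ x, p (h x) = f x

attribute [instance] GM.grp GM.grpD

/-- Equivariant maps, with the induced map on functionals. -/
structure GHom {G : Type} [Group G] (A B : GM G) where
  f : A.X →+ B.X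
  comm : ∀ g x, f (A.act g x) = B.act g (f x)
  dual : B.D →+ A.D
  ev_dual : ∀ φ x, A.ev (dual φ) x = B.ev φ (f x)

variable {G : Type} [Group G]

namespace GM

/-- product -/
def prod (A B : GM G) : GM G where
  X := A.X × B.X
  act g := AddMonoidHom.prodMap (A.act g) (B.act g)
  act_one x := Prod.ext (A.act_one x.1) (B.act_one x.2)
  act_mul g h x := Prod.ext (A.act_mul g h x.1) (B.act_mul g h x.2)
  D := A.D × B.D
  ev := 
    { toFun := fun φ => (A.ev φ.1).coprod (B.ev φ.2)
      map_zero' := by ext x <;> simp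
      map_add' := fun φ ψ => by ext x <;> simp <;> abel }
  ev_inv φ g x := by
    show A.ev φ.1 (A.act g x.1) + B.ev φ.2 (B.act g x.2) = A.ev φ.1 x.1 + B.ev φ.2 x.2
    rw [A.ev_inv, B.ev_inv]
  ev_inj φ h := by
    ext
    · exact A.ev_inj _ fun x => by simpa using h (x, 0)
    · exact B.ev_inj _ fun x => by simpa using h (0, x)
  ev_surj f hf := by
    obtain ⟨φ, hφ⟩ := A.ev_surj (f.comp (AddMonoidHom.inl _ _)) fun g x => by
      simpa using hf g (x, 0)
    obtain ⟨ψ, hψ⟩ := B.ev_surj (f.comp (AddMonoidHom.inr _ _)) fun g x => by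
      simpa using hf g (0, x)
    refine ⟨(φ, ψ), ?_⟩
    ext ⟨x, y⟩
    simp [hφ, hψ, ← map_add]
  lift P Q p hp hs f hf := by
    obtain ⟨h, hh, hh'⟩ := A.lift P Q p hp hs (f.comp (AddMonoidHom.inl _ _)) fun g x => by
      simpa using hf g (x, 0)
    obtain ⟨k, hk, hk'⟩ := B.lift P Q p hp hs (f.comp (AddMonoidHom.inr _ _)) fun g x => by
      simpa using hf g (0, x)
    refine ⟨h.coprod k, fun g x => ?_, fun x => ?_⟩
    · show h (A.act g x.1) + k (B.act g x.2) = P.ρ g (h x.1 + k x.2)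
      rw [hh, hk, map_add]
    · simp only [AddMonoidHom.coprod_apply, map_add, hh', hk']
      simp [← map_add]

@[simp] lemma prod_act (A B : GM G) (g : G) (x : (A.prod B).X) :
    (A.prod B).act g x = (A.act g x.1, B.act g x.2) := rfl
@[simp] lemma prod_ev (A B : GM G) (φ : (A.prod B).D) (x : (A.prod B).X) :
    (A.prod B).ev φ x = A.ev φ.1 x.1 + B.ev φ.2 x.2 := rfl

/-- zero module -/
def zero : GM G where
  X := PUnit
  act _ := AddMonoidHom.id _
  act_one _ := rfl
  act_mul _ _ _ := rfl
  D := PUnit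
  ev := 0
  ev_inv _ _ _ := rfl
  ev_inj _ _ := rfl
  ev_surj f _ := ⟨0, by ext x; exact (map_zero f).symm⟩
  lift A B p _ _ f _ := ⟨0, by simp, fun x => by rw [AddMonoidHom.zero_apply, map_zero]; exact (map_zero f).symm⟩

end GM

namespace GHom
variable {A B C A' B' : GM G}

/-- identity -/
def id (A : GM G) : GHom A A where
  f := AddMonoidHom.id _
  comm _ _ := rfl
  dual := AddMonoidHom.id _
  ev_dual _ _ := rfl

/-- composition -/
def comp (h : GHom B C) (k : GHom A B) : GHom A C where
  f := h.f.comp k.f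
  comm g x := by simp [k.comm, h.comm]
  dual := k.dual.comp h.dual
  ev_dual φ x := by simp [k.ev_dual, h.ev_dual]

instance : Add (GHom A B) := ⟨fun h k =>
  { f := h.f + k.f
    comm := fun g x => by simp [k.comm, h.comm]
    dual := h.dual + k.dual
    ev_dual := fun φ x => by simp [k.ev_dual, h.ev_dual] }⟩

instance : Neg (GHom A B) := ⟨fun h =>
  { f := - h.f
    comm := fun g x => by simp [h.comm]
    dual := - h.dual
    ev_dual := fun φ x => by simp [h.ev_dual] }⟩

instance : Sub (GHom A B) := ⟨fun h k =>
  { f := h.f - k.f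
    comm := fun g x => by simp [k.comm, h.comm]
    dual := h.dual - k.dual
    ev_dual := fun φ x => by simp [k.ev_dual, h.ev_dual] }⟩

instance : Zero (GHom A B) := ⟨
  { f := 0
    comm := fun g x => by simp
    dual := 0
    ev_dual := fun φ x => by simp }⟩

@[simp] lemma id_f (x : A.X) : (GHom.id A).f x = x := rfl
@[simp] lemma comp_f (h : GHom B C) (k : GHom A B) (x : A.X) : (h.comp k).f x = h.f (k.f x) := rfl
@[simp] lemma add_f (h k : GHom A B) (x : A.X) : (h + k).f x = h.f x + k.f x := rfl
@[simp] lemma sub_f (h k : GHom A B) (x : A.X) : (h - k).f x = h.f x - k.f x := rfl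
@[simp] lemma neg_f (h : GHom A B) (x : A.X) : (- h).f x = - h.f x := rfl
@[simp] lemma zero_f (x : A.X) : (0 : GHom A B).f x = 0 := rfl

/-- pairing -/
def pair (h : GHom A B) (k : GHom A C) : GHom A (B.prod C) where
  f := h.f.prod k.f
  comm g x := by
    exact Prod.ext (h.comm g x) (k.comm g x)
  dual := h.dual.coprod k.dual
  ev_dual ψ x := by
    show A.ev (h.dual ψ.1 + k.dual ψ.2) x = B.ev ψ.1 (h.f x) + C.ev ψ.2 (k.f x)
    rw [map_add, AddMonoidHom.add_apply, h.ev_dual, k.ev_dual]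

/-- copairing -/
def copair (h : GHom A C) (k : GHom B C) : GHom (A.prod B) C where
  f := h.f.coprod k.f
  comm g x := by
    show h.f (A.act g x.1) + k.f (B.act g x.2) = C.act g (h.f x.1 + k.f x.2)
    rw [h.comm, k.comm, map_add]
  dual := h.dual.prod k.dual
  ev_dual ψ x := by
    show A.ev (h.dual ψ) x.1 + B.ev (k.dual ψ) x.2 = C.ev ψ (h.f x.1 + k.f x.2)
    rw [h.ev_dual, k.ev_dual, map_add]

@[simp] lemma pair_f (h : GHom A B) (k : GHom A C) (x : A.X) :
    (pair h k).f x = (h.f x, k.f x) := rfl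
@[simp] lemma copair_f (h : GHom A C) (k : GHom B C) (x : (A.prod B).X) :
    (copair h k).f x = h.f x.1 + k.f x.2 := rfl
@[simp] lemma copair_f' (h : GHom A C) (k : GHom B C) (x : A.X) (y : B.X) :
    (copair h k).f (x, y) = h.f x + k.f y := rfl

/-- product map -/
def pmap (h : GHom A A') (k : GHom B B') : GHom (A.prod B) (A'.prod B') where
  f := h.f.prodMap k.f
  comm g x := by
    exact Prod.ext (h.comm g x.1) (k.comm g x.2)
  dual := h.dual.prodMap k.dual
  ev_dual ψ x := by
    show A.ev (h.dual ψ.1) x.1 + B.ev (k.dual ψ.2) x.2 = A'.ev ψ.1 (h.f x.1) + B'.ev ψ.2 (k.f x.2)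
    rw [h.ev_dual, k.ev_dual]

@[simp] lemma pmap_f (h : GHom A A') (k : GHom B B') (x : (A.prod B).X) :
    (pmap h k).f x = (h.f x.1, k.f x.2) := rfl

/-- The differential of a cone in degree at least one. -/
def coneD {P Q R S : GM G} (d' : GHom P R) (φ : GHom Q R) (d : GHom Q S) :
    GHom (P.prod Q) (R.prod S) where
  f := (d'.f.coprod φ.f).prod ((-d.f).comp (AddMonoidHom.snd _ _))
  comm g x := by
    show (d'.f (P.act g x.1) + φ.f (Q.act g x.2), - d.f (Q.act g x.2))
      = (R.act g (d'.f x.1 + φ.f x.2), S.act g (- d.f x.2))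
    rw [d'.comm, φ.comm, d.comm, map_add, map_neg]
  dual := (d'.dual.comp (AddMonoidHom.fst _ _)).prod (φ.dual.coprod (-d.dual))
  ev_dual ψ x := by
    show P.ev (d'.dual ψ.1) x.1 + Q.ev (φ.dual ψ.1 + - d.dual ψ.2) x.2
      = R.ev ψ.1 (d'.f x.1 + φ.f x.2) + S.ev ψ.2 (- d.f x.2)
    simp only [map_add, map_neg, AddMonoidHom.add_apply, AddMonoidHom.neg_apply, d'.ev_dual,
      φ.ev_dual, d.ev_dual]
    abel

@[simp] lemma coneD_f {P Q R S : GM G} (d' : GHom P R) (φ : GHom Q R) (d : GHom Q S)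
    (x : (P.prod Q).X) : (coneD d' φ d).f x = (d'.f x.1 + φ.f x.2, - d.f x.2) := rfl

end GHom

/-- Complexes, exact in positive degrees. -/
structure Cx (G : Type) [Group G] where
  X : ℕ → GM G
  d : ∀ n, GHom (X (n + 1)) (X n)
  dd : ∀ n x, (d n).f ((d (n + 1)).f x) = 0
  ex : ∀ n x, (d n).f x = 0 → ∃ y, (d (n + 1)).f y = x

/-- chain maps -/
structure CxHom (C C' : Cx G) where
  f : ∀ n, GHom (C.X n) (C'.X n)
  comm : ∀ n x, (C'.d n).f ((f (n + 1)).f x) = (f n).f ((C.d n).f x)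

/-- modules of the cone -/
def coneX (C C' : Cx G) : ℕ → GM G
  | 0 => C'.X 0
  | n + 1 => (C'.X (n + 1)).prod (C.X n)

/-- differentials of the cone -/
def conedd {C C' : Cx G} (φ : CxHom C C') : ∀ n, GHom (coneX C C' (n + 1)) (coneX C C' n)
  | 0 => GHom.copair (C'.d 0) (φ.f 0)
  | n + 1 => GHom.coneD (C'.d (n + 1)) (φ.f (n + 1)) (C.d n)

/-- The cone of a chain map. -/
def cone {C C' : Cx G} (φ : CxHom C C')
    (inj : ∀ y, (∃ z, (C'.d 0).f z = (φ.f 0).f y) → ∃ w, (C.d 0).f w = y) : Cx G where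
  X := coneX C C'
  d := conedd φ
  dd n x := by
    cases n with
    | zero =>
      show (C'.d 0).f ((C'.d 1).f x.1 + (φ.f 1).f x.2) + (φ.f 0).f (- (C.d 0).f x.2) = 0
      simp [C'.dd, φ.comm]
    | succ n =>
      show ((C'.d (n+1)).f ((C'.d (n+2)).f x.1 + (φ.f (n+2)).f x.2)
        + (φ.f (n+1)).f (- (C.d (n+1)).f x.2), - (C.d n).f (- (C.d (n+1)).f x.2)) = 0
      simp [C'.dd, φ.comm, C.dd]
  ex n x hx := by
    obtain ⟨x, y⟩ := x
    cases n with
    | zero =>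
      replace hx : (C'.d 0).f x + (φ.f 0).f y = 0 := hx
      obtain ⟨w, rfl⟩ := inj y ⟨-x, by rw [map_neg, neg_eq_iff_add_eq_zero, hx]⟩
      obtain ⟨z, hz⟩ := C'.ex 0 (x + (φ.f 1).f w) (by rw [map_add, φ.comm, hx])
      refine ⟨(z, -w), ?_⟩
      show ((C'.d 1).f z + (φ.f 1).f (-w), - (C.d 0).f (-w)) = (x, (C.d 0).f w)
      rw [hz]; simp
    | succ n =>
      replace hx : ((C'.d (n+1)).f x + (φ.f (n+1)).f y, - (C.d n).f y) = 0 := hx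
      rw [Prod.mk_eq_zero, neg_eq_zero] at hx
      obtain ⟨hx, hy⟩ := hx
      obtain ⟨w, rfl⟩ := C.ex n y hy
      obtain ⟨z, hz⟩ := C'.ex (n+1) (x + (φ.f (n+2)).f w) (by rw [map_add, φ.comm, hx])
      refine ⟨(z, -w), ?_⟩
      show ((C'.d (n+2)).f z + (φ.f (n+2)).f (-w), - (C.d (n+1)).f (-w)) = (x, (C.d (n+1)).f w)
      rw [hz]; simp

/-- components of maps of cones -/
def coneMapF {C₁ C₁' C₂ C₂' : Cx G} (g : CxHom C₁ C₂) (g' : CxHom C₁' C₂') :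
    ∀ n, GHom (coneX C₁ C₁' n) (coneX C₂ C₂' n)
  | 0 => g'.f 0
  | n + 1 => GHom.pmap (g'.f (n + 1)) (g.f n)

/-- map of cones -/
def coneMap {C₁ C₁' C₂ C₂' : Cx G} {φ₁ : CxHom C₁ C₁'} {φ₂ : CxHom C₂ C₂'} (i₁) (i₂)
    (g : CxHom C₁ C₂) (g' : CxHom C₁' C₂')
    (h : ∀ n x, (φ₂.f n).f ((g.f n).f x) = (g'.f n).f ((φ₁.f n).f x)) :
    CxHom (cone φ₁ i₁) (cone φ₂ i₂) where
  f := coneMapF g g'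
  comm n x := by
    cases n with
    | zero =>
      show (C₂'.d 0).f ((g'.f 1).f x.1) + (φ₂.f 0).f ((g.f 0).f x.2)
        = (g'.f 0).f ((C₁'.d 0).f x.1 + (φ₁.f 0).f x.2)
      rw [map_add, g'.comm, h]
    | succ n =>
      show ((C₂'.d (n+1)).f ((g'.f (n+2)).f x.1) + (φ₂.f (n+1)).f ((g.f (n+1)).f x.2),
          -(C₂.d n).f ((g.f (n+1)).f x.2))
        = ((g'.f (n+1)).f ((C₁'.d (n+1)).f x.1 + (φ₁.f (n+1)).f x.2),
          (g.f n).f (-(C₁.d n).f x.2))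
      rw [map_add, g'.comm, h, g.comm, map_neg]

/-- components -/
def coneDescF {C C' C'' : Cx G} (ψ : CxHom C' C'') :
    ∀ n, GHom (coneX C C' n) (C''.X n)
  | 0 => ψ.f 0
  | n + 1 => GHom.copair (ψ.f (n + 1)) 0

/-- map from a cone -/
def coneDesc {C C' C'' : Cx G} {φ : CxHom C C'} (i) (ψ : CxHom C' C'')
    (h : ∀ n x, (ψ.f n).f ((φ.f n).f x) = 0) : CxHom (cone φ i) C'' where
  f := coneDescF ψ
  comm n x := by
    cases n with
    | zero =>
      show (C''.d 0).f ((ψ.f 1).f x.1 + 0) = (ψ.f 0).f ((C'.d 0).f x.1 + (φ.f 0).f x.2)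
      exact (congrArg _ (add_zero _)).trans ((ψ.comm 0 x.1).trans
        (((map_add _ _ _).trans (by rw [h, add_zero])).symm))
    | succ n =>
      show (C''.d (n+1)).f ((ψ.f (n+2)).f x.1 + 0)
        = (ψ.f (n+1)).f ((C'.d (n+1)).f x.1 + (φ.f (n+1)).f x.2) + 0
      exact (congrArg _ (add_zero _)).trans ((ψ.comm (n+1) x.1).trans
        (((add_zero _).trans ((map_add _ _ _).trans (by rw [h, add_zero]))).symm))

/-- Periodic complex. -/
def col (M : GM G) (α β : GHom M M) (h₁ : ∀ x, α.f (β.f x) = 0) (h₂ : ∀ x, β.f (α.f x) = 0)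
    (e₁ : ∀ x, α.f x = 0 → ∃ y, β.f y = x) (e₂ : ∀ x, β.f x = 0 → ∃ y, α.f y = x) : Cx G where
  X _ := M
  d n := if n % 2 = 0 then α else β
  dd n x := by
    rcases Nat.mod_two_eq_zero_or_one n with h | h
    · have h' : (n + 1) % 2 = 1 := by omega
      simp [h, h', h₁]
    · have h' : (n + 1) % 2 = 0 := by omega
      simp [h, h', h₂]
  ex n x hx := by
    rcases Nat.mod_two_eq_zero_or_one n with h | h
    · have h' : (n + 1) % 2 = 1 := by omega
      simp only [h, h', if_true] at hx ⊢
      exact e₁ x hx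
    · have h' : (n + 1) % 2 = 0 := by omega
      simp only [h, h', if_true] at hx ⊢
      exact e₂ x hx

/-- map of periodic complexes -/
def colMap {M M' : GM G} {α β : GHom M M} {α' β' : GHom M' M'} (h₁) (h₂) (e₁) (e₂)
    (h₁') (h₂') (e₁') (e₂') (g : GHom M M') (ha : ∀ x, α'.f (g.f x) = g.f (α.f x))
    (hb : ∀ x, β'.f (g.f x) = g.f (β.f x)) :
    CxHom (col M α β h₁ h₂ e₁ e₂) (col M' α' β' h₁' h₂' e₁' e₂') where
  f _ := g
  comm n x := by
    show (if n % 2 = 0 then α' else β').f (g.f x) = g.f ((if n % 2 = 0 then α else β).f x)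
    split_ifs
    · exact ha x
    · exact hb x

/-- A module in degree zero. -/
def conc (M : GM G) : Cx G where
  X n := match n with
    | 0 => M
    | _ + 1 => GM.zero
  d _ := 
    { f := 0, comm := fun _ _ => by simp, dual := 0, ev_dual := fun _ _ => by simp }
  dd _ _ := rfl
  ex _ _ _ := ⟨0, rfl⟩

/-- maps of modules in degree zero -/
def concMap {M M' : GM G} (g : GHom M M') : CxHom (conc M) (conc M') where
  f n := match n with
    | 0 => g
    | _ + 1 => 
      { f := 0, comm := fun _ _ => by simp, dual := 0, ev_dual := fun _ _ => by simp }
  comm n x := by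
    exact (map_zero _).symm

end Cry


namespace Cry
open CategoryTheory

/-- additive maps are linear, for any module structures -/
def toZ {M N : Type} [AddCommGroup M] [AddCommGroup N] (i : Module ℤ M) (j : Module ℤ N)
    (f : M →+ N) : M →ₗ[ℤ] N where
  toFun := f
  map_add' := map_add f
  map_smul' n x := by
    have h1 := int_smul_eq_zsmul i n x
    have h2 := int_smul_eq_zsmul j n (f x)
    simp only [RingHom.id_apply]
    exact (congrArg f h1).trans ((map_zsmul f n x).trans h2.symm)

/-- generic construction of morphisms -/
def mkHom {k G : Type} [CommRing k] [Group G] {A B : Rep.{0} k G} (f : A →ₗ[k] B)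
    (hf : ∀ g x, f (A.ρ g x) = B.ρ g (f x)) : A ⟶ B :=
  Rep.ofHom (ρ := A.ρ) (σ := B.ρ) ⟨f, fun g => by ext x; exact hf g x⟩

lemma homExt {k G : Type} [CommRing k] [Group G] {A B : Rep.{0} k G} {f g : A ⟶ B}
    (h : ∀ x, f.hom x = g.hom x) : f = g := by
  ext x; exact h x

lemma exact_rep {k G : Type} [CommRing k] [Group G] {A B D : Rep.{0} k G} (f : A ⟶ B) (g : B ⟶ D)
    (w : f ≫ g = 0)
    (h : ∀ x, g.hom x = 0 → ∃ y, f.hom y = x) : (ShortComplex.mk f g w).Exact := by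
  apply (forget₂ (Rep.{0} k G) (ModuleCat.{0} k)).reflects_exact_of_faithful
  rw [ShortComplex.moduleCat_exact_iff]
  exact h

section Cert

lemma exists_cycle (S : ShortComplex (ModuleCat.{0} ℤ)) (y : S.X₂) (hy : S.g.hom y = 0) :
    ∃ z : S.cycles, S.iCycles.hom z = y := by
  refine ⟨S.moduleCatCyclesIso.inv.hom ⟨y, hy⟩, ?_⟩
  exact congrArg (fun f => f.hom (⟨y, hy⟩ : LinearMap.ker S.g.hom))
    S.moduleCatCyclesIso_inv_iCycles

lemma cert (S : ShortComplex (ModuleCat.{0} ℤ)) {T : Type} [AddCommGroup T] (Φ : S.X₂ →+ T)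
    (h0 : ∀ x, Φ (S.f.hom x) = 0)
    (hs : ∀ t, ∃ y, S.g.hom y = 0 ∧ Φ y = t)
    (hk : ∀ y, S.g.hom y = 0 → Φ y = 0 → ∃ x, S.f.hom x = y) :
    ∃ e : S.homology ≃+ T, ∀ z : S.cycles, e (S.homologyπ.hom z) = Φ (S.iCycles.hom z) := by
  let k : S.cycles ⟶ ModuleCat.of ℤ T := S.iCycles ≫ ModuleCat.ofHom (toZ S.X₂.isModule _ Φ)
  have hk0 : S.toCycles ≫ k = 0 := by
    ext x
    have := congrArg (fun f => f.hom x) S.toCycles_i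
    show Φ (S.iCycles.hom (S.toCycles.hom x)) = 0
    rw [show S.iCycles.hom (S.toCycles.hom x) = S.f.hom x from this, h0]
  let D := S.descHomology k hk0
  have hD : ∀ z : S.cycles, D.hom (S.homologyπ.hom z) = Φ (S.iCycles.hom z) := fun z =>
    congrArg (fun f => f.hom z) (S.π_descHomology k hk0)
  have hπ : Function.Surjective S.homologyπ.hom :=
    (ModuleCat.epi_iff_surjective S.homologyπ).1 inferInstance
  have hi : Function.Injective S.iCycles.hom :=
    (ModuleCat.mono_iff_injective S.iCycles).1 inferInstance
  refine ⟨AddEquiv.ofBijective D.hom.toAddMonoidHom ⟨?_, ?_⟩, hD⟩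
  · rw [injective_iff_map_eq_zero]
    intro x hx
    obtain ⟨z, rfl⟩ := hπ x
    have hx' : Φ (S.iCycles.hom z) = 0 := (hD z).symm.trans hx
    obtain ⟨w, hw⟩ := hk _ (congrArg (fun f => f.hom z) S.iCycles_g) hx'
    have : z = S.toCycles.hom w := hi <| by
      rw [← hw]
      exact (congrArg (fun f => f.hom w) S.toCycles_i).symm
    rw [this]
    exact congrArg (fun f => f.hom w) S.toCycles_comp_homologyπ
  · intro t
    obtain ⟨y, hy, rfl⟩ := hs t
    obtain ⟨z, rfl⟩ := exists_cycle S y hy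
    exact ⟨_, hD z⟩

end Cert

variable {G : Type} [Group G]

namespace GM

/-- The representation underlying a module. -/
noncomputable def toRep (M : GM G) : Rep.{0} ℤ G :=
  Rep.of (X := M.X)
    { toFun := fun g => toZ _ _ (M.act g)
      map_one' := by ext x; exact M.act_one x
      map_mul' := fun g h => by ext x; exact M.act_mul g h x }

lemma toRep_projective (M : GM G) : Projective M.toRep where
  factors {A B} f p hp := by
    obtain ⟨h, hh, hh'⟩ := M.lift A B (AddMonoidHom.mk' p.hom (fun x y => map_add p.hom x y))
      (fun g a => Rep.hom_comm_apply p g a) ((Rep.epi_iff_surjective p).1 hp)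
      (AddMonoidHom.mk' f.hom (fun x y => map_add f.hom x y)) (fun g a => Rep.hom_comm_apply f g a)
    refine ⟨mkHom (A := M.toRep) (B := A) (toZ M.toRep.hV2 A.hV2 h) hh, ?_⟩
    exact homExt fun x => hh' x

end GM

/-- morphism of representations -/
noncomputable def GHom.toHom {A B : GM G} (h : GHom A B) : A.toRep ⟶ B.toRep :=
  Rep.ofHom (ρ := A.toRep.ρ) (σ := B.toRep.ρ) ⟨toZ A.toRep.hV2 B.toRep.hV2 h.f, fun g => by
    ext x; exact h.comm g x⟩

/-- The augmentation. -/
structure Aug (C : Cx G) where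
  ε : (C.X 0).X →+ ℤ
  inv : ∀ g x, ε ((C.X 0).act g x) = ε x
  surj : Function.Surjective ε
  zero : ∀ y, ε ((C.d 0).f y) = 0
  ex : ∀ x, ε x = 0 → ∃ y, (C.d 0).f y = x

namespace Aug
variable {C : Cx G} (a : Aug C)

/-- augmentation -/
noncomputable def hom : (C.X 0).toRep ⟶ Rep.trivial ℤ G ℤ :=
  Rep.ofHom (ρ := (C.X 0).toRep.ρ) (σ := (Rep.trivial ℤ G ℤ).ρ) ⟨toZ (C.X 0).toRep.hV2 (Rep.trivial ℤ G ℤ).hV2 a.ε, fun g => by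
    ext x; exact a.inv g x⟩

/-- complex -/
noncomputable def cplx (C : Cx G) : ChainComplex (Rep.{0} ℤ G) ℕ :=
  ChainComplex.of (fun n => (C.X n).toRep) (fun n => (C.d n).toHom) (fun n => by
    ext x; exact C.dd n x)

lemma cplx_d (C : Cx G) (n : ℕ) : (cplx C).d (n+1) n = (C.d n).toHom := 
  ChainComplex.of_d (fun n => (C.X n).toRep) (fun n => (C.d n).toHom) n

/-- projection -/
noncomputable def π : cplx C ⟶ (ChainComplex.single₀ (Rep.{0} ℤ G)).obj (Rep.trivial ℤ G ℤ) :=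
  ((cplx C).toSingle₀Equiv _).symm ⟨a.hom, by
    rw [cplx_d]
    ext x; exact a.zero x⟩

lemma π_f_zero : a.π.f 0 = a.hom :=
  congrArg Subtype.val (((cplx C).toSingle₀Equiv (Rep.trivial ℤ G ℤ)).apply_symm_apply
    ⟨a.hom, by rw [cplx_d]; ext x; exact a.zero x⟩)

lemma quasi : QuasiIso a.π where
  quasiIsoAt m := by
    cases m with
    | zero =>
      rw [ChainComplex.quasiIsoAt₀_iff, ShortComplex.quasiIso_iff_of_zeros' _ rfl rfl rfl]
      constructor
      · refine exact_rep _ _ _ ?_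
        intro x hx
        have h1 : (a.π.f 0).hom x = 0 := hx
        rw [π_f_zero] at h1
        obtain ⟨y, hy⟩ := a.ex x h1
        refine ⟨y, ?_⟩
        show ((cplx C).d 1 0).hom y = x
        rw [cplx_d]
        exact hy
      · rw [Rep.epi_iff_surjective]
        show Function.Surjective (a.π.f 0).hom
        rw [π_f_zero]
        exact a.surj
    | succ m =>
      rw [quasiIsoAt_iff_exactAt' (hL := ChainComplex.exactAt_succ_single_obj ..),
          HomologicalComplex.exactAt_iff' _ (m + 2) (m + 1) m (by simp) (by simp)]
      refine exact_rep _ _ _ ?_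
      intro x hx
      rw [cplx_d] at hx
      obtain ⟨y, hy⟩ := C.ex m x hx
      refine ⟨y, ?_⟩
      rw [cplx_d]
      exact hy

/-- resolution -/
noncomputable def res : ProjectiveResolution (Rep.trivial ℤ G ℤ) where
  complex := cplx C
  projective n := (C.X n).toRep_projective
  π := a.π
  quasiIso := a.quasi

/-- A functional as a morphism to the trivial representation. -/
noncomputable def _root_.Cry.GM.evHom (M : GM G) (φ : M.D) : M.toRep ⟶ Rep.trivial ℤ G ℤ :=
  Rep.ofHom (ρ := M.toRep.ρ) (σ := (Rep.trivial ℤ G ℤ).ρ) ⟨toZ M.toRep.hV2 (Rep.trivial ℤ G ℤ).hV2 (M.ev φ), fun g => by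
    ext x; exact M.ev_inv φ g x⟩

lemma ev_bij (M : GM G) : Function.Bijective M.evHom := by
  constructor
  · intro φ ψ h
    rw [← sub_eq_zero]
    refine M.ev_inj _ fun x => ?_
    have : M.ev φ x = M.ev ψ x := congrArg (fun f => f.hom x) h
    rw [map_sub, AddMonoidHom.sub_apply, this, sub_self]
  · intro f
    obtain ⟨φ, hφ⟩ := M.ev_surj (AddMonoidHom.mk' f.hom (fun x y => map_add f.hom x y))
      (fun g x => Rep.hom_comm_apply f g x)
    refine ⟨φ, ?_⟩
    ext x
    exact congrArg (fun h => h x) hφ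

/-- functionals -/
noncomputable def evEquiv (M : GM G) : M.D ≃+ (M.toRep ⟶ Rep.trivial ℤ G ℤ) :=
  AddEquiv.mk' (Equiv.ofBijective _ (ev_bij M)) (fun φ ψ => by
    ext x
    show M.ev (φ + ψ) x = M.ev φ x + M.ev ψ x
    exact congrArg (fun f : M.X →+ ℤ => f x) (map_add M.ev φ ψ))

lemma evEquiv_dual {A B : GM G} (h : GHom A B) (φ : B.D) :
    evEquiv A (h.dual φ) = h.toHom ≫ evEquiv B φ := by
  ext x
  exact h.ev_dual φ x

theorem main_cert {C : Cx G} (a : Aug C) (n : ℕ) {T : Type} [AddCommGroup T] (Φ : (C.X (n+1)).D →+ T)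
    (h0 : ∀ x, Φ ((C.d n).dual x) = 0)
    (hs : ∀ t, ∃ y, (C.d (n+1)).dual y = 0 ∧ Φ y = t)
    (hk : ∀ y, (C.d (n+1)).dual y = 0 → Φ y = 0 → ∃ x, (C.d n).dual x = y) :
    Nonempty (groupCohomology (Rep.trivial ℤ G ℤ) (n+1) ≃+ T) := by
  let K := a.res.complex.linearYonedaObj ℤ (Rep.trivial ℤ G ℤ)
  have hd : ∀ m (f : (C.X m).toRep ⟶ Rep.trivial ℤ G ℤ),
      (K.d m (m+1)).hom f = (C.d m).toHom ≫ f := fun m f => by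
    show (cplx C).d (m+1) m ≫ f = _
    rw [cplx_d]
    rfl
  have i1 := groupCohomologyIso (Rep.trivial ℤ G ℤ) (n+1) a.res
  have i2 : K.homology (n+1) ≅ (K.sc' n (n+1) (n+2)).homology :=
    ShortComplex.homologyMapIso (K.isoSc' n (n+1) (n+2) (by simp) (by simp))
  obtain ⟨e, -⟩ := cert (K.sc' n (n+1) (n+2))
    (Φ.comp (evEquiv (C.X (n+1))).symm.toAddMonoidHom) 
    (fun x => by
      obtain ⟨φ, rfl⟩ := (evEquiv (C.X n)).surjective x
      show Φ ((evEquiv (C.X (n+1))).symm ((K.d n (n+1)).hom _)) = 0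
      rw [hd, ← evEquiv_dual, AddEquiv.symm_apply_apply, h0])
    (fun t => by
      obtain ⟨y, hy, hy'⟩ := hs t
      refine ⟨evEquiv _ y, ?_, ?_⟩
      · show (K.d (n+1) (n+2)).hom _ = 0
        rw [hd, ← evEquiv_dual, hy, map_zero]; rfl
      · show Φ ((evEquiv (C.X (n+1))).symm (evEquiv _ y)) = t
        rw [AddEquiv.symm_apply_apply, hy'])
    (fun y hy hy' => by
      obtain ⟨φ, rfl⟩ := (evEquiv (C.X (n+1))).surjective y
      replace hy : (K.d (n+1) (n+2)).hom (evEquiv _ φ) = 0 := hy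
      rw [hd, ← evEquiv_dual] at hy
      replace hy := (AddEquiv.map_eq_zero_iff (evEquiv (C.X (n+2)))).1 hy
      replace hy' : Φ ((evEquiv (C.X (n+1))).symm (evEquiv _ φ)) = 0 := hy'
      rw [AddEquiv.symm_apply_apply] at hy'
      obtain ⟨x, hx⟩ := hk φ hy hy'
      refine ⟨evEquiv _ x, ?_⟩
      show (K.d n (n+1)).hom _ = _
      rw [hd, ← evEquiv_dual, hx])
  exact ⟨((i1 ≪≫ i2).toLinearEquiv.toAddEquiv).trans e⟩

end Aug
end Cry


namespace Cry
open CategoryTheory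

/-- push-forward of finitely supported functions -/
noncomputable def T {S S' : Type} (θ : S → S') : (S →₀ ℤ) →+ (S' →₀ ℤ) :=
  Finsupp.mapDomain.addMonoidHom θ

lemma T_single {S S' : Type} (θ : S → S') (s : S) (n : ℤ) :
    T θ (Finsupp.single s n) = Finsupp.single (θ s) n := Finsupp.mapDomain_single

lemma T_comp {S S' S'' : Type} (θ : S → S') (η : S' → S'') (x : S →₀ ℤ) :
    T η (T θ x) = T (fun s => η (θ s)) x := Finsupp.mapDomain_comp.symm

lemma T_id {S : Type} (θ : S → S) (h : ∀ s, θ s = s) (x : S →₀ ℤ) : T θ x = x := by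
  have : θ = id := funext h
  rw [this]; exact Finsupp.mapDomain_id

lemma T_congr {S S' : Type} {θ η : S → S'} (h : ∀ s, θ s = η s) (x : S →₀ ℤ) : T θ x = T η x := by
  rw [funext h]

/-- two additive maps agree when they agree on the basis -/
lemma hom_ext {S B : Type} [AddCommGroup B] {f g : (S →₀ ℤ) →+ B}
    (h : ∀ s, f (Finsupp.single s 1) = g (Finsupp.single s 1)) (x : S →₀ ℤ) : f x = g x := by
  have : f = g := by
    apply Finsupp.addHom_ext
    intro s n
    have e : Finsupp.single s n = n • Finsupp.single s (1 : ℤ) := by simp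
    rw [e, map_zsmul, map_zsmul, h]
  rw [this]

/-- additive map from its values on the basis -/
noncomputable def mkAdd {S B : Type} [AddCommGroup B] (u : S → B) : (S →₀ ℤ) →+ B :=
  Finsupp.liftAddHom fun s => (zmultiplesHom B) (u s)

@[simp] lemma mkAdd_single {S B : Type} [AddCommGroup B] (u : S → B) (s : S) :
    mkAdd u (Finsupp.single s 1) = u s := by
  simp [mkAdd]

section Perm
variable {G S ι D : Type} [Group G] [MulAction G S] [AddCommGroup D]

/-- Free permutation modules. -/
noncomputable def permGM (i : S → ι) (base : ι → S) (γ : S → G) (e : D ≃+ (ι → ℤ))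
    (h1 : ∀ s, γ s • base (i s) = s) (h2 : ∀ (g : G) s, i (g • s) = i s)
    (h3 : ∀ (g : G) s, γ (g • s) = g * γ s) (h4 : ∀ j, i (base j) = j) : GM G where
  X := S →₀ ℤ
  act g := T (g • ·)
  act_one x := T_id _ (fun s => one_smul G s) x
  act_mul g h x := by
    rw [T_comp]; exact T_congr (fun s => mul_smul g h s) x
  D := D
  ev := AddMonoidHom.mk' (fun φ => mkAdd fun s => e φ (i s)) (fun φ ψ => by
    ext1 s
    ext
    simp)
  ev_inv φ g x := by
    refine hom_ext (f := (mkAdd fun s => e φ (i s)).comp (T (g • ·))) (fun s => ?_) x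
    rw [AddMonoidHom.comp_apply, T_single]
    show mkAdd _ _ = mkAdd _ _
    simp [h2]
  ev_inj φ h := by
    rw [← map_eq_zero_iff e e.injective]
    funext j
    have := h (Finsupp.single (base j) 1)
    simpa [h4] using this
  ev_surj f hf := by
    refine ⟨e.symm fun j => f (Finsupp.single (base j) 1), ?_⟩
    ext1 s
    ext
    have := hf (γ s) (Finsupp.single (base (i s)) 1)
    rw [T_single, h1] at this
    simpa using this.symm
  lift A B p hp hs f hf := by
    choose a ha using fun j => hs (f (Finsupp.single (base j) 1))
    refine ⟨mkAdd fun s => A.ρ (γ s) (a (i s)), fun g x => ?_, fun x => ?_⟩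
    · refine hom_ext (f := (mkAdd fun s => A.ρ (γ s) (a (i s))).comp (T (g • ·)))
        (g := (AddMonoidHom.mk' (A.ρ g) (fun x y => map_add (A.ρ g) x y)).comp
          (mkAdd fun s => A.ρ (γ s) (a (i s)))) (fun s => ?_) x
      rw [AddMonoidHom.comp_apply, T_single, AddMonoidHom.comp_apply, mkAdd_single, mkAdd_single,
        h3, h2, map_mul]
      rfl
    · refine hom_ext (f := p.comp (mkAdd fun s => A.ρ (γ s) (a (i s)))) (fun s => ?_) x
      rw [AddMonoidHom.comp_apply, mkAdd_single, hp, ha, ← hf, T_single, h1]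

variable {i : S → ι} {base : ι → S} {γ : S → G} {e : D ≃+ (ι → ℤ)}
    {h1 : ∀ s, γ s • base (i s) = s} {h2 : ∀ (g : G) s, i (g • s) = i s}
    {h3 : ∀ (g : G) s, γ (g • s) = g * γ s} {h4 : ∀ j, i (base j) = j}

/-- maps of permutation modules -/
noncomputable def permHom (θ : S → S) (hθ : ∀ (g : G) s, θ (g • s) = g • θ s) (d : D →+ D)
    (hd : ∀ φ s, e (d φ) (i s) = e φ (i (θ s))) :
    GHom (permGM i base γ e h1 h2 h3 h4) (permGM i base γ e h1 h2 h3 h4) where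
  f := T θ
  comm g x := by
    exact (T_comp (g • ·) θ x).trans ((T_congr (fun s => hθ g s) x).trans (T_comp θ (g • ·) x).symm)
  dual := d
  ev_dual φ x := by
    refine hom_ext (f := mkAdd fun s => e (d φ) (i s)) 
      (g := (mkAdd fun s => e φ (i s)).comp (T θ)) (fun s => ?_) x
    rw [AddMonoidHom.comp_apply, T_single, mkAdd_single, mkAdd_single]
    exact hd φ s

end Perm

/-! Translations on `K × ℤ^4`. -/

/-- index set -/
abbrev Sp (K : Type) := K × (Fin 4 → ℤ)

section Tr
variable {K : Type}

/-- translations -/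
def tr (v : Fin 4 → ℤ) (s : Sp K) : Sp K := (s.1, s.2 + v)

/-- translation operators -/
noncomputable def X (v : Fin 4 → ℤ) : (Sp K →₀ ℤ) →+ (Sp K →₀ ℤ) := T (tr v)

/-- kill a coordinate -/
noncomputable def q (i : Fin 4) : (Sp K →₀ ℤ) →+ (Sp K →₀ ℤ) :=
  T fun s => (s.1, Function.update s.2 i 0)

/-- basis vectors -/
abbrev ev (i : Fin 4) : Fin 4 → ℤ := Pi.single i 1

lemma X_X (v w : Fin 4 → ℤ) (x : Sp K →₀ ℤ) : X v (X w x) = X (w + v) x := by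
  rw [X, X, T_comp]; exact T_congr (fun s => by simp [tr, add_assoc]) x

lemma X_comm (v w : Fin 4 → ℤ) (x : Sp K →₀ ℤ) : X v (X w x) = X w (X v x) := by
  rw [X_X, X_X, add_comm]

lemma X_zero (x : Sp K →₀ ℤ) : X 0 x = x := T_id _ (fun s => by simp [tr]) x

lemma q_X (i : Fin 4) (v : Fin 4 → ℤ) (hv : v i = 0) (x : Sp K →₀ ℤ) : q i (X v x) = X v (q i x) := by
  rw [X, q, T_comp, T_comp]
  refine T_congr (fun s => ?_) x
  refine Prod.ext rfl (funext fun j => ?_)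
  by_cases h : j = i
  · subst h; simp [tr, hv]
  · simp [tr, h]

lemma q_X_self (i : Fin 4) (x : Sp K →₀ ℤ) : q i (X (ev i) x) = q i x := by
  rw [X, q, T_comp]
  refine T_congr (fun s => ?_) x
  refine Prod.ext rfl (funext fun j => ?_)
  by_cases h : j = i
  · subst h; simp [tr]
  · simp [tr, h]

lemma X_inj (i : Fin 4) (x : Sp K →₀ ℤ) (h : X (ev i) x - x = 0) : x = 0 := by
  rw [sub_eq_zero] at h
  by_contra hx
  obtain ⟨s, hs⟩ := Finsupp.ne_iff.1 hx
  have inj : Function.Injective (tr (K := K) (ev i)) := fun s t hst => by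
    simpa [tr, Prod.ext_iff] using hst
  have key : ∀ t, x (tr (ev i) t) = x t := fun t => by
    conv_lhs => rw [← h]
    exact Finsupp.mapDomain_apply inj x t
  have all : ∀ n : ℕ, x (s.1, s.2 + (n : ℤ) • ev i) = x s := by
    intro n
    induction n with
    | zero => simp
    | succ n ih =>
      rw [← ih, ← key (s.1, s.2 + (n : ℤ) • ev i)]
      congr 1
      refine Prod.ext rfl ?_
      show s.2 + ((n + 1 : ℕ) : ℤ) • ev i = s.2 + (n : ℤ) • ev i + ev i
      push_cast
      rw [add_smul, one_smul, add_assoc]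
  have hf : (Set.range fun n : ℕ => ((s.1, s.2 + (n : ℤ) • ev i) : Sp K)) ⊆ (x.support : Set (Sp K)) := by
    rintro _ ⟨n, rfl⟩
    simp only [Finset.mem_coe, Finsupp.mem_support_iff]
    rw [all]; exact hs
  refine Set.infinite_range_of_injective ?_ (x.support.finite_toSet.subset hf)
  intro m n hmn
  have := congrFun (congrArg Prod.snd hmn) i
  simpa using this

lemma q_spec (i : Fin 4) (x : Sp K →₀ ℤ) : ∃ z, x = q i x + (X (ev i) z - z) := by
  let W : AddSubgroup (Sp K →₀ ℤ) := (X (ev i) - AddMonoidHom.id _).range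
  have hW : ∀ z, X (ev i) z - z ∈ W := fun z => ⟨z, rfl⟩
  have h0 : ∀ (t : K) μ (n : ℤ), Finsupp.single (t, Function.update μ i n) (1 : ℤ)
      - Finsupp.single (t, Function.update μ i 0) 1 ∈ W := by
    intro t μ n
    have st : ∀ n : ℤ, Finsupp.single (t, Function.update μ i (n+1)) (1 : ℤ)
      - Finsupp.single (t, Function.update μ i n) 1 ∈ W := fun n => by
      have := hW (Finsupp.single (t, Function.update μ i n) 1)
      rw [X, T_single] at this
      convert this using 3
      refine Prod.ext rfl (funext fun j => ?_)
      by_cases h : j = i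
      · subst h; simp [tr]
      · simp [tr, h]
    induction n using Int.induction_on with
    | zero => simp
    | succ n ih =>
      have := W.add_mem (st n) ih
      rwa [sub_add_sub_cancel] at this
    | pred n ih =>
      have := W.sub_mem ih (st (-n-1))
      rw [sub_add_cancel] at this
      simpa using this
  have : x - q i x ∈ W := by
    induction x using Finsupp.induction_linear with
    | zero => simp
    | add x y hx hy =>
      have := W.add_mem hx hy
      rw [map_add]
      convert this using 1; abel
    | single s n =>
      have h := W.zsmul_mem (h0 s.1 s.2 (s.2 i)) n
      rw [Function.update_eq_self] at h
      rw [q, T_single]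
      simpa [smul_sub] using h
  obtain ⟨z, hz⟩ := this
  exact ⟨z, by rw [show X (ev i) z - z = x - q i x from hz]; abel⟩

lemma qsub (i : Fin 4) (x : Sp K →₀ ℤ) : q i (X (ev i) x - x) = 0 := by
  rw [map_sub, q_X_self, sub_self]

lemma qsub' (i j : Fin 4) (h : i ≠ j) (x : Sp K →₀ ℤ) :
    q i (X (ev j) x - x) = X (ev j) (q i x) - q i x := by
  rw [map_sub, q_X _ _ (by simp [ev, h])]

/-- regularity: one divisor -/
lemma reg1 (i j : Fin 4) (h : i ≠ j) (y w : Sp K →₀ ℤ)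
    (e : X (ev j) y - y = X (ev i) w - w) : ∃ t, y = X (ev i) t - t := by
  obtain ⟨t, ht⟩ := q_spec i y
  have : q i y = 0 := by
    apply X_inj j
    rw [← qsub' i j h, e, qsub]
  exact ⟨t, by rwa [this, zero_add] at ht⟩

/-- Koszul exactness -/
lemma koszul (i j : Fin 4) (h : i ≠ j) (u v : Sp K →₀ ℤ)
    (e : (X (ev i) u - u) + (X (ev j) v - v) = 0) :
    ∃ t, u = - (X (ev j) t - t) ∧ v = X (ev i) t - t := by
  obtain ⟨t, rfl⟩ := reg1 i j h v (-u) (by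
    rw [map_neg]
    rw [add_comm] at e
    rw [eq_neg_of_add_eq_zero_left e]; abel)
  refine ⟨t, ?_, rfl⟩
  rw [← sub_eq_zero]
  apply X_inj i
  rw [← e]
  simp only [map_sub, map_neg, X_comm (ev j) (ev i)]
  abel

lemma reg2 (i j k : Fin 4) (hij : i ≠ j) (hik : i ≠ k) (hjk : j ≠ k) (y w w' : Sp K →₀ ℤ)
    (e : X (ev k) y - y = (X (ev i) w - w) + (X (ev j) w' - w')) :
    ∃ t t', y = (X (ev i) t - t) + (X (ev j) t' - t') := by
  obtain ⟨t, ht⟩ := q_spec i y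
  obtain ⟨t', ht'⟩ := reg1 j k hjk (q i y) (q i w') (by
    rw [← qsub' i k hik, e, map_add, qsub, zero_add, qsub' i j hij])
  exact ⟨t, t', by rw [← ht', add_comm]; exact ht⟩

lemma reg3 (i j k l : Fin 4) (hij : i ≠ j) (hik : i ≠ k) (hjk : j ≠ k) (hil : i ≠ l) (hjl : j ≠ l)
    (hkl : k ≠ l) (y w w' w'' : Sp K →₀ ℤ)
    (e : X (ev l) y - y = (X (ev i) w - w) + (X (ev j) w' - w') + (X (ev k) w'' - w'')) :
    ∃ t t' t'', y = (X (ev i) t - t) + (X (ev j) t' - t') + (X (ev k) t'' - t'') := by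
  obtain ⟨t, ht⟩ := q_spec i y
  obtain ⟨t', t'', ht'⟩ := reg2 j k l hjk hjl hkl (q i y) (q i w') (q i w'') (by
    rw [← qsub' i l hil, e, map_add, map_add, qsub, zero_add, qsub' i j hij, qsub' i k hik])
  exact ⟨t, t', t'', by rw [add_assoc, ← ht', add_comm]; exact ht⟩

lemma q_all (x : Sp K →₀ ℤ) : ∃ t0 t1 t2 t3, x = q 3 (q 2 (q 1 (q 0 x)))
    + ((X (ev 0) t0 - t0) + (X (ev 1) t1 - t1) + (X (ev 2) t2 - t2) + (X (ev 3) t3 - t3)) := by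
  obtain ⟨t0, h0⟩ := q_spec 0 x
  obtain ⟨t1, h1⟩ := q_spec 1 (q 0 x)
  obtain ⟨t2, h2⟩ := q_spec 2 (q 1 (q 0 x))
  obtain ⟨t3, h3⟩ := q_spec 3 (q 2 (q 1 (q 0 x)))
  refine ⟨t0, t1, t2, t3, ?_⟩
  conv_lhs => rw [h0, h1, h2, h3]
  abel

lemma q_all_eq (x : Sp K →₀ ℤ) : q 3 (q 2 (q 1 (q 0 x))) = T (fun s => (s.1, 0)) x := by
  simp only [q, T_comp]
  refine T_congr (fun s => ?_) x
  refine Prod.ext rfl (funext fun j => ?_)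
  fin_cases j <;> simp

/-- total sum -/
noncomputable def eps : (Sp K →₀ ℤ) →+ ℤ := mkAdd fun _ => 1

lemma eps_T (θ : Sp K → Sp K) (x : Sp K →₀ ℤ) : eps (T θ x) = eps x := by
  refine hom_ext (f := eps.comp (T θ)) (fun s => ?_) x
  rw [AddMonoidHom.comp_apply, T_single, eps, mkAdd_single, mkAdd_single]

end Tr
end Cry


namespace Cry

/-- Cyclic structure on a module. -/
structure Colm (M : Type) [AddCommGroup M] where
  R : M →+ M
  P : ZMod 4 → M →+ M
  R4 : ∀ x, R (R (R (R x))) = x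
  RP : ∀ h x, P h (R x) = R (P (h + 1) x)
  PP : ∀ h x, P h (P h x) = P h x
  PP0 : ∀ h h' x, h ≠ h' → P h (P h' x) = 0
  sum : ∀ x, P 0 x + P 1 x + P 2 x + P 3 x = x

namespace Colm
variable {M : Type} [AddCommGroup M] (c : Colm M)

/-- norm -/
def N : M →+ M := AddMonoidHom.id M + c.R + c.R.comp c.R + c.R.comp (c.R.comp c.R)

lemma N_apply (x : M) : c.N x = x + c.R x + c.R (c.R x) + c.R (c.R (c.R x)) := rfl

lemma RN (x : M) : c.R (c.N x) - c.N x = 0 := by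
  simp only [N_apply, map_add, c.R4]; abel

lemma NR (x : M) : c.N (c.R x - x) = 0 := by
  simp only [N_apply, map_add, map_sub, c.R4]; abel

lemma p0 (x : M) : c.P 0 (c.R x) = c.R (c.P 1 x) := c.RP 0 x
lemma p1 (x : M) : c.P 1 (c.R x) = c.R (c.P 2 x) := c.RP 1 x
lemma p2 (x : M) : c.P 2 (c.R x) = c.R (c.P 3 x) := c.RP 2 x
lemma p3 (x : M) : c.P 3 (c.R x) = c.R (c.P 0 x) := c.RP 3 x

lemma kerR (x : M) (h : c.R x - x = 0) : ∃ y, c.N y = x := by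
  refine ⟨c.P 0 x, ?_⟩
  rw [sub_eq_zero] at h
  have h3 := c.p3 x
  have h2 := c.p2 x
  have h1 := c.p1 x
  rw [h] at h1 h2 h3
  rw [N_apply, ← h3, ← h2, ← h1]
  conv_rhs => rw [← c.sum x]
  abel

lemma kerQ (x : M) (h : c.P 0 (c.N x) = 0) : ∃ y, c.R y - y = x := by
  refine ⟨-(c.P 1 x + c.P 2 x + c.R (c.P 2 x) + c.P 3 x + c.R (c.P 3 x) + c.R (c.R (c.P 3 x))), ?_⟩
  simp only [N_apply, map_add, p0, p1, p2] at h
  conv_rhs => rw [← c.sum x]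
  simp only [map_neg, map_add]
  rw [← sub_eq_zero]
  rw [← neg_eq_zero, ← h]
  abel

lemma kerN (x : M) (h : c.N x = 0) : ∃ y, c.R y - y = x := c.kerQ x (by rw [h, map_zero])

lemma QP (x : M) : c.P 0 (c.N (c.P 0 x)) = c.P 0 x := by
  simp only [N_apply, map_add, p0, p1, p2, c.PP]
  rw [c.PP0 1 0 x (by decide), c.PP0 2 0 x (by decide), c.PP0 3 0 x (by decide)]
  simp

lemma Q0 (x : M) : c.P 0 (c.N (c.R x - x)) = 0 := by rw [c.NR, map_zero]

end Colm

/-! The group. -/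

/-- The group. -/
abbrev Gam := Crystal.Crys 4 holM holM_pow

/-- rotation -/
def rM : Matrix (Fin 4) (Fin 4) ℤ := !![0, -1, 0, 0; 1, 0, 0, 0; 0, 0, 1, 0; 0, 0, 0, -1]

lemma rM_pow : rM ^ 4 = 1 := by decide

/-- powers of the rotation -/
def rp (h : ZMod 4) : (Fin 4 → ℤ) →+ (Fin 4 → ℤ) := (Matrix.mulVecLin (rM ^ h.val)).toAddMonoidHom

lemma rp_apply (h : ZMod 4) (v) : rp h v = Matrix.mulVec (rM ^ h.val) v := rfl

lemma rp_add (h k : ZMod 4) (v) : rp (h + k) v = rp h (rp k v) := by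
  rw [rp_apply, rp_apply, rp_apply, Matrix.mulVec_mulVec, ← pow_add, ZMod.val_add,
    ← pow_eq_pow_mod _ rM_pow]

lemma rp_zero (v) : rp 0 v = v := by
  rw [rp_apply]; simp

/-- embedding of the lattice -/
def jM : Matrix (Fin 4) (Fin 4) ℤ := !![0, 1, 0, 1; 0, 0, 1, 0; 0, 1, 1, -1; 1, 0, 0, 0]

lemma jM_rM : jM * holM = rM * jM := by decide

/-- embedding of the lattice -/
def jj (l : Crystal.Lat 4) : Fin 4 → ℤ := Matrix.mulVec jM l.toAdd

lemma jj_mul (l l' : Crystal.Lat 4) : jj (l * l') = jj l + jj l' := Matrix.mulVec_add _ _ _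

lemma mA_apply (g : Multiplicative (ZMod 4)) (l : Crystal.Lat 4) :
    (Crystal.matAction 4 holM holM_pow g l).toAdd = Matrix.mulVec (holM ^ g.toAdd.val) l.toAdd := by
  have : ∀ n : ℕ, ((Crystal.glToAut 4 (Crystal.matUnit holM 3 holM_pow)) ^ n) l 
      = Multiplicative.ofAdd (Matrix.mulVec (holM ^ n) l.toAdd) := by
    intro n
    rw [← map_pow]
    show Multiplicative.ofAdd (Matrix.mulVec (((Crystal.matUnit holM 3 holM_pow) ^ n : (Matrix (Fin 4) (Fin 4) ℤ)ˣ) : Matrix (Fin 4) (Fin 4) ℤ) l.toAdd) = _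
    rw [Units.val_pow_eq_pow_val]
    rfl
  exact congrArg Multiplicative.toAdd (this g.toAdd.val)

lemma jj_act (g : Multiplicative (ZMod 4)) (l : Crystal.Lat 4) :
    jj (Crystal.matAction 4 holM holM_pow g l) = rp g.toAdd (jj l) := by
  rw [jj, mA_apply, rp_apply, jj, Matrix.mulVec_mulVec, Matrix.mulVec_mulVec]
  congr 1
  generalize g.toAdd.val = n
  induction n with
  | zero => simp
  | succ n ih => rw [pow_succ, ← mul_assoc, ih, mul_assoc, jM_rM, pow_succ, mul_assoc]

instance : MulAction Gam (Sp (ZMod 4)) where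
  smul x s := (s.1 + x.right.toAdd, s.2 + rp (-(s.1 + x.right.toAdd)) (jj x.left))
  one_smul s := by
    refine Prod.ext ?_ ?_
    · exact add_zero s.1
    · show s.2 + rp _ (jj 1) = s.2
      have : jj 1 = 0 := Matrix.mulVec_zero _
      rw [this, map_zero, add_zero]
  mul_smul x y s := by
    refine Prod.ext ?_ ?_
    · show s.1 + (x.right.toAdd + y.right.toAdd) = s.1 + y.right.toAdd + x.right.toAdd
      abel
    · show s.2 + rp (-(s.1 + (x.right.toAdd + y.right.toAdd))) (jj (x.left * Crystal.matAction 4 holM holM_pow x.right y.left))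
        = s.2 + rp (-(s.1 + y.right.toAdd)) (jj y.left)
          + rp (-(s.1 + y.right.toAdd + x.right.toAdd)) (jj x.left)
      rw [jj_mul, jj_act, map_add, ← rp_add]
      have e1 : -(s.1 + (x.right.toAdd + y.right.toAdd)) = -(s.1 + y.right.toAdd + x.right.toAdd) := by abel
      have e2 : -(s.1 + (x.right.toAdd + y.right.toAdd)) + x.right.toAdd = -(s.1 + y.right.toAdd) := by abel
      rw [e2, e1]; abel

lemma smul_def (x : Gam) (s : Sp (ZMod 4)) :
    x • s = (s.1 + x.right.toAdd, s.2 + rp (-(s.1 + x.right.toAdd)) (jj x.left)) := rfl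

/-- parity of an element -/
def par (v : Fin 4 → ℤ) : ZMod 2 := ((v 0 + v 1 + v 2 : ℤ) : ZMod 2)

lemma par_add (v w) : par (v + w) = par v + par w := by
  simp only [par, Pi.add_apply]; push_cast; ring

lemma rM_mul (v : Fin 4 → ℤ) : Matrix.mulVec rM v = ![-v 1, v 0, v 2, -v 3] := by
  funext i; fin_cases i <;> simp [rM, Matrix.mulVec, dotProduct, Fin.sum_univ_four]

lemma jM_mul (v : Fin 4 → ℤ) : Matrix.mulVec jM v = ![v 1 + v 3, v 2, v 1 + v 2 - v 3, v 0] := by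
  funext i; fin_cases i <;> simp [jM, Matrix.mulVec, dotProduct, Fin.sum_univ_four] <;> ring

lemma par_rp (h : ZMod 4) (v) : par (rp h v) = par v := by
  rw [rp_apply]
  generalize h.val = n
  induction n generalizing v with
  | zero => simp
  | succ n ih =>
    rw [pow_succ, ← Matrix.mulVec_mulVec, ih, rM_mul]
    simp only [par]
    rw [ZMod.intCast_eq_intCast_iff_dvd_sub]
    simp
    omega

lemma par_jj (l) : par (jj l) = 0 := by
  rw [jj, jM_mul, par, ZMod.intCast_zmod_eq_zero_iff_dvd]
  simp
  omega

/-- inverse of the embedding -/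
def ji (v : Fin 4 → ℤ) : Crystal.Lat 4 :=
  Multiplicative.ofAdd ![v 3, (v 0 + v 2 - v 1) / 2, v 1, (v 0 - v 2 + v 1) / 2]

lemma jj_ji (v) (h : par v = 0) : jj (ji v) = v := by
  rw [par, ZMod.intCast_zmod_eq_zero_iff_dvd] at h
  rw [jj, ji, toAdd_ofAdd, jM_mul]
  funext i
  fin_cases i <;> simp <;> omega

lemma ji_jj (l) : ji (jj l) = l := by
  rw [ji, jj, jM_mul]
  apply Multiplicative.toAdd.injective
  rw [toAdd_ofAdd]
  funext i
  fin_cases i <;> simp <;> omega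

/-- orbit representatives -/
def gbase (t : ZMod 2) : Sp (ZMod 4) := (0, if t = 0 then 0 else ev 2)

lemma par_gbase (t : ZMod 2) : par (gbase t).2 = t := by
  revert t; decide

/-- position in the orbit -/
def gγ (s : Sp (ZMod 4)) : Gam := ⟨ji (rp s.1 (s.2 - (gbase (par s.2)).2)), Multiplicative.ofAdd s.1⟩

lemma gγ_spec (s : Sp (ZMod 4)) : gγ s • gbase (par s.2) = s := by
  rw [smul_def]
  refine Prod.ext (zero_add _) ?_
  show (gbase (par s.2)).2 + rp (-(0 + s.1)) (jj (ji (rp s.1 (s.2 - (gbase (par s.2)).2)))) = s.2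
  rw [jj_ji]
  · rw [← rp_add, zero_add, neg_add_cancel, rp_zero]; abel
  · rw [par_rp, sub_eq_add_neg, par_add]
    have : par (-(gbase (par s.2)).2) = par s.2 := by
      generalize par s.2 = t
      revert t; decide
    rw [this]
    generalize par s.2 = t
    revert t; decide

lemma g_free (x y : Gam) (s : Sp (ZMod 4)) (h : x • s = y • s) : x = y := by
  rw [smul_def, smul_def, Prod.mk.injEq] at h
  obtain ⟨h1, h2⟩ := h
  have h1 := add_left_cancel h1
  have h2 := add_left_cancel h2
  rw [h1] at h2
  have h3 := congrArg (rp (s.1 + y.right.toAdd)) h2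
  rw [← rp_add, ← rp_add, add_neg_cancel, rp_zero, rp_zero] at h3
  have h4 := congrArg ji h3
  rw [ji_jj, ji_jj] at h4
  exact SemidirectProduct.ext h4 (Multiplicative.toAdd.injective h1)

lemma par_smul (g : Gam) (s : Sp (ZMod 4)) : par (g • s).2 = par s.2 := by
  rw [smul_def]
  rw [par_add, par_rp, par_jj, add_zero]

/-- functionals -/
def eD : (ℤ × ℤ) ≃+ (ZMod 2 → ℤ) where
  toFun p t := if t = 0 then p.1 else p.2
  invFun f := (f 0, f 1)
  left_inv p := by simp
  right_inv f := by
    funext t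
    fin_cases t <;> rfl
  map_add' p r := by
    funext t
    by_cases h : t = 0 <;> simp [h]

/-- The basic module. -/
noncomputable def EM : GM Gam := permGM (fun s : Sp (ZMod 4) => par s.2) gbase gγ eD gγ_spec par_smul
  (fun g s => g_free _ _ (gbase (par s.2)) (by
    rw [mul_smul, gγ_spec]
    have := gγ_spec (g • s)
    rwa [par_smul] at this)) par_gbase

/-- swap -/
def sw : (ℤ × ℤ) →+ (ℤ × ℤ) := AddMonoidHom.mk' (fun p => (p.2, p.1)) (fun _ _ => rfl)

/-- dual of translations -/
def dX (v : Fin 4 → ℤ) : (ℤ × ℤ) →+ (ℤ × ℤ) := if par v = 0 then AddMonoidHom.id _ else sw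

lemma eD_dX (v w φ) : eD (dX v φ) (par w) = eD φ (par (w + v)) := by
  rw [par_add, dX]
  generalize par w = t
  generalize par v = u
  fin_cases u <;> fin_cases t <;> rfl

/-- translation operators -/
noncomputable def XH (v : Fin 4 → ℤ) : GHom EM EM :=
  permHom (tr v) (fun g s => by
    rw [smul_def, smul_def, tr, tr]
    refine Prod.ext rfl ?_
    show s.2 + _ + v = s.2 + v + _
    abel) (dX v) (fun φ s => eD_dX v s.2 φ)

/-- rotation of the index set -/
def rot (s : Sp (ZMod 4)) : Sp (ZMod 4) := (s.1 - 1, rp 1 s.2)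

/-- rotation -/
noncomputable def rH : GHom EM EM :=
  permHom rot (fun g s => by
    rw [smul_def, smul_def, rot, rot]
    refine Prod.ext ?_ ?_
    · show s.1 + _ - 1 = s.1 - 1 + _
      abel
    · show rp 1 (s.2 + rp _ _) = rp 1 s.2 + rp (-(s.1 - 1 + _)) _
      rw [map_add, ← rp_add]
      congr 3; abel) (AddMonoidHom.id _) (fun φ s => by
      show _ = eD φ (par (rp 1 s.2))
      rw [par_rp]; rfl)

lemma XH_f (v) : (XH v).f = X v := rfl

/-- rotation operator -/
noncomputable def rr : (Sp (ZMod 4) →₀ ℤ) →+ (Sp (ZMod 4) →₀ ℤ) := T rot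

lemma rr_X (v x) : rr (X v x) = X (rp 1 v) (rr x) := by
  rw [rr, X, X, T_comp, T_comp]
  refine T_congr (θ := fun s => rot (tr v s)) (η := fun s => tr ((rp 1) v) (rot s))
    (fun s => Prod.ext rfl ?_) x
  show rp 1 (s.2 + v) = rp 1 s.2 + rp 1 v
  rw [map_add]

lemma rr4 (x) : rr (rr (rr (rr x))) = x := by
  simp only [rr, T_comp]
  refine T_id _ (fun s => Prod.ext ?_ ?_) x
  · show s.1 - 1 - 1 - 1 - 1 = s.1
    generalize s.1 = h
    revert h; decide
  · show rp 1 (rp 1 (rp 1 (rp 1 s.2))) = s.2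
    rw [← rp_add, ← rp_add, ← rp_add]
    exact rp_zero _

/-- slices -/
noncomputable def PP (h : ZMod 4) : (Sp (ZMod 4) →₀ ℤ) →+ (Sp (ZMod 4) →₀ ℤ) :=
  mkAdd fun s => if s.1 = h then Finsupp.single s 1 else 0

lemma PP_single (h : ZMod 4) (s) : PP h (Finsupp.single s 1)
    = if s.1 = h then Finsupp.single s 1 else 0 := mkAdd_single _ _

lemma PP_X (h v x) : PP h (X v x) = X v (PP h x) := by
  refine hom_ext (f := (PP h).comp (X v)) (g := (X v).comp (PP h)) (fun s => ?_) x
  rw [AddMonoidHom.comp_apply, X, T_single, AddMonoidHom.comp_apply, PP_single, PP_single]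
  by_cases hs : s.1 = h
  · rw [if_pos hs, T_single]; exact if_pos hs
  · rw [if_neg hs, map_zero]; exact if_neg hs

lemma PP_rr (h x) : PP h (rr x) = rr (PP (h + 1) x) := by
  refine hom_ext (f := (PP h).comp rr) (g := rr.comp (PP (h + 1))) (fun s => ?_) x
  rw [AddMonoidHom.comp_apply, rr, T_single, AddMonoidHom.comp_apply, PP_single, PP_single]
  by_cases hs : s.1 = h + 1
  · rw [if_pos hs, T_single, if_pos]; show s.1 - 1 = h; rw [hs]; abel
  · rw [if_neg hs, if_neg, map_zero]
    intro h'
    apply hs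
    rw [← h']; show s.1 = s.1 - 1 + 1; abel

lemma PP_PP (h x) : PP h (PP h x) = PP h x := by
  refine hom_ext (f := (PP h).comp (PP h)) (fun s => ?_) x
  rw [AddMonoidHom.comp_apply, PP_single]
  by_cases hs : s.1 = h
  · rw [if_pos hs, PP_single, if_pos hs]
  · rw [if_neg hs, map_zero]

lemma PP_PP0 (h h' x) (hh : h ≠ h') : PP h (PP h' x) = 0 := by
  refine hom_ext (f := (PP h).comp (PP h')) (g := 0) (fun s => ?_) x
  rw [AddMonoidHom.comp_apply, PP_single]
  by_cases hs : s.1 = h'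
  · rw [if_pos hs, PP_single, if_neg]; rfl
    rw [hs]; exact hh.symm
  · rw [if_neg hs, map_zero]; rfl

lemma PP_sum (x) : PP 0 x + PP 1 x + PP 2 x + PP 3 x = x := by
  refine hom_ext (f := PP 0 + PP 1 + PP 2 + PP 3) (g := AddMonoidHom.id _) (fun s => ?_) x
  simp only [AddMonoidHom.add_apply, PP_single, AddMonoidHom.id_apply]
  generalize Finsupp.single s (1 : ℤ) = z
  have : s.1 = 0 ∨ s.1 = 1 ∨ s.1 = 2 ∨ s.1 = 3 := by
    generalize s.1 = t
    revert t; decide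
  have d1 : (0 : ZMod 4) ≠ 1 := by decide
  have d2 : (0 : ZMod 4) ≠ 2 := by decide
  have d3 : (0 : ZMod 4) ≠ 3 := by decide
  have d4 : (1 : ZMod 4) ≠ 2 := by decide
  have d5 : (1 : ZMod 4) ≠ 3 := by decide
  have d6 : (2 : ZMod 4) ≠ 3 := by decide
  rcases this with h | h | h | h <;> rw [h] <;>
    simp [d1, d2, d3, d4, d5, d6, d1.symm, d2.symm, d3.symm, d4.symm, d5.symm, d6.symm]

end Cry


namespace Cry
set_option linter.unusedSimpArgs false

/-- antidiagonal map -/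
def GHom.anti {G : Type} [Group G] {A B C D : GM G} (g : GHom B C) (h : GHom A D) :
    GHom (A.prod B) (C.prod D) where
  f := (g.f.comp (AddMonoidHom.snd _ _)).prod (h.f.comp (AddMonoidHom.fst _ _))
  comm k x := Prod.ext (g.comm k x.2) (h.comm k x.1)
  dual := (h.dual.comp (AddMonoidHom.snd _ _)).prod (g.dual.comp (AddMonoidHom.fst _ _))
  ev_dual φ x := by
    show A.ev (h.dual φ.2) x.1 + B.ev (g.dual φ.1) x.2 = C.ev φ.1 (g.f x.2) + D.ev φ.2 (h.f x.1)
    rw [h.ev_dual, g.ev_dual, add_comm]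

/-- the underlying group -/
abbrev EE := Sp (ZMod 4) →₀ ℤ

/-- periodic column attached to a cyclic structure -/
def colOf {G : Type} [Group G] (M : GM G) (R : GHom M M) (c : Colm M.X) (h : c.R = R.f) : Cx G :=
  col M (R - GHom.id M) (GHom.id M + R + R.comp R + R.comp (R.comp R))
    (by intro x; have := c.RN x; rw [c.N_apply, h] at this; exact this)
    (by intro x; have := c.NR x; rw [c.N_apply, h] at this; exact this)
    (by intro x hx; have := c.kerR x; simp only [c.N_apply, h] at this; exact this hx)
    (by intro x hx; have := c.kerN x; simp only [c.N_apply, h] at this; exact this hx)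

/-- maps of columns -/
def colOfMap {G : Type} [Group G] {M M' : GM G} {R : GHom M M} {R' : GHom M' M'}
    {c : Colm M.X} {c' : Colm M'.X} (h : c.R = R.f) (h' : c'.R = R'.f) (g : GHom M M')
    (hg : ∀ x, R'.f (g.f x) = g.f (R.f x)) : CxHom (colOf M R c h) (colOf M' R' c' h') :=
  colMap _ _ _ _ _ _ _ _ g (fun x => by simp [hg]) (fun x => by simp [hg])

/-- twisted rotations -/
structure Tw where
  r : GHom EM EM
  f : EE →+ EE
  hf : f = r.f
  h4 : ∀ x, f (f (f (f x))) = x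
  hX : ∀ v x, f (X v x) = X (rp 1 v) (f x)
  hP : ∀ h x, PP h (f x) = f (PP (h + 1) x)

lemma rp_e0 : rp 1 (ev 0) = ev 1 := by decide
lemma rp_e1 : rp 1 (ev 1) = - ev 0 := by decide
lemma rp_e2 : rp 1 (ev 2) = ev 2 := by decide
lemma rp_e3 : rp 1 (ev 3) = - ev 3 := by decide

lemma X_neg (v) (x : EE) : X (-v) (X v x) = x := by rw [X_X, add_neg_cancel, X_zero]
lemma X_neg' (v) (x : EE) : X v (X (-v) x) = x := by rw [X_X, neg_add_cancel, X_zero]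

namespace Tw
variable (t : Tw)

lemma f0 (x) : t.f (X (ev 0) x) = X (ev 1) (t.f x) := by rw [t.hX, rp_e0]
lemma f1 (x) : t.f (X (ev 1) x) = X (-ev 0) (t.f x) := by rw [t.hX, rp_e1]
lemma f0' (x) : t.f (X (-ev 0) x) = X (-ev 1) (t.f x) := by rw [t.hX, map_neg, rp_e0]
lemma f1' (x) : t.f (X (-ev 1) x) = X (ev 0) (t.f x) := by rw [t.hX, map_neg, rp_e1, neg_neg]
lemma f2 (x) : t.f (X (ev 2) x) = X (ev 2) (t.f x) := by rw [t.hX, rp_e2]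

/-- column 0 -/
noncomputable def c0 : Colm EE where
  R := t.f
  P := PP
  R4 := t.h4
  RP := t.hP
  PP := PP_PP
  PP0 := PP_PP0
  sum := PP_sum

/-- column 2 -/
noncomputable def c2 : Colm EE where
  R := (X (-ev 0)).comp t.f
  P := PP
  R4 x := by
    simp only [AddMonoidHom.comp_apply, f0', f1', f0, t.h4]
    simp only [X_X]
    refine Eq.trans (congrArg (fun v => X v x) ?_) (X_zero x)
    abel
  RP h x := by
    rw [AddMonoidHom.comp_apply, PP_X, t.hP]; rfl
  PP := PP_PP
  PP0 := PP_PP0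
  sum := PP_sum

/-- column 1 -/
noncomputable def c1 : Colm (EE × EE) where
  R := ((-((X (-ev 0)).comp t.f)).comp (AddMonoidHom.snd _ _)).prod (t.f.comp (AddMonoidHom.fst _ _))
  P h := (PP h).prodMap (PP h)
  R4 x := by
    refine Prod.ext ?_ ?_
    · simp [f0', f1', t.h4, X_neg]
    · simp [f0', f1', t.h4, X_neg, X_neg']
  RP h x := by
    refine Prod.ext ?_ ?_
    · simp [PP_X, t.hP]
    · simp [PP_X, t.hP]
  PP h x := Prod.ext (PP_PP h x.1) (PP_PP h x.2)
  PP0 h h' x hh := Prod.ext (PP_PP0 h h' x.1 hh) (PP_PP0 h h' x.2 hh)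
  sum x := Prod.ext (PP_sum x.1) (PP_sum x.2)

/-- Koszul differential -/
noncomputable def d1 (y : EE × EE) : EE := (X (ev 0) y.1 - y.1) + (X (ev 1) y.2 - y.2)

/-- Koszul differential -/
noncomputable def d2 (y : EE) : EE × EE := (-(X (ev 1) y - y), X (ev 0) y - y)

lemma R1d2 (y : EE) : t.c1.R (d2 y) = d2 (t.c2.R y) := by
  refine Prod.ext ?_ ?_
  · show -(X (-ev 0) (t.f (X (ev 0) y - y))) = -(X (ev 1) (X (-ev 0) (t.f y)) - X (-ev 0) (t.f y))
    rw [map_sub, map_sub, f0, X_comm (ev 1)]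
  · show t.f (-(X (ev 1) y - y)) = X (ev 0) (X (-ev 0) (t.f y)) - X (-ev 0) (t.f y)
    rw [map_neg, map_sub, f1, X_neg']; abel

lemma R0d1 (y : EE × EE) : t.c0.R (d1 y) = d1 (t.c1.R y) := by
  show t.f ((X (ev 0) y.1 - y.1) + (X (ev 1) y.2 - y.2)) =
    (X (ev 0) (-(X (-ev 0) (t.f y.2))) - (-(X (-ev 0) (t.f y.2)))) + (X (ev 1) (t.f y.1) - t.f y.1)
  simp only [map_add, map_sub, map_neg, f0, f1, X_neg']; abel

lemma d1_add (x y) : d1 (x + y) = d1 x + d1 y := by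
  simp only [d1, Prod.fst_add, Prod.snd_add, map_add]; abel
lemma d2_add (x y) : d2 (x + y) = d2 x + d2 y := by
  simp only [d2, map_add, Prod.mk_add_mk]; congr 1 <;> abel

lemma d1d2 (y) : d1 (d2 y) = 0 := by
  simp only [d1, d2, map_neg, map_sub, X_comm (ev 1) (ev 0)]; abel

lemma Nd2 (y : EE) : t.c1.N (d2 y) = d2 (t.c2.N y) := by
  simp only [Colm.N_apply, R1d2, d2_add]
lemma Nd1 (y : EE × EE) : t.c0.N (d1 y) = d1 (t.c1.N y) := by
  simp only [Colm.N_apply, R0d1, d1_add]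

lemma Pd1 (h y) : PP h (d1 y) = d1 (PP h y.1, PP h y.2) := by
  simp only [d1, map_add, map_sub, PP_X]
lemma Pd2 (h y) : d2 (PP h y) = (PP h (d2 y).1, PP h (d2 y).2) := by
  simp only [d2, map_neg, map_sub, PP_X]

lemma L2 (y : EE) (h : ∃ z, t.c1.R z - z = d2 y) : ∃ w, t.c2.R w - w = y := by
  obtain ⟨z, h⟩ := h
  have h1 := t.c1.NR z
  rw [h, Nd2] at h1
  exact t.c2.kerN y (X_inj 0 _ (congrArg Prod.snd h1))

lemma L1 (y : EE × EE) (h : ∃ z, t.c0.R z - z = d1 y) :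
    ∃ w : (EE × EE) × EE, t.c1.R w.1 - w.1 + d2 w.2 = y := by
  obtain ⟨z, h⟩ := h
  have h1 := t.c0.NR z
  rw [h, Nd1] at h1
  obtain ⟨s, hs, hs'⟩ := koszul 0 1 (by decide) _ _ h1
  have hs2 : t.c1.N y = d2 s := Prod.ext hs hs'
  obtain ⟨u, hu⟩ := t.c1.kerQ (y - d2 (PP 0 s)) (by
    rw [map_sub, map_sub, Nd2, hs2, sub_eq_zero]
    show (PP 0 (d2 s).1, PP 0 (d2 s).2) 
      = (PP 0 (d2 (t.c2.N (PP 0 s))).1, PP 0 (d2 (t.c2.N (PP 0 s))).2)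
    rw [← Pd2, ← Pd2, show PP 0 (t.c2.N (PP 0 s)) = PP 0 s from t.c2.QP s])
  exact ⟨(u, PP 0 s), by rw [hu, sub_add_cancel]⟩

lemma Q1 (s : EE × EE) : d1 (t.c1.P 0 (t.c1.N (t.c1.P 0 s))) = d1 (t.c1.P 0 s) := by
  rw [t.c1.QP]

lemma PN1 (s : EE × EE) : PP 0 (d1 s) = d1 (t.c1.P 0 s) := Pd1 0 s

lemma L3 (t t' : Tw) (ht : ∀ x, t.f (X (ev 3) x - x) = X (ev 3) (t'.f x) - t'.f x)
    (y : EE) (h : ∃ z : EE × (EE × EE), t.c0.R z.1 - z.1 + d1 z.2 = X (ev 3) y - y) :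
    ∃ z : EE × (EE × EE), t'.c0.R z.1 - z.1 + d1 z.2 = y := by
  obtain ⟨z, h⟩ := h
  have hN : t.c0.N (X (ev 3) y - y) = X (ev 3) (t'.c0.N y) - t'.c0.N y := by
    have ht2 : ∀ x, t.c0.R (X (ev 3) x - x) = X (ev 3) (t'.c0.R x) - t'.c0.R x := ht
    simp only [Colm.N_apply, ht2, map_add]; abel
  have h1 := congrArg t.c0.N h
  rw [hN, map_add, t.c0.NR, zero_add, Nd1] at h1
  obtain ⟨s, s', hs⟩ := reg2 0 1 3 (by decide) (by decide) (by decide) _ _ _ h1.symm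
  replace hs : t'.c0.N y = d1 (s, s') := hs
  obtain ⟨u, hu⟩ := t'.c0.kerQ (y - d1 (t'.c1.P 0 (s, s'))) (by
    rw [map_sub, map_sub, Nd1, hs]
    show PP 0 _ - PP 0 _ = 0
    rw [PN1 t', PN1 t', Q1, sub_self])
  exact ⟨(u, t'.c1.P 0 (s, s')), by rw [hu, sub_add_cancel]⟩

lemma L45 (t t' : Tw) (ht : ∀ x, t.f (X (ev 3) x - x) = X (ev 3) (t'.f x) - t'.f x)
    (y s s' r : EE) (h : PP 0 (t.c0.N y) = d1 (s, s') + (X (ev 3) r - r)) :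
    ∃ z : (EE × (EE × EE)) × EE, t.c0.R z.1.1 - z.1.1 + d1 z.1.2 + (X (ev 3) z.2 - z.2) = y := by
  have hN : ∀ y, t.c0.N (X (ev 3) y - y) = X (ev 3) (t'.c0.N y) - t'.c0.N y := fun y => by
    have ht2 : ∀ x, t.c0.R (X (ev 3) x - x) = X (ev 3) (t'.c0.R x) - t'.c0.R x := ht
    simp only [Colm.N_apply, ht2, map_add]; abel
  obtain ⟨u, hu⟩ := t.c0.kerQ (y - d1 (t.c1.P 0 (s, s')) - (X (ev 3) (PP 0 r) - PP 0 r)) (by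
    rw [map_sub, map_sub, map_sub, map_sub, Nd1, hN]
    show PP 0 _ - PP 0 _ - PP 0 _ = 0
    rw [PN1 t, Q1, map_sub, PP_X, show PP 0 (t'.c0.N (PP 0 r)) = PP 0 r from t'.c0.QP r]
    have h' := congrArg (PP 0) h
    rw [PP_PP] at h'
    rw [← PN1, ← PP_X, h', map_add, map_sub (PP 0) _ r]
    abel)
  exact ⟨((u, t.c1.P 0 (s, s')), PP 0 r), by rw [hu]; abel⟩

lemma L4 (t t' : Tw) (ht : ∀ x, t.f (X (ev 3) x - x) = X (ev 3) (t'.f x) - t'.f x) (y : EE)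
    (h : ∃ z : (EE × (EE × EE)) × EE,
      t.c0.R z.1.1 - z.1.1 + d1 z.1.2 + (X (ev 3) z.2 - z.2) = X (ev 2) y - y) :
    ∃ z : (EE × (EE × EE)) × EE, t.c0.R z.1.1 - z.1.1 + d1 z.1.2 + (X (ev 3) z.2 - z.2) = y := by
  obtain ⟨z, h⟩ := h
  have hN : ∀ y, t.c0.N (X (ev 3) y - y) = X (ev 3) (t'.c0.N y) - t'.c0.N y := fun y => by
    have ht2 : ∀ x, t.c0.R (X (ev 3) x - x) = X (ev 3) (t'.c0.R x) - t'.c0.R x := ht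
    simp only [Colm.N_apply, ht2, map_add]; abel
  have hN2 : ∀ y, t.c0.N (X (ev 2) y - y) = X (ev 2) (t.c0.N y) - t.c0.N y := fun y => by
    have ht2 : ∀ x, t.c0.R (X (ev 2) x - x) = X (ev 2) (t.c0.R x) - t.c0.R x := fun x => by
      show t.f _ = X _ (t.f _) - t.f _
      rw [map_sub, f2]
    simp only [Colm.N_apply, ht2, map_add]; abel
  have h1 := congrArg t.c0.N h
  rw [hN2, map_add, map_add, t.c0.NR, zero_add, Nd1, hN] at h1
  replace h1 := congrArg (PP 0) h1
  rw [map_add, map_sub, map_sub, PP_X, PP_X, Pd1] at h1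
  obtain ⟨s, s', r, hs⟩ := reg3 0 1 3 2 (by decide) (by decide) (by decide) (by decide) (by decide)
    (by decide) _ _ _ _ h1.symm
  exact L45 t t' ht y s s' r hs

end Tw
end Cry


namespace Cry
set_option linter.unusedSimpArgs false

/-- `X_v - 1` -/
noncomputable abbrev XI (v : Fin 4 → ℤ) : GHom EM EM := XH v - GHom.id EM

namespace Tw
variable (t : Tw)

/-- rotation in column one -/
noncomputable def r1 : GHom (EM.prod EM) (EM.prod EM) := GHom.anti (-((XH (-ev 0)).comp t.r)) t.r
/-- rotation in column two -/
noncomputable def r2 : GHom EM EM := (XH (-ev 0)).comp t.r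

lemma r1_eq : t.c1.R = t.r1.f := by
  obtain ⟨r, f, rfl, _, _, _⟩ := t; rfl
lemma r2_eq : t.c2.R = t.r2.f := by
  obtain ⟨r, f, rfl, _, _, _⟩ := t; rfl
lemma r1_eq' (x : EE × EE) : t.r1.f x = t.c1.R x := (congrArg (fun h : EE × EE →+ EE × EE => h x) t.r1_eq).symm
lemma r2_eq' (x : EE) : t.r2.f x = t.c2.R x := (congrArg (fun h : EE →+ EE => h x) t.r2_eq).symm
lemma r_eq' (x : EE) : t.r.f x = t.f x := (congrArg (fun h : EE →+ EE => h x) t.hf).symm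

/-- column -/
noncomputable def k0 : Cx Gam := colOf EM t.r t.c0 t.hf
/-- column -/
noncomputable def k1 : Cx Gam := colOf (EM.prod EM) t.r1 t.c1 t.r1_eq
/-- column -/
noncomputable def k2 : Cx Gam := colOf EM t.r2 t.c2 t.r2_eq

/-- Koszul differential -/
noncomputable def D2 : GHom EM (EM.prod EM) := GHom.pair (-(XI (ev 1))) (XI (ev 0))
/-- Koszul differential -/
noncomputable def D1 : GHom (EM.prod EM) EM := GHom.copair (XI (ev 0)) (XI (ev 1))

/-- map of columns -/
noncomputable def m2 : CxHom t.k2 t.k1 := colOfMap t.r2_eq t.r1_eq D2 (fun x =>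
  (t.r1_eq' _).trans ((t.R1d2 x).trans (congrArg d2 (t.r2_eq' x)).symm))
/-- map of columns -/
noncomputable def m1 : CxHom t.k1 t.k0 := colOfMap t.r1_eq t.hf D1 (fun x =>
  (t.r_eq' _).trans ((t.R0d1 x).trans (congrArg d1 (t.r1_eq' x)).symm))

lemma i2 : ∀ y, (∃ z, (t.k1.d 0).f z = (t.m2.f 0).f y) → ∃ w, (t.k2.d 0).f w = y := by
  intro y ⟨z, hz⟩
  obtain ⟨w, hw⟩ := t.L2 y ⟨z, (congrArg (· - z) (t.r1_eq' z)).symm.trans hz⟩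
  exact ⟨w, (congrArg (· - w) (t.r2_eq' w)).trans hw⟩

/-- first cone -/
noncomputable def K2 : Cx Gam := cone t.m2 t.i2

/-- map from the first cone -/
noncomputable def mm : CxHom t.K2 t.k0 := coneDesc t.i2 t.m1 (fun _ x => d1d2 x)

lemma i1 : ∀ y, (∃ z, (t.k0.d 0).f z = (t.mm.f 0).f y) → ∃ w, (t.K2.d 0).f w = y := by
  intro y ⟨z, hz⟩
  obtain ⟨w, hw⟩ := t.L1 y ⟨z, (congrArg (· - z) (t.r_eq' z)).symm.trans hz⟩
  exact ⟨w, (congrArg (· - w.1 + d2 w.2) (t.r1_eq' w.1)).trans hw⟩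

/-- The complex for three of the four directions. -/
noncomputable def F : Cx Gam := cone t.mm t.i1

lemma F_d (z : EE × (EE × EE)) : (t.F.d 0).f z = t.c0.R z.1 - z.1 + d1 z.2 :=
  congrArg (· - z.1 + d1 z.2) (t.r_eq' z.1)

section Fmap

/-- map of columns -/
noncomputable def g0 (t t' : Tw) (g : GHom EM EM)
    (hr : ∀ x : EE, t.f (g.f x) = g.f (t'.f x)) : CxHom t'.k0 t.k0 := colOfMap t'.hf t.hf g (fun x =>
  (t.r_eq' _).trans ((hr x).trans (congrArg g.f (t'.r_eq' x)).symm))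

lemma g1_aux (t t' : Tw) (g : EE →+ EE) (hX : ∀ v (x : EE), g (X v x) = X v (g x))
    (hr : ∀ x : EE, t.f (g x) = g (t'.f x)) (x : EE × EE) : t.c1.R (g x.1, g x.2) =
    (g (t'.c1.R x).1, g (t'.c1.R x).2) := by
  refine Prod.ext ?_ (hr x.1)
  show -(X (-ev 0) (t.f (g x.2))) = g (-(X (-ev 0) (t'.f x.2)))
  rw [hr, map_neg, hX]

lemma g2_aux (t t' : Tw) (g : EE →+ EE) (hX : ∀ v (x : EE), g (X v x) = X v (g x))
    (hr : ∀ x : EE, t.f (g x) = g (t'.f x)) (x : EE) : t.c2.R (g x) = g (t'.c2.R x) := by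
  show (X (-ev 0) (t.f (g x))) = g ((X (-ev 0) (t'.f x)))
  rw [hr, hX]

/-- map of columns -/
noncomputable def g1 (t t' : Tw) (g : GHom EM EM) (hX : ∀ v (x : EE), g.f (X v x) = X v (g.f x))
    (hr : ∀ x : EE, t.f (g.f x) = g.f (t'.f x)) :
    CxHom t'.k1 t.k1 := colOfMap t'.r1_eq t.r1_eq (GHom.pmap g g) (fun x =>
  (t.r1_eq' _).trans ((g1_aux t t' g.f hX hr x).trans (congrArg (GHom.pmap g g).f (t'.r1_eq' x)).symm))

/-- map of columns -/
noncomputable def g2 (t t' : Tw) (g : GHom EM EM) (hX : ∀ v (x : EE), g.f (X v x) = X v (g.f x))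
    (hr : ∀ x : EE, t.f (g.f x) = g.f (t'.f x)) : CxHom t'.k2 t.k2 :=
  colOfMap t'.r2_eq t.r2_eq g (fun x =>
  (t.r2_eq' _).trans ((g2_aux t t' g.f hX hr x).trans (congrArg g.f (t'.r2_eq' x)).symm))

lemma gd2 (g : EE →+ EE) (hX : ∀ v (x : EE), g (X v x) = X v (g x)) (x : EE) :
    d2 (g x) = (g (d2 x).1, g (d2 x).2) := by
  refine Prod.ext ?_ ?_
  · show -(X (ev 1) (g x) - g x) = g (-(X (ev 1) x - x))
    rw [map_neg, map_sub, hX]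
  · show X (ev 0) (g x) - g x = g (X (ev 0) x - x)
    rw [map_sub, hX]

lemma gd1 (g : EE →+ EE) (hX : ∀ v (x : EE), g (X v x) = X v (g x)) (x : EE × EE) :
    d1 (g x.1, g x.2) = g (d1 x) := by
  show (X (ev 0) (g x.1) - g x.1) + (X (ev 1) (g x.2) - g x.2) =
    g ((X (ev 0) x.1 - x.1) + (X (ev 1) x.2 - x.2))
  rw [map_add, map_sub, map_sub, hX, hX]

lemma gd1' (g : EE →+ EE) (hX : ∀ v (x : EE), g (X v x) = X v (g x)) (x : EE × EE) :
    d1 (g x.1, g x.2) + 0 = g (d1 x + 0) := by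
  rw [add_zero, add_zero, gd1 g hX]

/-- map of cones -/
noncomputable def G2 (t t' : Tw) (g : GHom EM EM) (hX : ∀ v (x : EE), g.f (X v x) = X v (g.f x))
    (hr : ∀ x : EE, t.f (g.f x) = g.f (t'.f x)) : CxHom t'.K2 t.K2 :=
  coneMap t'.i2 t.i2 (g2 t t' g hX hr) (g1 t t' g hX hr) (fun _ x => gd2 g.f hX x)

/-- map of cones -/
noncomputable def Fmap (t t' : Tw) (g : GHom EM EM) (hX : ∀ v (x : EE), g.f (X v x) = X v (g.f x))
    (hr : ∀ x : EE, t.f (g.f x) = g.f (t'.f x)) : CxHom t'.F t.F :=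
  coneMap t'.i1 t.i1 (G2 t t' g hX hr) (g0 t t' g hr)
  (fun n => match n with
    | 0 => fun x => gd1 g.f hX x
    | _ + 1 => fun x => gd1' g.f hX x.1)

end Fmap

lemma Fmap_comm (a b c d : Tw) (g h g' h' : GHom EM EM) (hX hr hX' hr' hXc hrc hXd hrd)
    (e : ∀ x, g.f (h.f x) = g'.f (h'.f x)) (n) (x) :
    ((Fmap a b g hX hr).f n).f (((Fmap b c h hX' hr').f n).f x) =
    ((Fmap a d g' hXc hrc).f n).f (((Fmap d c h' hXd hrd).f n).f x) := by
  rcases n with _ | _ | n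
  · exact e x
  · exact Prod.ext (e x.1) (Prod.ext (e x.2.1) (e x.2.2))
  · exact Prod.ext (e x.1) (Prod.ext (Prod.ext (e x.2.1.1) (e x.2.1.2)) (e x.2.2))

end Tw

/-- the untwisted rotation -/
noncomputable def tA : Tw where
  r := rH
  f := rr
  hf := rfl
  h4 := rr4
  hX := rr_X
  hP := PP_rr

lemma rp_neg3 : rp 1 (-ev 3) = ev 3 := by decide

/-- the twisted rotation -/
noncomputable def tB : Tw where
  r := -((XH (-ev 3)).comp rH)
  f := -((X (-ev 3)).comp rr)
  hf := rfl
  h4 x := by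
    simp only [AddMonoidHom.neg_apply, AddMonoidHom.comp_apply, map_neg, rr_X, rr4, map_neg, rp_neg3,
      rp_e3, X_neg, X_neg', neg_neg]
  hX v x := by
    simp only [AddMonoidHom.neg_apply, AddMonoidHom.comp_apply, map_neg, rr_X]
    rw [X_comm]
  hP h x := by
    simp only [AddMonoidHom.neg_apply, AddMonoidHom.comp_apply, map_neg, PP_X, PP_rr]

lemma tAB (x : EE) : tA.f (X (ev 3) x - x) = X (ev 3) (tB.f x) - tB.f x := by
  show rr (X (ev 3) x - x) = X (ev 3) (-(X (-ev 3) (rr x))) - -(X (-ev 3) (rr x))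
  rw [map_sub, rr_X, rp_e3, map_neg, X_neg']; abel

lemma XI_X (v w : Fin 4 → ℤ) (x : EE) : (XI v).f (X w x) = X w ((XI v).f x) := by
  show X v (X w x) - X w x = X w (X v x - x)
  rw [map_sub, X_comm]

lemma XI_t (t : Tw) (x : EE) : t.f ((XI (ev 2)).f x) = (XI (ev 2)).f (t.f x) := by
  show t.f (X (ev 2) x - x) = X (ev 2) (t.f x) - t.f x
  rw [map_sub, t.f2]

/-- map -/
noncomputable def phiM : CxHom tB.F tA.F := Tw.Fmap tA tB (XI (ev 3)) (XI_X _) tAB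

lemma iM : ∀ y, (∃ z, (tA.F.d 0).f z = (phiM.f 0).f y) → ∃ w, (tB.F.d 0).f w = y := by
  intro y ⟨z, hz⟩
  obtain ⟨w, hw⟩ := Tw.L3 tA tB tAB y ⟨z, (tA.F_d z).symm.trans hz⟩
  exact ⟨w, (tB.F_d w).trans hw⟩

/-- cone -/
noncomputable def KM : Cx Gam := cone phiM iM

lemma KM_d (z : (EE × (EE × EE)) × EE) : (KM.d 0).f z =
    tA.c0.R z.1.1 - z.1.1 + Tw.d1 z.1.2 + (X (ev 3) z.2 - z.2) :=
  congrArg (· + (X (ev 3) z.2 - z.2)) (tA.F_d z.1)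

lemma XI_XI (x : EE) : X (ev 3) (X (ev 2) x - x) - (X (ev 2) x - x) =
    X (ev 2) (X (ev 3) x - x) - (X (ev 3) x - x) := by
  rw [map_sub, map_sub, X_comm (ev 3)]; abel

/-- map -/
noncomputable def phiC : CxHom KM KM := coneMap iM iM
  (Tw.Fmap tB tB (XI (ev 2)) (XI_X _) (XI_t tB)) (Tw.Fmap tA tA (XI (ev 2)) (XI_X _) (XI_t tA))
  (fun n x => Tw.Fmap_comm tA tB tB tA _ _ _ _ _ _ _ _ _ _ _ _ (fun x => XI_XI x) n x)

lemma iC : ∀ y, (∃ z, (KM.d 0).f z = (phiC.f 0).f y) → ∃ w, (KM.d 0).f w = y := by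
  intro y ⟨z, hz⟩
  obtain ⟨w, hw⟩ := Tw.L4 tA tB tAB y ⟨z, (KM_d z).symm.trans hz⟩
  exact ⟨w, (KM_d w).trans hw⟩

/-- The total complex. -/
noncomputable def KT : Cx Gam := cone phiC iC

lemma KT_d (z : ((EE × (EE × EE)) × EE) × EE) : (KT.d 0).f z =
    tA.c0.R z.1.1.1 - z.1.1.1 + Tw.d1 z.1.1.2 + (X (ev 3) z.1.2 - z.1.2) + (X (ev 2) z.2 - z.2) :=
  congrArg (· + (X (ev 2) z.2 - z.2)) (KM_d z.1)

lemma eps_X (v : Fin 4 → ℤ) (x : EE) : eps (X v x) = eps x := eps_T _ _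
lemma eps_rr (x : EE) : eps (rr x) = eps x := eps_T _ _

lemma T0_P (x : EE) : T (fun s => (s.1, 0)) (PP 0 x) = eps (PP 0 x) • Finsupp.single ((0 : ZMod 4), (0 : Fin 4 → ℤ)) (1 : ℤ) := by
  refine hom_ext (f := (T (fun s => (s.1, 0))).comp (PP 0)) 
    (g := ((zmultiplesHom EE) (Finsupp.single ((0 : ZMod 4), (0 : Fin 4 → ℤ)) (1 : ℤ))).comp (eps.comp (PP 0))) (fun s => ?_) x
  simp only [AddMonoidHom.comp_apply, PP_single]
  by_cases hs : s.1 = 0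
  · rw [if_pos hs, T_single, hs, eps, mkAdd_single]; simp
  · rw [if_neg hs]; simp

lemma eps_Q (x : EE) : eps (PP 0 (tA.c0.N x)) = eps x := by
  have h : ∀ y, tA.c0.R y = rr y := fun _ => rfl
  have p0 := tA.c0.p0
  have p1 := tA.c0.p1
  have p2 := tA.c0.p2
  simp only [h] at p0 p1 p2
  simp only [Colm.N_apply, h, map_add]
  rw [show ∀ y, PP 0 (rr y) = rr (PP 1 y) from p0, show ∀ y, PP 0 (rr y) = rr (PP 1 y) from p0,
    show ∀ y, PP 0 (rr y) = rr (PP 1 y) from p0,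
    show ∀ y, PP 1 (rr y) = rr (PP 2 y) from p1, show ∀ y, PP 1 (rr y) = rr (PP 2 y) from p1,
    show ∀ y, PP 2 (rr y) = rr (PP 3 y) from p2]
  simp only [eps_rr, ← map_add]
  rw [PP_sum]

lemma L5 (y : EE) (h : eps y = 0) : ∃ z : ((EE × (EE × EE)) × EE) × EE, (KT.d 0).f z = y := by
  obtain ⟨t0, t1, t2, t3, ht⟩ := q_all (PP 0 (tA.c0.N y))
  rw [q_all_eq, T0_P, eps_Q, h, zero_smul, zero_add] at ht
  have hN2 : ∀ y, tA.c0.N (X (ev 2) y - y) = X (ev 2) (tA.c0.N y) - tA.c0.N y := fun y => by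
    have ht2 : ∀ x, tA.c0.R (X (ev 2) x - x) = X (ev 2) (tA.c0.R x) - tA.c0.R x := fun x => by
      show tA.f _ = X _ (tA.f _) - tA.f _
      rw [map_sub, Tw.f2]
    simp only [Colm.N_apply, ht2, map_add]; abel
  obtain ⟨z, hz⟩ := Tw.L45 tA tB tAB (y - (X (ev 2) (PP 0 t2) - PP 0 t2)) (PP 0 t0) (PP 0 t1) (PP 0 t3) (by
    rw [map_sub, map_sub, hN2, ← PP_PP, ht, map_sub (PP 0), PP_X,
      show PP 0 (tA.c0.N (PP 0 t2)) = PP 0 t2 from tA.c0.QP t2]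
    simp only [Tw.d1, map_add, map_sub, PP_X]
    abel)
  exact ⟨(z, PP 0 t2), (KT_d _).trans (by
    show _ + (X (ev 2) (PP 0 t2) - PP 0 t2) = y
    rw [hz, sub_add_cancel])⟩

/-- augmentation -/
noncomputable def augT : Aug KT where
  ε := (eps : EE →+ ℤ)
  inv g x := eps_T _ x
  surj n := ⟨(Finsupp.single ((0 : ZMod 4), (0 : Fin 4 → ℤ)) n : EE), by
    show eps (Finsupp.single ((0 : ZMod 4), (0 : Fin 4 → ℤ)) n) = n
    simp [eps, mkAdd]⟩
  zero y := by
    refine (congrArg eps (KT_d y)).trans ?_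
    simp only [Tw.d1, map_add, map_sub, eps_X]
    rw [show ∀ x, tA.c0.R x = rr x from fun _ => rfl, eps_rr]
    simp
  ex x hx := L5 x hx

end Cry


namespace Cry
set_option linter.unusedSimpArgs false

/-- the dual of `EM` -/
abbrev PZ := ℤ × ℤ

/-- swap minus one -/
def dl (p : PZ) : PZ := (p.2 - p.1, p.1 - p.2)

lemma dX_e0 (p : PZ) : dX (ev 0) p = (p.2, p.1) := by
  have : par (ev 0) ≠ 0 := by decide
  rw [dX, if_neg this]; rfl
lemma dX_n0 (p : PZ) : dX (-ev 0) p = (p.2, p.1) := by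
  have : par (-ev 0) ≠ 0 := by decide
  rw [dX, if_neg this]; rfl
lemma dX_e1 (p : PZ) : dX (ev 1) p = (p.2, p.1) := by
  have : par (ev 1) ≠ 0 := by decide
  rw [dX, if_neg this]; rfl
lemma dX_e2 (p : PZ) : dX (ev 2) p = (p.2, p.1) := by
  have : par (ev 2) ≠ 0 := by decide
  rw [dX, if_neg this]; rfl
lemma dX_e3 (p : PZ) : dX (ev 3) p = p := by
  have : par (ev 3) = 0 := by decide
  rw [dX, if_pos this]; rfl
lemma dX_n3 (p : PZ) : dX (-ev 3) p = p := by
  have : par (-ev 3) = 0 := by decide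
  rw [dX, if_pos this]; rfl

lemma XI0 (p : PZ) : (XI (ev 0)).dual p = dl p := (congrArg (· - p) (dX_e0 p)).trans rfl
lemma XI1 (p : PZ) : (XI (ev 1)).dual p = dl p := (congrArg (· - p) (dX_e1 p)).trans rfl
lemma XI2 (p : PZ) : (XI (ev 2)).dual p = dl p := (congrArg (· - p) (dX_e2 p)).trans rfl
lemma XI3 (p : PZ) : (XI (ev 3)).dual p = 0 := (congrArg (· - p) (dX_e3 p)).trans (sub_self p)

lemma tA_dual (p : PZ) : tA.r.dual p = ((1 : ℤ) * p.1, (1 : ℤ) * p.2) := by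
  rw [one_mul, one_mul]; rfl
lemma tB_dual (p : PZ) : tB.r.dual p = ((-1 : ℤ) * p.1, (-1 : ℤ) * p.2) := by
  refine (congrArg (fun q : PZ => - q) (dX_n3 p)).trans ?_
  refine Prod.ext ?_ ?_ <;> simp

/-- formula -/
def K0e (s : ℤ) (p : PZ) : PZ := (s * p.1 - p.1, s * p.2 - p.2)
/-- formula -/
def K0o (s : ℤ) (p : PZ) : PZ := (2 * p.1 + 2 * s * p.1, 2 * p.2 + 2 * s * p.2)
/-- formula -/
def K2e (s : ℤ) (p : PZ) : PZ := (s * p.2 - p.1, s * p.1 - p.2)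
/-- formula -/
def K2o (s : ℤ) (p : PZ) : PZ := (2 * p.1 + 2 * s * p.2, 2 * p.2 + 2 * s * p.1)
/-- formula -/
def K1e (s : ℤ) (x : PZ × PZ) : PZ × PZ :=
  ((s * x.2.1 - x.1.1, s * x.2.2 - x.1.2), (- (s * x.1.2) - x.2.1, -(s * x.1.1) - x.2.2))
/-- formula -/
def K1o (s : ℤ) (x : PZ × PZ) : PZ × PZ :=
  ((x.1.1 + s * x.2.1 - x.1.2 - s * x.2.2, x.1.2 + s * x.2.2 - x.1.1 - s * x.2.1), 
   (x.2.1 - s * x.1.2 - x.2.2 + s * x.1.1, x.2.2 - s * x.1.1 - x.2.1 + s * x.1.2))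
/-- formula -/
def M2 (x : PZ × PZ) : PZ := (-(x.1.2 - x.1.1) + (x.2.2 - x.2.1), -(x.1.1 - x.1.2) + (x.2.1 - x.2.2))

namespace Tw
variable {t : Tw} {s : ℤ}

lemma k0e (h : ∀ p : PZ, t.r.dual p = (s * p.1, s * p.2)) (p : PZ) :
    (t.r - GHom.id EM).dual p = K0e s p := (congrArg (· - p) (h p)).trans rfl

lemma k0o (hs : s * s = 1) (h : ∀ p : PZ, t.r.dual p = (s * p.1, s * p.2)) (p : PZ) :
    (GHom.id EM + t.r + t.r.comp t.r + t.r.comp (t.r.comp t.r)).dual p = K0o s p := by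
  have h2 : t.r.dual (t.r.dual p) = p := by
    refine (congrArg t.r.dual (h p)).trans ((h _).trans ?_)
    refine Prod.ext ?_ ?_
    · show s * (s * p.1) = p.1
      rw [← mul_assoc, hs, one_mul]
    · show s * (s * p.2) = p.2
      rw [← mul_assoc, hs, one_mul]
  have : ∀ (u v w : PZ), u = (s * p.1, s * p.2) → v = p → w = u → p + u + v + w = K0o s p := by
    rintro u v w rfl rfl rfl
    refine Prod.ext ?_ ?_
    · show v.1 + s * v.1 + v.1 + s * v.1 = 2 * v.1 + 2 * s * v.1
      ring
    · show v.2 + s * v.2 + v.2 + s * v.2 = 2 * v.2 + 2 * s * v.2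
      ring
  exact this _ _ _ (h p) h2 (congrArg t.r.dual h2)

lemma r2d (h : ∀ p : PZ, t.r.dual p = (s * p.1, s * p.2)) (p : PZ) :
    t.r2.dual p = (s * p.2, s * p.1) := by
  exact (congrArg t.r.dual (dX_n0 p)).trans (h _)

lemma k2e (h : ∀ p : PZ, t.r.dual p = (s * p.1, s * p.2)) (p : PZ) :
    (t.r2 - GHom.id EM).dual p = K2e s p := (congrArg (· - p) (r2d h p)).trans rfl

lemma k2o (hs : s * s = 1) (h : ∀ p : PZ, t.r.dual p = (s * p.1, s * p.2)) (p : PZ) :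
    (GHom.id EM + t.r2 + t.r2.comp t.r2 + t.r2.comp (t.r2.comp t.r2)).dual p = K2o s p := by
  have h2 : t.r2.dual (t.r2.dual p) = p := by
    refine (congrArg t.r2.dual (r2d h p)).trans ((r2d h _).trans ?_)
    refine Prod.ext ?_ ?_
    · show s * (s * p.1) = p.1
      rw [← mul_assoc, hs, one_mul]
    · show s * (s * p.2) = p.2
      rw [← mul_assoc, hs, one_mul]
  have : ∀ (u v w : PZ), u = (s * p.2, s * p.1) → v = p → w = u → p + u + v + w = K2o s p := by
    rintro u v w rfl rfl rfl
    refine Prod.ext ?_ ?_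
    · show v.1 + s * v.2 + v.1 + s * v.2 = 2 * v.1 + 2 * s * v.2
      ring
    · show v.2 + s * v.1 + v.2 + s * v.1 = 2 * v.2 + 2 * s * v.1
      ring
  exact this _ _ _ (r2d h p) h2 (congrArg t.r2.dual h2)

lemma r1d (h : ∀ p : PZ, t.r.dual p = (s * p.1, s * p.2)) (x : PZ × PZ) :
    t.r1.dual x = ((s * x.2.1, s * x.2.2), (-(s * x.1.2), -(s * x.1.1))) := by
  exact Prod.ext (h x.2) ((congrArg (fun p : PZ => - p) (r2d h x.1)))

lemma k1e (h : ∀ p : PZ, t.r.dual p = (s * p.1, s * p.2)) (p : PZ × PZ) :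
    (t.r1 - GHom.id (EM.prod EM)).dual p = K1e s p := (congrArg (· - p) (r1d h p)).trans rfl

lemma k1o (hs : s * s = 1) (h : ∀ p : PZ, t.r.dual p = (s * p.1, s * p.2)) (p : PZ × PZ) :
    (GHom.id (EM.prod EM) + t.r1 + t.r1.comp t.r1 + t.r1.comp (t.r1.comp t.r1)).dual p = K1o s p := by
  have h2 : ∀ p : PZ × PZ, t.r1.dual (t.r1.dual p) = ((-p.1.2, -p.1.1), (-p.2.2, -p.2.1)) := by
    intro p
    refine (congrArg t.r1.dual (r1d h p)).trans ((r1d h _).trans ?_)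
    obtain ⟨⟨a, b⟩, c, d⟩ := p
    have e : ∀ a, s * (s * a) = a := fun a => by rw [← mul_assoc, hs, one_mul]
    simp [e]
    rfl
  have : ∀ (u v w : PZ × PZ), u = ((s * p.2.1, s * p.2.2), (-(s * p.1.2), -(s * p.1.1))) →
      v = ((-p.1.2, -p.1.1), (-p.2.2, -p.2.1)) →
      w = ((-u.1.2, -u.1.1), (-u.2.2, -u.2.1)) → p + u + v + w = K1o s p := by
    obtain ⟨⟨a, b⟩, c, d⟩ := p
    rintro u v w rfl rfl rfl
    simp only [K1o, Prod.mk_add_mk, Prod.mk.injEq]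
    refine ⟨⟨?_, ?_⟩, ?_, ?_⟩ <;> ring
  exact this _ _ _ (r1d h p) (h2 p) (h2 (t.r1.dual p))

lemma m2d (x : PZ × PZ) : D2.dual x = M2 x := 
  (congrArg₂ (fun (p q : PZ) => - p + q) (XI1 x.1) (XI0 x.2)).trans rfl
lemma m1d (x : PZ) : D1.dual x = (dl x, dl x) := 
  (congrArg₂ (fun (p q : PZ) => (p, q)) (XI0 x) (XI1 x))

/-- formula -/
def F1 (s : ℤ) (x : PZ × (PZ × PZ)) : PZ × ((PZ × PZ) × PZ) :=
  (K0o s x.1, ((dl x.1, dl x.1) - K1e s x.2, 0 - M2 x.2))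
/-- formula -/
def F2 (s : ℤ) (x : PZ × ((PZ × PZ) × PZ)) : PZ × ((PZ × PZ) × PZ) :=
  (K0e s x.1, ((dl x.1, dl x.1) - K1o s x.2.1, 0 - (M2 x.2.1 - K2e s x.2.2)))
/-- formula -/
def F3 (s : ℤ) (x : PZ × ((PZ × PZ) × PZ)) : PZ × ((PZ × PZ) × PZ) :=
  (K0o s x.1, ((dl x.1, dl x.1) - K1e s x.2.1, 0 - (M2 x.2.1 - K2o s x.2.2)))

lemma sub_neg' {A : Type} [AddCommGroup A] {a b c d : A} (h : a = b) (h' : c = d) :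
    a + - c = b - d := by rw [h, h', sub_eq_add_neg]

lemma Fd1 (hs : s * s = 1) (h : ∀ p : PZ, t.r.dual p = (s * p.1, s * p.2)) (x : PZ × (PZ × PZ)) :
    (t.F.d 1).dual x = F1 s x := by
  refine Prod.ext (k0o hs h x.1) (Prod.ext ?_ ?_)
  · exact sub_neg' (m1d x.1) (k1e h x.2)
  · exact sub_neg' rfl (m2d x.2)

lemma Fd2 (hs : s * s = 1) (h : ∀ p : PZ, t.r.dual p = (s * p.1, s * p.2)) (x) :
    (t.F.d 2).dual x = F2 s x := by
  refine Prod.ext (k0e h x.1) (Prod.ext ?_ ?_)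
  · exact sub_neg' (m1d x.1) (k1o hs h x.2.1)
  · exact sub_neg' rfl (sub_neg' (m2d x.2.1) (k2e h x.2.2))

lemma Fd3 (hs : s * s = 1) (h : ∀ p : PZ, t.r.dual p = (s * p.1, s * p.2)) (x) :
    (t.F.d 3).dual x = F3 s x := by
  refine Prod.ext (k0o hs h x.1) (Prod.ext ?_ ?_)
  · exact sub_neg' (m1d x.1) (k1e h x.2.1)
  · exact sub_neg' rfl (sub_neg' (m2d x.2.1) (k2o hs h x.2.2))

lemma Fd4 (hs : s * s = 1) (h : ∀ p : PZ, t.r.dual p = (s * p.1, s * p.2)) (x) :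
    (t.F.d 4).dual x = F2 s x := Fd2 hs h x

end Tw
open Tw

/-- type abbreviation -/
abbrev F1T := PZ × (PZ × PZ)
/-- type abbreviation -/
abbrev F2T := PZ × ((PZ × PZ) × PZ)

lemma aB : (-1 : ℤ) * -1 = 1 := by norm_num
lemma aA : (1 : ℤ) * 1 = 1 := by norm_num

lemma KMd2 (x : F2T × F1T) : (KM.d 2).dual x = (F2 1 x.1, - F1 (-1) x.2) := by
  refine Prod.ext (Fd2 aA tA_dual x.1) ?_
  have h1 : (phiM.f 2).dual x.1 = 0 := 
    Prod.ext (XI3 x.1.1) (Prod.ext (Prod.ext (XI3 x.1.2.1.1) (XI3 x.1.2.1.2)) (XI3 x.1.2.2))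
  exact (sub_neg' h1 (Fd1 aB tB_dual x.2)).trans (zero_sub _)

lemma KMd3 (x : F2T × F2T) : (KM.d 3).dual x = (F3 1 x.1, - F2 (-1) x.2) := by
  refine Prod.ext (Fd3 aA tA_dual x.1) ?_
  have h1 : (phiM.f 3).dual x.1 = 0 := 
    Prod.ext (XI3 x.1.1) (Prod.ext (Prod.ext (XI3 x.1.2.1.1) (XI3 x.1.2.1.2)) (XI3 x.1.2.2))
  exact (sub_neg' h1 (Fd2 aB tB_dual x.2)).trans (zero_sub _)

lemma KMd4 (x : F2T × F2T) : (KM.d 4).dual x = (F2 1 x.1, - F3 (-1) x.2) := by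
  refine Prod.ext (Fd2 aA tA_dual x.1) ?_
  have h1 : (phiM.f 4).dual x.1 = 0 := 
    Prod.ext (XI3 x.1.1) (Prod.ext (Prod.ext (XI3 x.1.2.1.1) (XI3 x.1.2.1.2)) (XI3 x.1.2.2))
  exact (sub_neg' h1 (Fd3 aB tB_dual x.2)).trans (zero_sub _)

/-- formula -/
def dF1 (x : F1T) : F1T := (dl x.1, (dl x.2.1, dl x.2.2))
/-- formula -/
def dF2 (x : F2T) : F2T := (dl x.1, ((dl x.2.1.1, dl x.2.1.2), dl x.2.2))

lemma phi3 (x : F2T × F2T) : (phiC.f 3).dual x = (dF2 x.1, dF2 x.2) := 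
  Prod.ext 
   (Prod.ext (XI2 x.1.1) (Prod.ext (Prod.ext (XI2 x.1.2.1.1) (XI2 x.1.2.1.2)) (XI2 x.1.2.2)))
   (Prod.ext (XI2 x.2.1) (Prod.ext (Prod.ext (XI2 x.2.2.1.1) (XI2 x.2.2.1.2)) (XI2 x.2.2.2)))

lemma phi4 (x : F2T × F2T) : (phiC.f 4).dual x = (dF2 x.1, dF2 x.2) := 
  Prod.ext 
   (Prod.ext (XI2 x.1.1) (Prod.ext (Prod.ext (XI2 x.1.2.1.1) (XI2 x.1.2.1.2)) (XI2 x.1.2.2)))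
   (Prod.ext (XI2 x.2.1) (Prod.ext (Prod.ext (XI2 x.2.2.1.1) (XI2 x.2.2.1.2)) (XI2 x.2.2.2)))

/-- formula -/
def d3F (x : (F2T × F2T) × (F2T × F1T)) : (F2T × F2T) × (F2T × F2T) :=
  ((F3 1 x.1.1, - F2 (-1) x.1.2), (dF2 x.1.1 - F2 1 x.2.1, dF2 x.1.2 - - F1 (-1) x.2.2))

/-- formula -/
def d4F (x : (F2T × F2T) × (F2T × F2T)) : (F2T × F2T) × (F2T × F2T) :=
  ((F2 1 x.1.1, - F3 (-1) x.1.2), (dF2 x.1.1 - F3 1 x.2.1, dF2 x.1.2 - - F2 (-1) x.2.2))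

lemma KTd3 (x : (F2T × F2T) × (F2T × F1T)) : (KT.d 3).dual x = d3F x := 
  Prod.ext (KMd3 x.1) ((sub_neg' (phi3 x.1) (KMd2 x.2)).trans rfl)

lemma KTd4 (x : (F2T × F2T) × (F2T × F2T)) : (KT.d 4).dual x = d4F x := 
  Prod.ext (KMd4 x.1) ((sub_neg' (phi4 x.1) (KMd3 x.2)).trans rfl)

end Cry


namespace Cry
set_option linter.unusedSimpArgs false
open Tw

/-- functional -/
def ph_w (y : (F2T × F2T) × (F2T × F2T)) : ℤ := y.1.1.1.2
/-- functional -/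
def ph_a (y : (F2T × F2T) × (F2T × F2T)) : ℤ := y.1.1.2.2.2 + y.2.1.2.1.1.2 + y.2.1.2.1.2.2
/-- functional -/
def ph_b (y : (F2T × F2T) × (F2T × F2T)) : ℤ := y.1.2.1.2
/-- functional -/
def ph_c (y : (F2T × F2T) × (F2T × F2T)) : ℤ := y.1.2.2.1.2.2 + y.1.2.2.2.2 + y.2.2.1.1 + y.2.2.2.1.2.1 + y.2.2.2.1.2.2 + y.2.2.2.2.2

/-- The certificate map -/
def PhiT : ((F2T × F2T) × (F2T × F2T)) →+ ZMod 4 × (Fin 3 → ZMod 2) :=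
  AddMonoidHom.mk' (fun y => ((ph_w y : ZMod 4), ![(ph_a y : ZMod 2), (ph_b y : ZMod 2), (ph_c y : ZMod 2)]))
    (fun y z => by
      refine Prod.ext ?_ ?_
      · simp only [ph_w, Prod.fst_add, Prod.snd_add]; push_cast; ring
      · funext i
        fin_cases i
        · show ((ph_a _ : ℤ) : ZMod 2) = (ph_a y : ZMod 2) + (ph_a z : ZMod 2)
          simp only [ph_a, Prod.fst_add, Prod.snd_add]; push_cast; ring
        · show ((ph_b _ : ℤ) : ZMod 2) = (ph_b y : ZMod 2) + (ph_b z : ZMod 2)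
          simp only [ph_b, Prod.fst_add, Prod.snd_add]; push_cast; ring
        · show ((ph_c _ : ℤ) : ZMod 2) = (ph_c y : ZMod 2) + (ph_c z : ZMod 2)
          simp only [ph_c, Prod.fst_add, Prod.snd_add]; push_cast; ring)

lemma PhiT_zero (y) : PhiT y = 0 ↔ (4 : ℤ) ∣ ph_w y ∧ (2 : ℤ) ∣ ph_a y ∧ (2 : ℤ) ∣ ph_b y ∧ (2 : ℤ) ∣ ph_c y := by
  have e4 := ZMod.intCast_zmod_eq_zero_iff_dvd (ph_w y) 4
  have ea := ZMod.intCast_zmod_eq_zero_iff_dvd (ph_a y) 2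
  have eb := ZMod.intCast_zmod_eq_zero_iff_dvd (ph_b y) 2
  have ec := ZMod.intCast_zmod_eq_zero_iff_dvd (ph_c y) 2
  push_cast at e4 ea eb ec
  rw [← e4, ← ea, ← eb, ← ec]
  constructor
  · intro h
    exact ⟨congrArg Prod.fst h, congrFun (congrArg Prod.snd h) 0, congrFun (congrArg Prod.snd h) 1,
      congrFun (congrArg Prod.snd h) 2⟩
  · rintro ⟨h1, h2, h3, h4⟩
    refine Prod.ext h1 ?_
    funext i
    fin_cases i
    · exact h2
    · exact h3
    · exact h4

lemma cert_h0 (x) : PhiT (d3F x) = 0 := by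
  rw [PhiT_zero]
  obtain ⟨⟨⟨⟨x0, x1⟩, ⟨⟨⟨x2, x3⟩, ⟨x4, x5⟩⟩, ⟨x6, x7⟩⟩⟩, ⟨⟨x8, x9⟩, ⟨⟨⟨x10, x11⟩, ⟨x12, x13⟩⟩, ⟨x14, x15⟩⟩⟩⟩, ⟨⟨⟨x16, x17⟩, ⟨⟨⟨x18, x19⟩, ⟨x20, x21⟩⟩, ⟨x22, x23⟩⟩⟩, ⟨⟨x24, x25⟩, ⟨⟨x26, x27⟩, ⟨x28, x29⟩⟩⟩⟩⟩ := x
  simp only [ph_w, ph_a, ph_b, ph_c, d3F, F3, F2, F1, dF2, K0e, K0o, K1e, K1o, K2e, K2o, M2, dl, zero_sub, Prod.mk_sub_mk, Prod.neg_mk, Prod.fst_sub, Prod.snd_sub, Prod.fst_neg, Prod.snd_neg, Prod.fst_zero, Prod.snd_zero]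
  refine ⟨?_, ?_, ?_, ?_⟩ <;> omega

lemma cert_hs (t : ZMod 4 × (Fin 3 → ZMod 2)) : ∃ y, d4F y = 0 ∧ PhiT y = t := by
  obtain ⟨w, hw⟩ := ZMod.intCast_surjective t.1
  obtain ⟨a, ha⟩ := ZMod.intCast_surjective (t.2 0)
  obtain ⟨b, hb⟩ := ZMod.intCast_surjective (t.2 1)
  obtain ⟨c, hc⟩ := ZMod.intCast_surjective (t.2 2)
  refine ⟨((((w, w), (((-1 * a, 0), (0, -1 * a)), (2 * a, 0))), ((b, b), (((0, 0), (0, 0)), (0, 0)))), (((0, 0), (((0, 0), (-1 * a, a)), (0, 0))), ((0, 0), (((0, 0), (0, 0)), (-1 * c, c))))), ?_, ?_⟩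
  · simp only [d4F, F3, F2, F1, dF2, K0e, K0o, K1e, K1o, K2e, K2o, M2, dl, zero_sub, Prod.mk_sub_mk, Prod.neg_mk, Prod.fst_sub, Prod.snd_sub, Prod.fst_neg, Prod.snd_neg, Prod.fst_zero, Prod.snd_zero, Prod.mk_eq_zero]
    refine ⟨⟨⟨⟨?_, ?_⟩, ⟨⟨⟨?_, ?_⟩, ⟨?_, ?_⟩⟩, ⟨?_, ?_⟩⟩⟩, ⟨⟨?_, ?_⟩, ⟨⟨⟨?_, ?_⟩, ⟨?_, ?_⟩⟩, ⟨?_, ?_⟩⟩⟩⟩, ⟨⟨⟨?_, ?_⟩, ⟨⟨⟨?_, ?_⟩, ⟨?_, ?_⟩⟩, ⟨?_, ?_⟩⟩⟩, ⟨⟨?_, ?_⟩, ⟨⟨⟨?_, ?_⟩, ⟨?_, ?_⟩⟩, ⟨?_, ?_⟩⟩⟩⟩⟩ <;> ring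
  · refine Prod.ext ?_ ?_
    · rw [← hw]
      refine (ZMod.intCast_eq_intCast_iff_dvd_sub _ _ 4).2 ?_
      simp only [ph_w]; push_cast; omega
    · funext i
      fin_cases i
      · refine Eq.trans ?_ ha
        refine (ZMod.intCast_eq_intCast_iff_dvd_sub _ _ 2).2 ?_
        simp only [ph_a]; push_cast; omega
      · refine Eq.trans ?_ hb
        refine (ZMod.intCast_eq_intCast_iff_dvd_sub _ _ 2).2 ?_
        simp only [ph_b]; push_cast; omega
      · refine Eq.trans ?_ hc
        refine (ZMod.intCast_eq_intCast_iff_dvd_sub _ _ 2).2 ?_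
        simp only [ph_c]; push_cast; omega

set_option maxHeartbeats 4000000 in
lemma cert_hk (y) (hy : d4F y = 0) (hp : PhiT y = 0) : ∃ x, d3F x = y := by
  rw [PhiT_zero] at hp
  obtain ⟨⟨⟨⟨y0, y1⟩, ⟨⟨⟨y2, y3⟩, ⟨y4, y5⟩⟩, ⟨y6, y7⟩⟩⟩, ⟨⟨y8, y9⟩, ⟨⟨⟨y10, y11⟩, ⟨y12, y13⟩⟩, ⟨y14, y15⟩⟩⟩⟩, ⟨⟨⟨y16, y17⟩, ⟨⟨⟨y18, y19⟩, ⟨y20, y21⟩⟩, ⟨y22, y23⟩⟩⟩, ⟨⟨y24, y25⟩, ⟨⟨⟨y26, y27⟩, ⟨y28, y29⟩⟩, ⟨y30, y31⟩⟩⟩⟩⟩ := y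
  simp only [ph_w, ph_a, ph_b, ph_c] at hp
  simp only [d4F, F3, F2, F1, dF2, K0e, K0o, K1e, K1o, K2e, K2o, M2, dl, zero_sub, Prod.mk_sub_mk, Prod.neg_mk, Prod.fst_sub, Prod.snd_sub, Prod.fst_neg, Prod.snd_neg, Prod.fst_zero, Prod.snd_zero, Prod.mk_eq_zero] at hy
  obtain ⟨h1, h2, h3, h4⟩ := hp
  obtain ⟨⟨⟨⟨e0, e1⟩, ⟨⟨⟨e2, e3⟩, ⟨e4, e5⟩⟩, ⟨e6, e7⟩⟩⟩, ⟨⟨e8, e9⟩, ⟨⟨⟨e10, e11⟩, ⟨e12, e13⟩⟩, ⟨e14, e15⟩⟩⟩⟩, ⟨⟨⟨e16, e17⟩, ⟨⟨⟨e18, e19⟩, ⟨e20, e21⟩⟩, ⟨e22, e23⟩⟩⟩, ⟨⟨e24, e25⟩, ⟨⟨⟨e26, e27⟩, ⟨e28, e29⟩⟩, ⟨e30, e31⟩⟩⟩⟩⟩ := hy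
  obtain ⟨w, hw⟩ : (4 : ℤ) ∣ y1 + 4 * y17 := by omega
  obtain ⟨a, ha⟩ : (2 : ℤ) ∣ y7 - 1 * y19 + y21 - 2 * y23 := by omega
  obtain ⟨b, hb⟩ : (2 : ℤ) ∣ y9 := by omega
  obtain ⟨c, hc⟩ : (-2 : ℤ) ∣ -1 * y13 - 1 * y15 + y24 + y28 + y29 + y31 := neg_dvd.2 (by omega)
  have k0 : y0 - 1 * y1 + y2 - 1 * y3 + y4 - 1 * y5 = 0 := by
    linear_combination -1 * e2
  have k1 : y2 - 1 * y3 - 1 * y4 + y5 + y6 - 1 * y7 = 0 := by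
    linear_combination -1 * e6
  have k2 : y8 - 1 * y9 - 1 * y10 - 1 * y12 = 0 := by
    linear_combination e10
  have k3 : y10 + y11 + y12 + y13 = 0 := by
    linear_combination -1 * e10 - 1 * e11
  have k4 : y12 + y13 = 0 := by
    linear_combination -1 * e11 - 1 * e12
  have k5 : -2 * y4 + 2 * y5 + y6 - 1 * y7 + 4 * y16 = 0 := by
    linear_combination e2 - 1 * e6 - 1 * e16
  have k6 : -1 * y4 + y5 + 3 * y16 + y17 + y18 - 1 * y20 = 0 := by
    linear_combination e2 - 1 * e16 - 1 * e18
  have k7 : y18 + y19 - 1 * y20 - 1 * y21 = 0 := by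
    linear_combination -1 * e18 - 1 * e19
  have k8 : 2 * y16 + 2 * y17 + y20 + y21 = 0 := by
    linear_combination e2 - 1 * e16 + e19 - 1 * e20
  have k9 : y11 + y13 - 2 * y24 = 0 := by
    linear_combination -1 * e11 + e24
  have k10 : -2 * y13 + 3 * y24 + y25 - 1 * y26 + y27 + y28 - 1 * y29 = 0 := by
    linear_combination -1 * e10 + 2 * e11 + e12 - 2 * e24 + e26
  have k11 : y14 - 1 * y15 + y26 - 1 * y27 - 1 * y28 + y29 + y30 + y31 = 0 := by
    linear_combination -1 * e30
  have k12 : 2 * y13 - 2 * y24 + y26 - 1 * y27 - 1 * y28 + y29 + y30 + y31 = 0 := by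
    have h : (2 : ℤ) * (2 * y13 - 2 * y24 + y26 - 1 * y27 - 1 * y28 + y29 + y30 + y31) = 0 := by
      linear_combination e10 - 3 * e11 - 2 * e12 + e14 + 2 * e24 - 2 * e30
    exact (mul_eq_zero.1 h).resolve_left (by norm_num)
  have k13 : y16 + y17 + y22 + y23 = 0 := by
    have h : (-2 : ℤ) * (y16 + y17 + y22 + y23) = 0 := by
      linear_combination -1 * e2 - 1 * e6 + e16 + e18 - 1 * e19 + e22
    exact (mul_eq_zero.1 h).resolve_left (by norm_num)
  have k14 : y30 + y31 = 0 := by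
    have h : (2 : ℤ) * (y30 + y31) = 0 := by
      linear_combination -1 * e10 + e11 + e14 - 1 * e24 + e25 + 2 * e26 - 2 * e30
    exact (mul_eq_zero.1 h).resolve_left (by norm_num)
  have k15 : y22 + y23 = 0 := by
    have h : (4 : ℤ) * (y22 + y23) = 0 := by
      linear_combination 2 * e2 + 2 * e6 - 1 * e16 + e17 - 2 * e18 + 2 * e19 - 2 * e22
    exact (mul_eq_zero.1 h).resolve_left (by norm_num)
  clear e0 e1 e2 e3 e4 e5 e6 e7 e8 e9 e10 e11 e12 e13 e14 e15 e16 e17 e18 e19 e20 e21 e22 e23 e24 e25 e26 e27 e28 e29 e30 e31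
  refine ⟨((((w, -1 * y17 + w), (((y4 + y7 + y17 - 2 * y23 - 2 * a, y3 - 1 * y17), (-1 * y3 + y4 + 2 * y17, 0)), (y23 + a, 0))), ((-1 * y24 + b, b), (((y27, 0), (-1 * y13 + y24 + y27, 0)), (y13 + y15 - 1 * y24 - 1 * c, c)))), (((-1 * y3 + y4 + y7 + 2 * y17 - 1 * y19 - 2 * y23 - 3 * a, 0), (((a, 0), (0, 0)), (0, 0))), ((0, 0), ((-1 * y13 + y24 + y27 - 1 * y29, 0), (-1 * y13 + y24 + y27 + y28, 0))))), ?_⟩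
  simp only [d3F, F3, F2, F1, dF2, K0e, K0o, K1e, K1o, K2e, K2o, M2, dl, zero_sub, Prod.mk_sub_mk, Prod.neg_mk, Prod.fst_sub, Prod.snd_sub, Prod.fst_neg, Prod.snd_neg, Prod.fst_zero, Prod.snd_zero, Prod.mk.injEq]
  refine ⟨⟨⟨⟨?_, ?_⟩, ⟨⟨⟨?_, ?_⟩, ⟨?_, ?_⟩⟩, ⟨?_, ?_⟩⟩⟩, ⟨⟨?_, ?_⟩, ⟨⟨⟨?_, ?_⟩, ⟨?_, ?_⟩⟩, ⟨?_, ?_⟩⟩⟩⟩, ⟨⟨⟨?_, ?_⟩, ⟨⟨⟨?_, ?_⟩, ⟨?_, ?_⟩⟩, ⟨?_, ?_⟩⟩⟩, ⟨⟨?_, ?_⟩, ⟨⟨⟨?_, ?_⟩, ⟨?_, ?_⟩⟩, ⟨?_, ?_⟩⟩⟩⟩⟩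
  · linear_combination -1 * hw - 1 * k0 + k1 - 1 * k5 + 4 * k13 - 4 * k15
  · linear_combination -1 * hw
  · linear_combination ha - 1 * k1 + k5 - 1 * k6 + k7 - 1 * k13 + k15
  · ring
  · ring
  · linear_combination ha - 1 * k6 + k7 + 3 * k13 - 3 * k15
  · linear_combination -2 * ha - 1 * k5 + 2 * k6 - 2 * k7 - 2 * k13 + 2 * k15
  · ring
  · linear_combination -1 * hb - 1 * k2 - 1 * k3 + k9
  · linear_combination -1 * hb
  · linear_combination -1 * k3 + k4 + k9
  · linear_combination -1 * k9
  · linear_combination -1 * k4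
  · ring
  · linear_combination -1 * k11 + k12
  · ring
  · linear_combination -1 * k13 + k15
  · ring
  · linear_combination -1 * k7 - 1 * k8 + 2 * k13 - 2 * k15
  · ring
  · linear_combination ha - 1 * k8 + 2 * k13 - 2 * k15
  · linear_combination -1 * ha
  · linear_combination -1 * k15
  · ring
  · ring
  · linear_combination -1 * k10 - 1 * k12 + k14
  · linear_combination -1 * k12 + k14
  · ring
  · ring
  · ring
  · linear_combination hc - 1 * k14
  · linear_combination -1 * hc

theorem H4 : Nonempty (groupCohomology (Rep.trivial ℤ Gam ℤ) 4 ≃+ ZMod 4 × (Fin 3 → ZMod 2)) :=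
  augT.main_cert 3 PhiT (fun x => (congrArg PhiT (KTd3 x)).trans (cert_h0 x))
    (fun t => by
      obtain ⟨y, h, h'⟩ := cert_hs t
      exact ⟨y, (KTd4 y).trans h, h'⟩)
    (fun y h h' => by
      obtain ⟨x, hx⟩ := cert_hk y ((KTd4 y).symm.trans h) h'
      exact ⟨x, (KTd3 x).trans hx⟩)

end Cry


namespace Cry
set_option linter.unusedSimpArgs false

/-- the lattice -/
abbrev Lt := Crystal.Lat 4

/-- index set -/
abbrev SU := Sp Unit

instance : MulAction Lt SU where
  smul l s := (s.1, s.2 + l.toAdd)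
  one_smul s := Prod.ext rfl (add_zero s.2)
  mul_smul a b s := Prod.ext rfl (by
    show s.2 + (a.toAdd + b.toAdd) = s.2 + b.toAdd + a.toAdd
    abel)

/-- functionals -/
def eU : ℤ ≃+ (Unit → ℤ) where
  toFun n _ := n
  invFun f := f ()
  left_inv _ := rfl
  right_inv _ := rfl
  map_add' _ _ := rfl

/-- the regular module -/
noncomputable def RM : GM Lt := permGM (fun _ : SU => ()) (fun _ => ((), 0))
  (fun s => Multiplicative.ofAdd s.2) eU
  (fun s => Prod.ext rfl (zero_add s.2)) (fun _ _ => rfl)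
  (fun g s => by
    show Multiplicative.ofAdd (s.2 + g.toAdd) = g * Multiplicative.ofAdd s.2
    rw [mul_comm]; rfl) (fun _ => rfl)

/-- translation -/
noncomputable def XL (v : Fin 4 → ℤ) : GHom RM RM :=
  permHom (tr v) (fun g s => Prod.ext rfl (by
    show s.2 + g.toAdd + v = s.2 + v + g.toAdd
    abel)) (AddMonoidHom.id ℤ) (fun _ _ => rfl)

/-- translation minus one -/
noncomputable def XJ (v : Fin 4 → ℤ) : GHom RM RM := XL v - GHom.id RM

lemma XJ_dual (v) (p : ℤ) : (XJ v).dual p = 0 := sub_self p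

/-- underlying group -/
abbrev UU := SU →₀ ℤ

lemma XJ_comm (v w : Fin 4 → ℤ) (x : UU) : X v (X w x - x) - (X w x - x) = X w (X v x - x) - (X v x - x) := by
  rw [map_sub, map_sub, X_comm]; abel

/-- all dual differentials vanish -/
def Zd {G : Type} [Group G] (C : Cx G) : Prop := ∀ n x, (C.d n).dual x = 0
/-- all dual maps vanish -/
def Zh {G : Type} [Group G] {C C' : Cx G} (φ : CxHom C C') : Prop := ∀ n x, (φ.f n).dual x = 0

lemma Zd_cone {G : Type} [Group G] {C C' : Cx G} {φ : CxHom C C'} (i) (h : Zd C) (h' : Zd C') (hφ : Zh φ) :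
    Zd (cone φ i) := by
  intro n
  cases n with
  | zero => intro x; exact Prod.ext (h' _ _) (hφ _ _)
  | succ n =>
    intro x
    refine Prod.ext (h' _ _) ?_
    show (φ.f _).dual x.1 + - (C.d n).dual x.2 = 0
    rw [h, hφ, neg_zero, add_zero]

lemma Zh_cone {G : Type} [Group G] {C₁ C₁' C₂ C₂' : Cx G} {φ₁ : CxHom C₁ C₁'} {φ₂ : CxHom C₂ C₂'} (i₁) (i₂)
    (g : CxHom C₁ C₂) (g' : CxHom C₁' C₂') (h) (hg : Zh g) (hg' : Zh g') :
    Zh (coneMap (φ₁ := φ₁) (φ₂ := φ₂) i₁ i₂ g g' h) := by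
  intro n
  cases n with
  | zero => exact hg' 0
  | succ n => intro x; exact Prod.ext (hg' _ _) (hg _ _)

/-- start -/
noncomputable def Q0 : Cx Lt := conc RM
/-- multiplication -/
noncomputable def ps0 (v : Fin 4 → ℤ) : CxHom Q0 Q0 := concMap (XJ v)

lemma ps0_comm (v w n x) : ((ps0 v).f n).f (((ps0 w).f n).f x) = ((ps0 w).f n).f (((ps0 v).f n).f x) := by
  cases n with
  | zero => exact XJ_comm v w x
  | succ n => rfl

lemma j0 : ∀ y, (∃ z, (Q0.d 0).f z = ((ps0 (ev 0)).f 0).f y) → ∃ w, (Q0.d 0).f w = y := by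
  intro y ⟨z, hz⟩
  exact ⟨0, (X_inj (K := Unit) 0 y hz.symm).symm⟩

/-- first cone -/
noncomputable def Q1 : Cx Lt := cone (ps0 (ev 0)) j0
/-- multiplication -/
noncomputable def ps1 (v : Fin 4 → ℤ) : CxHom Q1 Q1 := coneMap j0 j0 (ps0 v) (ps0 v) (ps0_comm _ _)

lemma coneMap_comm {G : Type} [Group G] {C C' : Cx G} {φ : CxHom C C'} (i) 
    (g k : CxHom C C) (g' k' : CxHom C' C') (h hk)
    (e : ∀ n x, (g.f n).f ((k.f n).f x) = (k.f n).f ((g.f n).f x)) 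
    (e' : ∀ n x, (g'.f n).f ((k'.f n).f x) = (k'.f n).f ((g'.f n).f x)) (n x) :
    ((coneMap (φ₁ := φ) (φ₂ := φ) i i g g' h).f n).f (((coneMap (φ₁ := φ) (φ₂ := φ) i i k k' hk).f n).f x) =
    ((coneMap (φ₁ := φ) (φ₂ := φ) i i k k' hk).f n).f (((coneMap (φ₁ := φ) (φ₂ := φ) i i g g' h).f n).f x) := by
  cases n with
  | zero => exact e' 0 x
  | succ n => exact Prod.ext (e' _ _) (e _ _)

lemma ps1_comm (v w n x) : ((ps1 v).f n).f (((ps1 w).f n).f x) = ((ps1 w).f n).f (((ps1 v).f n).f x) :=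
  coneMap_comm j0 _ _ _ _ _ _ (ps0_comm v w) (ps0_comm v w) n x

lemma Q1_d (z : PUnit × UU) : (Q1.d 0).f z = X (ev 0) z.2 - z.2 := 
  zero_add (X (ev 0) z.2 - z.2)

lemma j1 : ∀ y, (∃ z, (Q1.d 0).f z = ((ps1 (ev 1)).f 0).f y) → ∃ w, (Q1.d 0).f w = y := by
  intro y ⟨z, hz⟩
  obtain ⟨t, ht⟩ := reg1 (K := Unit) 0 1 (by decide) y z.2 (hz.symm.trans (Q1_d z))
  exact ⟨(0, t), (Q1_d _).trans ht.symm⟩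

/-- second cone -/
noncomputable def Q2 : Cx Lt := cone (ps1 (ev 1)) j1
/-- multiplication -/
noncomputable def ps2 (v : Fin 4 → ℤ) : CxHom Q2 Q2 := coneMap j1 j1 (ps1 v) (ps1 v) (ps1_comm _ _)

lemma ps2_comm (v w n x) : ((ps2 v).f n).f (((ps2 w).f n).f x) = ((ps2 w).f n).f (((ps2 v).f n).f x) :=
  coneMap_comm j1 _ _ _ _ _ _ (ps1_comm v w) (ps1_comm v w) n x

lemma Q2_d (z : (PUnit × UU) × UU) : (Q2.d 0).f z = (X (ev 0) z.1.2 - z.1.2) + (X (ev 1) z.2 - z.2) := 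
  congrArg (· + (X (ev 1) z.2 - z.2)) (Q1_d z.1)

lemma j2 : ∀ y, (∃ z, (Q2.d 0).f z = ((ps2 (ev 2)).f 0).f y) → ∃ w, (Q2.d 0).f w = y := by
  intro y ⟨z, hz⟩
  obtain ⟨t, t', ht⟩ := reg2 (K := Unit) 0 1 2 (by decide) (by decide) (by decide) y z.1.2 z.2
    (hz.symm.trans (Q2_d z))
  exact ⟨((0, t), t'), (Q2_d _).trans ht.symm⟩

/-- third cone -/
noncomputable def Q3 : Cx Lt := cone (ps2 (ev 2)) j2
/-- multiplication -/
noncomputable def ps3 (v : Fin 4 → ℤ) : CxHom Q3 Q3 := coneMap j2 j2 (ps2 v) (ps2 v) (ps2_comm _ _)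

lemma Q3_d (z : ((PUnit × UU) × UU) × UU) : (Q3.d 0).f z =
    (X (ev 0) z.1.1.2 - z.1.1.2) + (X (ev 1) z.1.2 - z.1.2) + (X (ev 2) z.2 - z.2) := 
  congrArg (· + (X (ev 2) z.2 - z.2)) (Q2_d z.1)

lemma j3 : ∀ y, (∃ z, (Q3.d 0).f z = ((ps3 (ev 3)).f 0).f y) → ∃ w, (Q3.d 0).f w = y := by
  intro y ⟨z, hz⟩
  obtain ⟨t, t', t'', ht⟩ := reg3 (K := Unit) 0 1 2 3 (by decide) (by decide) (by decide)
    (by decide) (by decide) (by decide) y z.1.1.2 z.1.2 z.2 (hz.symm.trans (Q3_d z))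
  exact ⟨(((0, t), t'), t''), (Q3_d _).trans ht.symm⟩

/-- The Koszul complex -/
noncomputable def Q4 : Cx Lt := cone (ps3 (ev 3)) j3

lemma Q4_d (z : (((PUnit × UU) × UU) × UU) × UU) : (Q4.d 0).f z =
    (X (ev 0) z.1.1.1.2 - z.1.1.1.2) + (X (ev 1) z.1.1.2 - z.1.1.2) + (X (ev 2) z.1.2 - z.1.2)
      + (X (ev 3) z.2 - z.2) := 
  congrArg (· + (X (ev 3) z.2 - z.2)) (Q3_d z.1)

lemma zd0 : Zd Q0 := fun _ _ => rfl
lemma zh0 (v) : Zh (ps0 v) := by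
  intro n
  cases n with
  | zero => exact XJ_dual v
  | succ n => intro x; rfl
lemma zd4 : Zd Q4 := by
  have zd1 : Zd Q1 := Zd_cone _ zd0 zd0 (zh0 _)
  have zh1 : ∀ v, Zh (ps1 v) := fun v => Zh_cone _ _ _ _ _ (zh0 v) (zh0 v)
  have zd2 : Zd Q2 := Zd_cone _ zd1 zd1 (zh1 _)
  have zh2 : ∀ v, Zh (ps2 v) := fun v => Zh_cone _ _ _ _ _ (zh1 v) (zh1 v)
  have zd3 : Zd Q3 := Zd_cone _ zd2 zd2 (zh2 _)
  have zh3 : ∀ v, Zh (ps3 v) := fun v => Zh_cone _ _ _ _ _ (zh2 v) (zh2 v)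
  exact Zd_cone _ zd3 zd3 (zh3 _)

lemma T0_U (x : UU) : T (fun s => (s.1, 0)) x = eps x • Finsupp.single ((), (0 : Fin 4 → ℤ)) (1 : ℤ) := by
  refine hom_ext (f := (T (fun s => (s.1, 0)))) 
    (g := ((zmultiplesHom UU) (Finsupp.single ((), (0 : Fin 4 → ℤ)) (1 : ℤ))).comp eps) (fun s => ?_) x
  rw [T_single]
  simp only [AddMonoidHom.comp_apply, eps, mkAdd_single]; simp

lemma eps_XU (v : Fin 4 → ℤ) (x : UU) : eps (X v x) = eps x := eps_T _ _

lemma augL_ex (x : UU) (hx : eps x = 0) : ∃ t0 t1 t2 t3 : UU, x =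
    (X (ev 0) t0 - t0) + (X (ev 1) t1 - t1) + (X (ev 2) t2 - t2) + (X (ev 3) t3 - t3) := by
  obtain ⟨t0, t1, t2, t3, ht⟩ := q_all (K := Unit) x
  rw [q_all_eq, T0_U, hx, zero_smul, zero_add] at ht
  exact ⟨t0, t1, t2, t3, ht⟩

/-- augmentation -/
noncomputable def augL : Aug Q4 where
  ε := (eps : UU →+ ℤ)
  inv g x := eps_T _ x
  surj n := ⟨(Finsupp.single ((), (0 : Fin 4 → ℤ)) n : UU), by
    show eps (Finsupp.single ((), (0 : Fin 4 → ℤ)) n) = n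
    simp [eps, mkAdd]⟩
  zero y := by
    refine (congrArg eps (Q4_d y)).trans ?_
    simp only [map_add, map_sub, eps_XU]
    simp
  ex x hx := by
    obtain ⟨t0, t1, t2, t3, ht⟩ := augL_ex x hx
    exact ⟨((((0, t0), t1), t2), t3), (Q4_d _).trans ht.symm⟩

lemma HL (n) : Nonempty (groupCohomology (Rep.trivial ℤ Lt ℤ) (n+1) ≃+ (Q4.X (n+1)).D) :=
  augL.main_cert n (AddMonoidHom.id _) (fun x => zd4 n x) (fun t => ⟨t, zd4 _ _, rfl⟩)
    (fun y _ h => ⟨0, (zd4 _ _).trans h.symm⟩)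

/-- cohomology of the lattice -/
noncomputable abbrev HLt (n : ℕ) := groupCohomology (Rep.trivial ℤ Lt ℤ) n

lemma inj_of {A B : Type} [AddCommGroup A] [AddCommGroup B] {b : ℕ} (e : Nonempty (A ≃+ B))
    (f : B →+ (Fin b → ℤ)) (hf : ∀ x, f x = 0 → x = 0) : ∃ i : A →+ (Fin b → ℤ), Function.Injective i := by
  obtain ⟨e⟩ := e
  exact ⟨f.comp e.toAddMonoidHom, ((injective_iff_map_eq_zero f).2 hf).comp e.injective⟩

/-- type -/
abbrev U1 := PUnit.{1} × ℤ
/-- type -/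
abbrev U2 := PUnit.{1} × PUnit.{1}
/-- type -/
abbrev V1 := U1 × ℤ
/-- type -/
abbrev V2 := U2 × U1
/-- type -/
abbrev V3 := U2 × U2
/-- type -/
abbrev W1 := V1 × ℤ
/-- type -/
abbrev W2 := V2 × V1
/-- type -/
abbrev W3 := V3 × V2
/-- type -/
abbrev W4 := V3 × V3

lemma inj1 : ∃ i : HLt 1 →+ (Fin 4 → ℤ), Function.Injective i := by
  refine inj_of (B := W1 × ℤ) (HL 0) 
    (AddMonoidHom.mk' (fun x => ![x.1.1.1.2, x.1.1.2, x.1.2, x.2]) (fun x y => by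
      funext i; fin_cases i <;> rfl)) (fun x h => ?_)
  have h0 := congrFun h 0
  have h1 := congrFun h 1
  have h2 := congrFun h 2
  have h3 := congrFun h 3
  exact Prod.ext (Prod.ext (Prod.ext (Prod.ext rfl h0) h1) h2) h3

lemma inj2 : ∃ i : HLt 2 →+ (Fin 6 → ℤ), Function.Injective i := by
  refine inj_of (B := W2 × W1) (HL 1) 
    (AddMonoidHom.mk' (fun x => ![x.1.1.2.2, x.1.2.1.2, x.1.2.2, x.2.1.1.2, x.2.1.2, x.2.2]) (fun x y => by
      funext i; fin_cases i <;> rfl)) (fun x h => ?_)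
  have h0 := congrFun h 0
  have h1 := congrFun h 1
  have h2 := congrFun h 2
  have h3 := congrFun h 3
  have h4 := congrFun h 4
  have h5 := congrFun h 5
  exact Prod.ext (Prod.ext (Prod.ext rfl (Prod.ext rfl h0)) (Prod.ext (Prod.ext rfl h1) h2))
    (Prod.ext (Prod.ext (Prod.ext rfl h3) h4) h5)

lemma inj3 : ∃ i : HLt 3 →+ (Fin 4 → ℤ), Function.Injective i := by
  refine inj_of (B := W3 × W2) (HL 2) 
    (AddMonoidHom.mk' (fun x => ![x.1.2.2.2, x.2.1.2.2, x.2.2.1.2, x.2.2.2]) (fun x y => by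
      funext i; fin_cases i <;> rfl)) (fun x h => ?_)
  have h0 := congrFun h 0
  have h1 := congrFun h 1
  have h2 := congrFun h 2
  have h3 := congrFun h 3
  exact Prod.ext (Prod.ext rfl (Prod.ext rfl (Prod.ext rfl h0)))
    (Prod.ext (Prod.ext rfl (Prod.ext rfl h1)) (Prod.ext (Prod.ext rfl h2) h3))

lemma inj4 : ∃ i : HLt 4 →+ (Fin 1 → ℤ), Function.Injective i := by
  refine inj_of (B := W4 × W3) (HL 3) 
    (AddMonoidHom.mk' (fun x => ![x.2.2.2.2]) (fun x y => by
      funext i; fin_cases i; rfl)) (fun x h => ?_)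
  have h0 := congrFun h 0
  exact Prod.ext rfl (Prod.ext rfl (Prod.ext rfl (Prod.ext rfl h0)))

lemma inj0 : ∃ i : HLt 0 →+ (Fin 1 → ℤ), Function.Injective i := by
  refine inj_of (B := ℤ) ⟨(groupCohomology.H0IsoOfIsTrivial (Rep.trivial ℤ Lt ℤ)).toLinearEquiv.toAddEquiv⟩
    (AddMonoidHom.mk' (fun x _ => x) (fun x y => rfl)) (fun x h => congrFun h 0)

end Cry


namespace Cry
set_option linter.unusedSectionVars false
set_option linter.unusedSimpArgs false
open CategoryTheory

section Alt
variable {L : Type} [CommGroup L]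

/-- alternating sum -/
def alt {n : ℕ} (F : (Fin n → L) → ℤ) (v : Fin n → L) : ℤ :=
  ∑ π : Equiv.Perm (Fin n), (Equiv.Perm.sign π : ℤ) * F (fun i => v (π i))

lemma alt_add {n : ℕ} (F F' : (Fin n → L) → ℤ) (v) :
    alt (fun w => F w + F' w) v = alt F v + alt F' v := by
  simp only [alt, mul_add, Finset.sum_add_distrib]

lemma alt_smul {n : ℕ} (c : ℤ) (F : (Fin n → L) → ℤ) (v) :
    alt (fun w => c * F w) v = c * alt F v := by
  simp only [alt, Finset.mul_sum]
  exact Finset.sum_congr rfl fun _ _ => by ring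

lemma alt_sum {n : ℕ} {ι : Type} (s : Finset ι) (F : ι → (Fin n → L) → ℤ) (v) :
    alt (fun w => ∑ j ∈ s, F j w) v = ∑ j ∈ s, alt (F j) v := by
  simp only [alt, Finset.mul_sum]
  exact Finset.sum_comm

lemma alt_comp {n : ℕ} (F : (Fin n → L) → ℤ) (v : Fin n → L) (σ : Equiv.Perm (Fin n)) :
    alt (fun w => F (fun i => w (σ i))) v = (Equiv.Perm.sign σ : ℤ) * alt F v := by
  simp only [alt, Finset.mul_sum]
  rw [← Fintype.sum_equiv (Equiv.mulRight σ⁻¹) _ _ (fun _ => rfl)]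
  refine Finset.sum_congr rfl fun π _ => ?_
  simp [Equiv.Perm.mul_apply]
  ring

lemma alt_zero {n : ℕ} (F : (Fin n → L) → ℤ) (v : Fin n → L) (σ : Equiv.Perm (Fin n))
    (hs : Equiv.Perm.sign σ = -1) (h : ∀ w, F (fun i => w (σ i)) = F w) : alt F v = 0 := by
  have := alt_comp F v σ
  simp only [h, hs] at this
  push_cast at this
  linarith

lemma contract_swap {n : ℕ} (j : Fin n) (w : Fin (n+1) → L) :
    Fin.contractNth j.castSucc (· * ·) (fun i => w (Equiv.swap j.castSucc j.succ i)) =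
    Fin.contractNth j.castSucc (· * ·) w := by
  funext k
  rcases lt_trichotomy (k : ℕ) j.castSucc with h | h | h
  · rw [Fin.contractNth_apply_of_lt _ _ _ _ h, Fin.contractNth_apply_of_lt _ _ _ _ h,
      Equiv.swap_apply_of_ne_of_ne]
    · intro e; rw [Fin.ext_iff] at e; simp at e h; omega
    · intro e; rw [Fin.ext_iff] at e; simp at e h; omega
  · rw [Fin.contractNth_apply_of_eq _ _ _ _ h, Fin.contractNth_apply_of_eq _ _ _ _ h]
    have : k = j := Fin.ext h
    subst this
    simp [mul_comm]
  · rw [Fin.contractNth_apply_of_gt _ _ _ _ h, Fin.contractNth_apply_of_gt _ _ _ _ h,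
      Equiv.swap_apply_of_ne_of_ne]
    · intro e; rw [Fin.ext_iff] at e; simp at e h; omega
    · intro e; rw [Fin.ext_iff] at e; simp at e h; omega

lemma contract_last {n : ℕ} (w : Fin (n+1) → L) :
    Fin.contractNth (Fin.last n) (· * ·) w = fun i => w i.castSucc := by
  funext k
  exact Fin.contractNth_apply_of_lt _ _ _ _ (by simp)

/-- inhomogeneous differential -/
def dd {n : ℕ} (F : (Fin n → L) → ℤ) (v : Fin (n+1) → L) : ℤ :=
  F (fun i => v i.succ) + ∑ j : Fin (n+1), (-1) ^ ((j : ℕ) + 1) * F (Fin.contractNth j (· * ·) v)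

lemma alt_dd {n : ℕ} (F : (Fin n → L) → ℤ) (v : Fin (n+1) → L) : alt (dd F) v = 0 := by
  have e : dd F = fun w => (fun w => F (fun i => w i.succ)) w + (fun w => ∑ j : Fin (n+1), (-1) ^ ((j : ℕ) + 1) * F (Fin.contractNth j (· * ·) w)) w := rfl
  rw [e, alt_add, alt_sum, Fin.sum_univ_castSucc, Finset.sum_eq_zero, zero_add]
  · rw [alt_smul]
    simp only [contract_last]
    have := alt_comp (fun w : Fin (n+1) → L => F (fun i => w i.castSucc)) v (finRotate (n+1))
    simp only [finRotate_apply, Fin.coeSucc_eq_succ, sign_finRotate] at this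
    rw [this]
    push_cast
    simp [pow_succ]
  · intro j _
    rw [alt_smul, alt_zero _ v (Equiv.swap j.castSucc j.succ), mul_zero]
    · exact Equiv.Perm.sign_swap (by simp [Fin.ext_iff])
    · intro w
      rw [contract_swap]

end Alt

/-- product cochains -/
def pc {n : ℕ} (I : Fin n → Fin 4) (w : Fin n → Lt) : ℤ := ∏ k, (w k).toAdd (I k)

lemma alt_pc {n : ℕ} (I : Fin n → Fin 4) (v : Fin n → Lt) :
    alt (pc I) v = Matrix.det (Matrix.of fun i k => (v i).toAdd (I k)) := by
  rw [Matrix.det_apply']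
  rfl

lemma dd_pc0 (I : Fin 0 → Fin 4) (v : Fin 1 → Lt) : dd (pc I) v = 0 := by
  simp [dd, pc]
lemma dd_pc1 (I : Fin 1 → Fin 4) (v : Fin 2 → Lt) : dd (pc I) v = 0 := by
  simp [dd, pc, Fin.sum_univ_succ, Fin.prod_univ_succ, Fin.contractNth]
lemma dd_pc2 (I : Fin 2 → Fin 4) (v : Fin 3 → Lt) : dd (pc I) v = 0 := by
  simp [dd, pc, Fin.sum_univ_succ, Fin.prod_univ_succ, Fin.contractNth]
  ring
lemma dd_pc3 (I : Fin 3 → Fin 4) (v : Fin 4 → Lt) : dd (pc I) v = 0 := by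
  simp [dd, pc, Fin.sum_univ_succ, Fin.prod_univ_succ, Fin.contractNth]
  ring
lemma dd_pc4 (I : Fin 4 → Fin 4) (v : Fin 5 → Lt) : dd (pc I) v = 0 := by
  simp [dd, pc, Fin.sum_univ_succ, Fin.prod_univ_succ, Fin.contractNth]
  ring

section Gen
variable (K : CochainComplex (ModuleCat.{0} ℤ) ℕ) {n : ℕ} {Y : ModuleCat.{0} ℤ}

/-- maps out of cohomology -/
noncomputable def hdesc (e : K.X n ⟶ Y) (h : ∀ m, K.d m n ≫ e = 0) : K.homology n ⟶ Y :=
  K.homologyι n ≫ K.descOpcycles e _ rfl (h _)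

lemma hdesc_π (e : K.X n ⟶ Y) (h : ∀ m, K.d m n ≫ e = 0) (z : K.cycles n) :
    (hdesc K e h).hom ((K.homologyπ n).hom z) = e.hom ((K.iCycles n).hom z) := by
  have : K.homologyπ n ≫ hdesc K e h = K.iCycles n ≫ e := by
    rw [hdesc, K.homology_π_ι_assoc, K.p_descOpcycles]
  exact congrArg (fun f => f.hom z) this

lemma ex_cycle (y : K.X n) (hy : (K.d n (n+1)).hom y = 0) : ∃ z : K.cycles n, (K.iCycles n).hom z = y := by
  refine exists_cycle (K.sc n) y ?_
  show (K.d n ((ComplexShape.up ℕ).next n)).hom y = 0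
  rw [CochainComplex.next]
  exact hy

lemma ex_hom (x : K.homology n) : ∃ z : K.cycles n, (K.homologyπ n).hom z = x :=
  (ModuleCat.epi_iff_surjective (K.homologyπ n)).1 inferInstance x

lemma hmap_π {K' : CochainComplex (ModuleCat.{0} ℤ) ℕ} (f : K ⟶ K') (e : K'.X n ⟶ Y)
    (h : ∀ m, K'.d m n ≫ e = 0) (z : K.cycles n) :
    (hdesc K' e h).hom ((HomologicalComplex.homologyMap f n).hom ((K.homologyπ n).hom z)) =
      e.hom ((f.f n).hom ((K.iCycles n).hom z)) := by
  have : K.homologyπ n ≫ HomologicalComplex.homologyMap f n ≫ hdesc K' e h = K.iCycles n ≫ f.f n ≫ e := by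
    rw [hdesc, HomologicalComplex.homologyι_naturality_assoc, K.homology_π_ι_assoc,
      HomologicalComplex.p_opcyclesMap_assoc, K'.p_descOpcycles]
  exact congrArg (fun f => f.hom z) this

end Gen

/-- cochain complex -/
noncomputable abbrev KL := groupCohomology.inhomogeneousCochains (Rep.trivial ℤ Lt ℤ)

/-- basis vector tuple -/
def bv {n : ℕ} (J : Fin n → Fin 4) (i : Fin n) : Lt := Multiplicative.ofAdd (Pi.single (J i) 1)

/-- evaluation -/
noncomputable def evl {n b : ℕ} (J : Fin b → Fin n → Fin 4) : KL.X n ⟶ ModuleCat.of ℤ (Fin b → ℤ) :=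
  ModuleCat.ofHom (toZ (M := KL.X n) (N := ModuleCat.of ℤ (Fin b → ℤ)) inferInstance inferInstance <| AddMonoidHom.mk' (fun (F : (Fin n → Lt) → ℤ) j => alt F (bv (J j)))
    (fun F F' => funext fun j => alt_add F F' _))

lemma KL_d (n : ℕ) (F : (Fin n → Lt) → ℤ) : (KL.d n (n+1)).hom F = dd F := by
  rw [groupCohomology.inhomogeneousCochains.d_def]
  rfl

lemma d_evl {n b : ℕ} (J : Fin b → Fin n → Fin 4) (m : ℕ) : KL.d m n ≫ evl J = 0 := by
  by_cases h : m + 1 = n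
  · subst h
    refine ModuleCat.hom_ext (LinearMap.ext fun F => ?_)
    refine (congrArg (evl J).hom (KL_d m F)).trans ?_
    funext j
    exact alt_dd _ _
  · rw [KL.shape _ _ h, Limits.zero_comp]

end Cry


namespace Cry
open CategoryTheory

lemma crd_abs {A : Type} [AddCommGroup A] {b : ℕ} (c : A →+ (Fin b → ℤ))
    (hi : ∃ i : A →+ (Fin b → ℤ), Function.Injective i) (cl : Fin b → A)
    (hδ : ∀ a j, c (cl a) j = if a = j then 1 else 0) (σ : A →+ A)
    (P : Matrix (Fin b) (Fin b) ℤ) (hP : ∀ a j, c (σ (cl a)) j = P j a) :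
    ∃ e : A ≃+ (Fin b → ℤ), ∀ x, e (σ x) = Matrix.mulVec P (e x) := by
  obtain ⟨i, hi⟩ := hi
  have hc : ∀ t : Fin b → ℤ, c (∑ a, t a • cl a) = t := by
    intro t
    funext j
    rw [map_sum, Finset.sum_apply]
    simp [map_zsmul, hδ]
  have hsurj : Function.Surjective c := fun t => ⟨_, hc t⟩
  have hinj : Function.Injective c :=
    IsNoetherian.injective_of_surjective_of_injective i.toIntLinearMap c.toIntLinearMap hi hsurj
  refine ⟨AddEquiv.ofBijective c ⟨hinj, hsurj⟩, fun x => ?_⟩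
  show c (σ x) = Matrix.mulVec P (c x)
  obtain ⟨t, rfl⟩ : ∃ t : Fin b → ℤ, x = ∑ a, t a • cl a := ⟨c x, hinj (hc _).symm⟩
  rw [hc]
  funext j
  rw [map_sum, map_sum, Finset.sum_apply]
  simp only [map_zsmul, Pi.smul_apply, hP, Matrix.mulVec, dotProduct, smul_eq_mul]
  exact Finset.sum_congr rfl fun _ _ => mul_comm _ _

/-- generator -/
abbrev gn : Multiplicative (ZMod 4) := Multiplicative.ofAdd 1

/-- inverse matrix -/
def Ai : Matrix (Fin 4) (Fin 4) ℤ := !![-1, 0, 0, 0; 0, 1, 1, 0; 0, -1, 0, -1; 0, -1, 0, 0]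

/-- the representation -/
noncomputable abbrev CR (n : ℕ) : Rep.{0} ℤ (Multiplicative (ZMod 4)) :=
  Crystal.cohRep (Crystal.matAction 4 holM holM_pow) (1 : Representation ℤ (Multiplicative (ZMod 4)) ℤ) n

lemma act_inv (w : Lt) : (Crystal.matAction 4 holM holM_pow gn⁻¹ w).toAdd = Matrix.mulVec Ai w.toAdd := by
  have h : Ai = holM * (holM * holM) := by decide
  rw [h, ← Matrix.mulVec_mulVec, ← Matrix.mulVec_mulVec]
  rfl

/-- the induced matrix -/
def PM {n b : ℕ} (J : Fin b → Fin n → Fin 4) : Matrix (Fin b) (Fin b) ℤ :=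
  Matrix.of fun j a => Matrix.det (Matrix.of fun i k => Ai (J a k) (J j i))

theorem crd_main {n b : ℕ} (J : Fin b → Fin n → Fin 4)
    (hi : ∃ i : HLt n →+ (Fin b → ℤ), Function.Injective i)
    (hd : ∀ (I : Fin n → Fin 4) v, dd (pc I) v = 0)
    (hδ : ∀ a j, Matrix.det (Matrix.of fun i k => (Pi.single (J j i) 1 : Fin 4 → ℤ) (J a k)) = if a = j then 1 else 0) :
    ∃ e : CR n ≃+ (Fin b → ℤ), ∀ x, e ((CR n).ρ gn x) = Matrix.mulVec (PM J) (e x) := by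
  have hz : ∀ a, ∃ z : KL.cycles n, (KL.iCycles n).hom z = pc (J a) := fun a =>
    ex_cycle KL (pc (J a)) ((KL_d n _).trans (funext fun v => hd _ v))
  choose z hz using hz
  refine crd_abs (A := HLt n) (hdesc KL (evl J) (d_evl J)).hom.toAddMonoidHom hi
    (fun a => (KL.homologyπ n).hom (z a)) (fun a j => ?_) 
    ((CR n).ρ gn).toAddMonoidHom (PM J) (fun a j => ?_)
  · refine (congrFun (hdesc_π KL (evl J) (d_evl J) (z a)) j).trans ?_
    rw [hz]
    exact (alt_pc _ _).trans (hδ a j)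
  · refine (congrFun (hmap_π KL _ (evl J) (d_evl J) (z a)) j).trans ?_
    rw [hz]
    show alt (fun w => pc (J a) (fun i => Crystal.matAction 4 holM holM_pow gn⁻¹ (w i))) (bv (J j)) = _
    refine (alt_pc (J a) (fun i => Crystal.matAction 4 holM holM_pow gn⁻¹ (bv (J j) i))).trans ?_
    refine congrArg Matrix.det ?_
    ext i k
    refine (congrFun (act_inv _) _).trans ?_
    show Matrix.mulVec Ai (Pi.single (J j i) 1) (J a k) = Ai (J a k) (J j i)
    simp

/-- index sets -/
def J0 : Fin 1 → Fin 0 → Fin 4 := ![![]]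
/-- index sets -/
def J1 : Fin 4 → Fin 1 → Fin 4 := ![![0], ![1], ![2], ![3]]
/-- index sets -/
def J2 : Fin 6 → Fin 2 → Fin 4 := ![![0,1], ![0,2], ![0,3], ![1,2], ![1,3], ![2,3]]
/-- index sets -/
def J3 : Fin 4 → Fin 3 → Fin 4 := ![![0,1,2], ![0,1,3], ![0,2,3], ![1,2,3]]
/-- index sets -/
def J4 : Fin 1 → Fin 4 → Fin 4 := ![![0,1,2,3]]

lemma c0 : ∃ e : CR 0 ≃+ (Fin 1 → ℤ), ∀ x, e ((CR 0).ρ gn x) = Matrix.mulVec (PM J0) (e x) :=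
  crd_main J0 inj0 dd_pc0 (by decide)
lemma c1 : ∃ e : CR 1 ≃+ (Fin 4 → ℤ), ∀ x, e ((CR 1).ρ gn x) = Matrix.mulVec (PM J1) (e x) :=
  crd_main J1 inj1 dd_pc1 (by simp only [Matrix.det_fin_one]; decide)
lemma c2 : ∃ e : CR 2 ≃+ (Fin 6 → ℤ), ∀ x, e ((CR 2).ρ gn x) = Matrix.mulVec (PM J2) (e x) :=
  crd_main J2 inj2 dd_pc2 (by simp only [Matrix.det_fin_two]; decide)
lemma c3 : ∃ e : CR 3 ≃+ (Fin 4 → ℤ), ∀ x, e ((CR 3).ρ gn x) = Matrix.mulVec (PM J3) (e x) :=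
  crd_main J3 inj3 dd_pc3 (by simp only [Matrix.det_fin_three]; decide)
lemma c4 : ∃ e : CR 4 ≃+ (Fin 1 → ℤ), ∀ x, e ((CR 4).ρ gn x) = Matrix.mulVec (PM J4) (e x) :=
  crd_main J4 inj4 dd_pc4 (by simp [Matrix.det_succ_row_zero, Fin.sum_univ_succ]; decide)

end Cry


namespace Cry
open CategoryTheory

lemma gn_gen : ∀ x : Multiplicative (ZMod 4), x ∈ Subgroup.zpowers gn := by
  intro x
  exact ⟨(x.toAdd.val : ℤ), by revert x; decide⟩

/-- norm -/
def nrm {b : ℕ} (p : (Fin b → ℤ) → (Fin b → ℤ)) (y : Fin b → ℤ) : Fin b → ℤ :=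
  y + p y + p (p y) + p (p (p y))

/-- norm of a representation -/
noncomputable def nmA {k : Type} [CommRing k] (A : Rep.{0} k (Multiplicative (ZMod 4))) (x : A) : A :=
  A.ρ.norm x

lemma norm_sum {k : Type} [CommRing k] (A : Rep.{0} k (Multiplicative (ZMod 4))) (x : A) :
    nmA A x = x + A.ρ gn x + A.ρ gn (A.ρ gn x) + A.ρ gn (A.ρ gn (A.ρ gn x)) := by
  have h2 : A.ρ gn (A.ρ gn x) = A.ρ (Multiplicative.ofAdd 2) x := by
    rw [← Module.End.mul_apply, ← map_mul]; rfl
  have h3 : A.ρ gn (A.ρ (Multiplicative.ofAdd 2) x) = A.ρ (Multiplicative.ofAdd 3) x := by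
    rw [← Module.End.mul_apply, ← map_mul]; rfl
  have h1 : A.ρ (Multiplicative.ofAdd 0) x = x := by
    rw [ofAdd_zero, map_one]; rfl
  rw [h2, h3]
  simp only [nmA, Representation.norm, LinearMap.sum_apply]
  refine (Fin.sum_univ_four (fun g : Fin 4 => A.ρ (Multiplicative.ofAdd (g : ZMod 4)) x)).trans ?_
  refine congrArg (fun t => t + A.ρ gn x + A.ρ (Multiplicative.ofAdd 2) x + A.ρ (Multiplicative.ofAdd 3) x) h1

lemma cyc_odd (A : Rep.{0} ℤ (Multiplicative (ZMod 4))) (i : ℕ) (hi : Odd i) {b : ℕ}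
    (e : A ≃+ (Fin b → ℤ)) (p : (Fin b → ℤ) → (Fin b → ℤ)) (he : ∀ x, e (A.ρ gn x) = p (e x))
    {T : Type} [AddCommGroup T] (Φ : (Fin b → ℤ) →+ T)
    (h0 : ∀ x, Φ (p x - x) = 0)
    (hs : ∀ t, ∃ y, nrm p y = 0 ∧ Φ y = t)
    (hk : ∀ y, nrm p y = 0 → Φ y = 0 → ∃ x, p x - x = y) : Nonempty (groupCohomology A i ≃+ T) := by
  have hN : ∀ x, e (nmA A x) = nrm p (e x) := by
    intro x; rw [norm_sum]; simp only [map_add, he]; rfl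
  obtain ⟨e', -⟩ := cert (Rep.FiniteCyclicGroup.subCompNormHom A gn) (Φ.comp e.toAddMonoidHom)
    (fun x => by
      show Φ (e (A.ρ gn x - x)) = 0
      rw [map_sub, he, h0])
    (fun t => by
      obtain ⟨y, h1, h2⟩ := hs t
      refine ⟨e.symm y, ?_, ?_⟩
      · show nmA A (e.symm y) = 0
        apply e.injective
        rw [hN, map_zero, e.apply_symm_apply, h1]
      · show Φ (e (e.symm y)) = t
        rw [e.apply_symm_apply, h2])
    (fun y h1 h2 => by
      obtain ⟨x, hx⟩ := hk (e y) (by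
        rw [← hN]
        exact (congrArg e (show nmA A y = 0 from h1)).trans (map_zero e)) h2
      refine ⟨e.symm x, ?_⟩
      show A.ρ gn (e.symm x) - e.symm x = y
      apply e.injective
      rw [map_sub, he, e.apply_symm_apply, hx])
  exact ⟨((Rep.FiniteCyclicGroup.groupCohomologyIsoOdd A gn gn_gen i hi).toLinearEquiv.toAddEquiv).trans e'⟩

lemma cyc_even (A : Rep.{0} ℤ (Multiplicative (ZMod 4))) (i : ℕ) [NeZero i] (hi : Even i) {b : ℕ}
    (e : A ≃+ (Fin b → ℤ)) (p : (Fin b → ℤ) → (Fin b → ℤ)) (he : ∀ x, e (A.ρ gn x) = p (e x))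
    {T : Type} [AddCommGroup T] (Φ : (Fin b → ℤ) →+ T)
    (h0 : ∀ x, Φ (nrm p x) = 0)
    (hs : ∀ t, ∃ y, p y - y = 0 ∧ Φ y = t)
    (hk : ∀ y, p y - y = 0 → Φ y = 0 → ∃ x, nrm p x = y) : Nonempty (groupCohomology A i ≃+ T) := by
  have hN : ∀ x, e (nmA A x) = nrm p (e x) := by
    intro x; rw [norm_sum]; simp only [map_add, he]; rfl
  obtain ⟨e', -⟩ := cert (Rep.FiniteCyclicGroup.normHomCompSub A gn) (Φ.comp e.toAddMonoidHom)
    (fun x => by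
      show Φ (e (nmA A x)) = 0
      rw [hN, h0])
    (fun t => by
      obtain ⟨y, h1, h2⟩ := hs t
      refine ⟨e.symm y, ?_, ?_⟩
      · show A.ρ gn (e.symm y) - e.symm y = 0
        apply e.injective
        rw [map_sub, he, map_zero, e.apply_symm_apply, h1]
      · show Φ (e (e.symm y)) = t
        rw [e.apply_symm_apply, h2])
    (fun y h1 h2 => by
      obtain ⟨x, hx⟩ := hk (e y) (by
        rw [← he, ← map_sub]
        exact (congrArg e (show A.ρ gn y - y = 0 from h1)).trans (map_zero e)) h2
      refine ⟨e.symm x, ?_⟩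
      show nmA A (e.symm x) = y
      apply e.injective
      rw [hN, e.apply_symm_apply, hx])
  exact ⟨((Rep.FiniteCyclicGroup.groupCohomologyIsoEven A gn gn_gen i hi).toLinearEquiv.toAddEquiv).trans e'⟩

/-- coordinate formulas -/
def p0 (y : Fin 1 → ℤ) : Fin 1 → ℤ := ![y 0]
/-- coordinate formulas -/
def p1 (y : Fin 4 → ℤ) : Fin 4 → ℤ := ![-y 0, y 1 - y 2 - y 3, y 1, -y 2]
/-- coordinate formulas -/
def p2 (y : Fin 6 → ℤ) : Fin 6 → ℤ := ![-y 0 + y 1 + y 2, -y 0, y 1, y 3 + y 4, -y 3 - y 5, -y 3]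
/-- coordinate formulas -/
def p3 (y : Fin 4 → ℤ) : Fin 4 → ℤ := ![-y 0 - y 1, y 0 + y 2, y 0, y 3]
/-- coordinate formulas -/
def p4 (y : Fin 1 → ℤ) : Fin 1 → ℤ := ![-y 0]

lemma PM0 : PM J0 = !![1] := by decide
lemma PM1 : PM J1 = !![-1, 0, 0, 0; 0, 1, -1, -1; 0, 1, 0, 0; 0, 0, -1, 0] := by
  simp only [PM, Matrix.det_fin_one]; decide
lemma PM2 : PM J2 = !![-1, 1, 1, 0, 0, 0; -1, 0, 0, 0, 0, 0; 0, 1, 0, 0, 0, 0; 0, 0, 0, 1, 1, 0; 0, 0, 0, -1, 0, -1; 0, 0, 0, -1, 0, 0] := by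
  simp only [PM, Matrix.det_fin_two]; decide
lemma PM3 : PM J3 = !![-1, -1, 0, 0; 1, 0, 1, 0; 1, 0, 0, 0; 0, 0, 0, 1] := by
  simp only [PM, Matrix.det_fin_three]; decide
lemma PM4 : PM J4 = !![-1] := by
  ext i j; fin_cases i; fin_cases j
  simp [PM, J4, Ai, Matrix.det_succ_row_zero, Fin.sum_univ_succ]

lemma pm0 (y) : Matrix.mulVec (PM J0) y = p0 y := by
  rw [PM0]; funext i; fin_cases i
  simp [p0, Matrix.mulVec, dotProduct]
lemma pm1 (y) : Matrix.mulVec (PM J1) y = p1 y := by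
  rw [PM1]; funext i; fin_cases i <;> simp [p1, Matrix.mulVec, dotProduct, Fin.sum_univ_succ] <;> ring
lemma pm2 (y) : Matrix.mulVec (PM J2) y = p2 y := by
  rw [PM2]; funext i; fin_cases i <;> simp [p2, Matrix.mulVec, dotProduct, Fin.sum_univ_succ] <;> ring
lemma pm3 (y) : Matrix.mulVec (PM J3) y = p3 y := by
  rw [PM3]; funext i; fin_cases i <;> simp [p3, Matrix.mulVec, dotProduct, Fin.sum_univ_succ] <;> ring
lemma pm4 (y) : Matrix.mulVec (PM J4) y = p4 y := by
  rw [PM4]; funext i; fin_cases i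
  simp [p4, Matrix.mulVec, dotProduct]

end Cry


namespace Cry
open CategoryTheory

/-- linear functional mod `m` -/
def fm {b : ℕ} (m : ℕ) (a : Fin b → ℤ) : (Fin b → ℤ) →+ ZMod m :=
  AddMonoidHom.mk' (fun y => ((∑ i, a i * y i : ℤ) : ZMod m)) (fun x y => by
    simp [mul_add, Finset.sum_add_distrib])

lemma fm_zero {b m : ℕ} (a y : Fin b → ℤ) : fm m a y = 0 ↔ (m : ℤ) ∣ ∑ i, a i * y i :=
  ZMod.intCast_zmod_eq_zero_iff_dvd _ _

lemma nrm_apply {b : ℕ} (p : (Fin b → ℤ) → (Fin b → ℤ)) (y : Fin b → ℤ) (i) :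
    nrm p y i = y i + p y i + p (p y) i + p (p (p y)) i := rfl

lemma n1 (y : Fin 4 → ℤ) : nrm p1 y 1 = 2 * y 1 - 2 * y 3 := by
  have a1 : ∀ y, p1 y 1 = y 1 - y 2 - y 3 := fun _ => rfl
  have a2 : ∀ y, p1 y 2 = y 1 := fun _ => rfl
  have a3 : ∀ y, p1 y 3 = - y 2 := fun _ => rfl
  simp only [nrm_apply, a1, a2, a3]; ring
lemma n3 (y : Fin 4 → ℤ) : nrm p3 y 3 = 4 * y 3 := by
  have a3 : ∀ y, p3 y 3 = y 3 := fun _ => rfl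
  simp only [nrm_apply, a3]; ring
lemma n2 (y : Fin 6 → ℤ) : nrm p2 y 3 = 2 * y 3 + 2 * y 4 - 2 * y 5 := by
  have a3 : ∀ y, p2 y 3 = y 3 + y 4 := fun _ => rfl
  have a4 : ∀ y, p2 y 4 = - y 3 - y 5 := fun _ => rfl
  have a5 : ∀ y, p2 y 5 = - y 3 := fun _ => rfl
  simp only [nrm_apply, a3, a4, a5]; ring
lemma n0 (y : Fin 1 → ℤ) : nrm p0 y 0 = 4 * y 0 := by
  have a3 : ∀ y, p0 y 0 = y 0 := fun _ => rfl
  simp only [nrm_apply, a3]; ring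
lemma m2 (y : Fin 6 → ℤ) : ∑ i, (![0, 0, 0, 1, 0, 0] : Fin 6 → ℤ) i * y i = y 3 := by
  simp [Fin.sum_univ_succ]
lemma m0 (y : Fin 1 → ℤ) : ∑ i, (![1] : Fin 1 → ℤ) i * y i = y 0 := by
  simp

lemma h0_sub {k G : Type} [CommRing k] [Group G] (A : Rep.{0} k G)
    (h : ∀ x : A, (∀ g, A.ρ g x = x) → x = 0) : Subsingleton (groupCohomology A 0) := by
  have : Subsingleton A.ρ.invariants :=
    ⟨fun x y => Subtype.ext ((h x.1 x.2).trans (h y.1 y.2).symm)⟩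
  exact (groupCohomology.H0Iso A).toLinearEquiv.toEquiv.subsingleton

lemma hc31 : Nonempty (groupCohomology (CR 1) 3 ≃+ ZMod 2) := by
  obtain ⟨e, he⟩ := c1
  refine cyc_odd (CR 1) 3 (by decide) e p1 (fun x => (he x).trans (pm1 _)) (fm 2 ![1, 0, 0, 0]) ?_ ?_ ?_
  · intro x
    rw [fm_zero]
    simp [Fin.sum_univ_succ, p1]
    omega
  · intro t
    obtain ⟨n, rfl⟩ := ZMod.intCast_surjective t
    refine ⟨![n, 0, 0, 0], ?_, ?_⟩
    · funext i; fin_cases i <;> simp [nrm, p1]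
    · simp [fm, Fin.sum_univ_succ]
  · intro y h1 h2
    rw [fm_zero] at h2
    have a1 := (n1 y).symm.trans (congrFun h1 1)
    simp [Fin.sum_univ_succ] at h2
    simp only [Pi.zero_apply] at a1
    obtain ⟨k, hk⟩ := h2
    refine ⟨![-k, y 2, 0, -y 1], ?_⟩
    funext i; fin_cases i <;> simp [p1] <;> omega

lemma hc13 : Nonempty (groupCohomology (CR 3) 1 ≃+ ZMod 4) := by
  obtain ⟨e, he⟩ := c3
  refine cyc_odd (CR 3) 1 (by decide) e p3 (fun x => (he x).trans (pm3 _)) (fm 4 ![-1, 1, 1, 0]) ?_ ?_ ?_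
  · intro x
    rw [fm_zero]
    simp [Fin.sum_univ_succ, p3]
    omega
  · intro t
    obtain ⟨n, rfl⟩ := ZMod.intCast_surjective t
    refine ⟨![0, n, 0, 0], ?_, ?_⟩
    · funext i; fin_cases i <;> simp [nrm, p3]
    · simp [fm, Fin.sum_univ_succ]
  · intro y h1 h2
    rw [fm_zero] at h2
    have a1 := (n3 y).symm.trans (congrFun h1 3)
    simp [Fin.sum_univ_succ] at h2
    simp only [Pi.zero_apply] at a1
    obtain ⟨k, hk⟩ := h2
    refine ⟨![k, -y 0 - 2 * k, k - y 2, 0], ?_⟩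
    funext i; fin_cases i <;> simp [p3] <;> omega

lemma hc22 : Nonempty (groupCohomology (CR 2) 2 ≃+ ZMod 2) := by
  obtain ⟨e, he⟩ := c2
  refine cyc_even (CR 2) 2 (by decide) e p2 (fun x => (he x).trans (pm2 _)) (fm 2 ![0, 0, 0, 1, 0, 0]) ?_ ?_ ?_
  · intro x
    rw [fm_zero]
    rw [m2, n2]
    omega
  · intro t
    obtain ⟨n, rfl⟩ := ZMod.intCast_surjective t
    refine ⟨![0, 0, 0, n, 0, -n], ?_, ?_⟩
    · funext i; fin_cases i <;> simp [p2]
    · simp [fm, Fin.sum_univ_succ]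
  · intro y h1 h2
    rw [fm_zero] at h2
    have a0 := congrFun h1 0
    have a1 := congrFun h1 1
    have a2 := congrFun h1 2
    have a3 := congrFun h1 3
    have a4 := congrFun h1 4
    have a5 := congrFun h1 5
    simp [Fin.sum_univ_succ] at h2
    simp [p2] at a0 a1 a2 a3 a4 a5
    obtain ⟨k, hk⟩ := h2
    refine ⟨![0, 0, 0, k, 0, 0], ?_⟩
    funext i; fin_cases i <;> simp [nrm, p2] <;> omega

lemma hc40 : Nonempty (groupCohomology (CR 0) 4 ≃+ ZMod 4) := by
  obtain ⟨e, he⟩ := c0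
  refine cyc_even (CR 0) 4 (by decide) e p0 (fun x => (he x).trans (pm0 _)) (fm 4 ![1]) ?_ ?_ ?_
  · intro x
    rw [fm_zero]
    rw [m0, n0]
    omega
  · intro t
    obtain ⟨n, rfl⟩ := ZMod.intCast_surjective t
    refine ⟨![n], ?_, ?_⟩
    · funext i; fin_cases i; simp [p0]
    · simp [fm]
  · intro y h1 h2
    rw [fm_zero] at h2
    simp at h2
    obtain ⟨k, hk⟩ := h2
    refine ⟨![k], ?_⟩
    funext i; fin_cases i; simp [nrm, p0]; omega

lemma hc04 : Subsingleton (groupCohomology (CR 4) 0) := by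
  obtain ⟨e, he⟩ := c4
  refine h0_sub (CR 4) (fun x hx => ?_)
  have h1 := (he x).trans (pm4 _)
  have h2 : e ((CR 4).ρ gn x) = e x := congrArg e (hx gn)
  have h3 := congrFun (h2.symm.trans h1) 0
  simp [p4] at h3
  apply e.injective
  refine Eq.trans ?_ (map_zero e).symm
  funext i; fin_cases i; simp; omega

lemma asm {A B C D E : Type} [AddCommGroup A] [AddCommGroup B] [AddCommGroup C] [AddCommGroup D] [AddCommGroup E]
    (hA : Subsingleton A) (hB : Nonempty (B ≃+ ZMod 4)) (hC : Nonempty (C ≃+ ZMod 2))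
    (hD : Nonempty (D ≃+ ZMod 2)) (hE : Nonempty (E ≃+ ZMod 4)) :
    Nonempty ((A × B × C × D × E) ≃+ ((Fin 2 → ZMod 4) × (Fin 2 → ZMod 2))) := by
  obtain ⟨b⟩ := hB
  obtain ⟨c⟩ := hC
  obtain ⟨d⟩ := hD
  obtain ⟨e⟩ := hE
  refine ⟨AddEquiv.mk' ⟨fun x => (![b x.2.1, e x.2.2.2.2], ![c x.2.2.1, d x.2.2.2.1]),
    fun y => (0, b.symm (y.1 0), c.symm (y.2 0), d.symm (y.2 1), e.symm (y.1 1)), ?_, ?_⟩ ?_⟩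
  · intro x
    refine Prod.ext (Subsingleton.elim _ _) ?_
    simp
  · intro y
    refine Prod.ext ?_ ?_ <;> funext i <;> fin_cases i <;> simp
  · intro x y
    refine Prod.ext ?_ ?_ <;> funext i <;> fin_cases i <;> simp

end Cry

theorem first_counterexample_in_degree_four :
    Nonempty (H 4 ≃+ (ZMod 4 × (Fin 3 → ZMod 2))) ∧
    Nonempty ((Hc 0 4 × Hc 1 3 × Hc 2 2 × Hc 3 1 × Hc 4 0)
      ≃+ ((Fin 2 → ZMod 4) × (Fin 2 → ZMod 2))) ∧
    ¬ Nonempty (H 4 ≃+ (Hc 0 4 × Hc 1 3 × Hc 2 2 × Hc 3 1 × Hc 4 0)) := by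
  have h2 : Nonempty ((Hc 0 4 × Hc 1 3 × Hc 2 2 × Hc 3 1 × Hc 4 0)
      ≃+ ((Fin 2 → ZMod 4) × (Fin 2 → ZMod 2))) :=
    Cry.asm Cry.hc04 Cry.hc13 Cry.hc22 Cry.hc31 Cry.hc40
  refine ⟨Cry.H4, h2, ?_⟩
  rintro ⟨f⟩
  obtain ⟨a⟩ := Cry.H4
  obtain ⟨b⟩ := h2
  have := Nat.card_congr ((a.symm.trans (f.trans b)).toEquiv)
  simp [Nat.card_eq_fintype_card, ZMod.card] at this
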